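/- Let μ be a dominant integral weight of 𝔤. Then V_μ is symplectic if and only if dim((adj(𝔤) ⊗ S²V_μ)^𝔤) > dim((adj(𝔤) ⊗ Λ²V_μ)^𝔤). -/

import Mathlib

open scoped TensorProduct Classical
open LieAlgebra LieModule Module

namespace AdjPaper

variable {L : Type} [LieRing L] [LieAlgebra ℂ L]

/-- `χ` is a root of `L` relative to the Cartan subalgebra `H`: a nonzero linear functional
on `H` with nontrivial root space. -/
def IsRoot (H : LieSubalgebra ℂ L) [H.IsCartanSubalgebra] (χ : Module.Dual ℂ H) : Prop :=
  χ ≠ 0 ∧ rootSpace H ⇑χ ≠ ⊥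

/-- `t` is the coroot `χ∨` of the root `χ`: it lies in `⁅𝔤_χ, 𝔤_{-χ}⁆` and satisfies
`χ t = 2`. -/
def IsCoroot (H : LieSubalgebra ℂ L) [H.IsCartanSubalgebra] (χ : Module.Dual ℂ H) (t : H) : Prop :=
  χ t = 2 ∧ ∃ e ∈ rootSpace H ⇑χ, ∃ f ∈ rootSpace H ⇑(-χ), (t : L) = ⁅e, f⁆

/-- `α` enumerates the simple roots of a base of the root system of `(L, H)`. -/
structure IsBase (H : LieSubalgebra ℂ L) [H.IsCartanSubalgebra] {r : ℕ} (α : Fin r → Module.Dual ℂ H) : Prop where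
  isRoot : ∀ j, IsRoot H (α j)
  indep : LinearIndependent ℂ α
  pos_neg : ∀ χ : Module.Dual ℂ H, IsRoot H χ →
    (∃ c : Fin r → ℕ, χ = ∑ j, (c j : ℂ) • α j) ∨ (∃ c : Fin r → ℕ, χ = -∑ j, (c j : ℂ) • α j)

/-- `χ` is a positive root relative to the base `α`. -/
def IsPosRoot (H : LieSubalgebra ℂ L) [H.IsCartanSubalgebra] {r : ℕ} (α : Fin r → Module.Dual ℂ H)
    (χ : Module.Dual ℂ H) : Prop :=
  IsRoot H χ ∧ ∃ c : Fin r → ℕ, χ = ∑ j, (c j : ℂ) • α j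

/-- A weight `μ` is dominant integral: all its pairings `⟨μ, α_j∨⟩ = μ (hc j)` with the
simple coroots `hc j` are non-negative integers. -/
def IsDomInt {H : LieSubalgebra ℂ L} {r : ℕ} (hc : Fin r → H) (μ : Module.Dual ℂ H) : Prop :=
  ∀ j, ∃ n : ℕ, μ (hc j) = (n : ℂ)

/-- `V` is an irreducible `L`-module with highest weight `μ` (relative to the Cartan
subalgebra `H` and the base `α`): it is irreducible and possesses a nonzero vector of
`H`-weight `μ` annihilated by all positive root spaces. -/
def IsHWIrrep (H : LieSubalgebra ℂ L) [H.IsCartanSubalgebra] {r : ℕ} (α : Fin r → Module.Dual ℂ H)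
    (μ : Module.Dual ℂ H) (V : Type) [AddCommGroup V] [Module ℂ V]
    [LieRingModule L V] [LieModule ℂ L V] : Prop :=
  IsSimpleOrder (LieSubmodule ℂ L V) ∧
  ∃ v : V, v ≠ 0 ∧ (∀ x : H, ⁅(x : L), v⁆ = μ x • v) ∧
    ∀ χ : Module.Dual ℂ H, IsPosRoot H α χ → ∀ e ∈ rootSpace H ⇑χ, ⁅e, v⁆ = 0

/-- `W` is isomorphic to the dual representation `V*`: there is a nondegenerate
`𝔤`-invariant pairing `W × V → ℂ`. -/
def IsDualPair (W V : Type) [AddCommGroup W] [Module ℂ W] [LieRingModule L W]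
    [AddCommGroup V] [Module ℂ V] [LieRingModule L V] : Prop :=
  ∃ B : W →ₗ[ℂ] V →ₗ[ℂ] ℂ,
    (∀ w, (∀ v, B w v = 0) → w = 0) ∧ (∀ v, (∀ w, B w v = 0) → v = 0) ∧
    ∀ (x : L) (w : W) (v : V), B ⁅x, w⁆ v + B w ⁅x, v⁆ = 0

/-- `V` is an orthogonal representation: it has a nondegenerate invariant symmetric
bilinear form. -/
def IsOrthogonalRep (V : Type) [AddCommGroup V] [Module ℂ V] [LieRingModule L V] : Prop :=
  ∃ B : V →ₗ[ℂ] V →ₗ[ℂ] ℂ,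
    (∀ v w, B v w = B w v) ∧ (∀ v, (∀ w, B v w = 0) → v = 0) ∧
    ∀ (x : L) (v w : V), B ⁅x, v⁆ w + B v ⁅x, w⁆ = 0

/-- `V` is a symplectic representation: it has a nondegenerate invariant alternating
bilinear form. -/
def IsSymplecticRep (V : Type) [AddCommGroup V] [Module ℂ V] [LieRingModule L V] : Prop :=
  ∃ B : V →ₗ[ℂ] V →ₗ[ℂ] ℂ,
    (∀ v, B v v = 0) ∧ (∀ v, (∀ w, B v w = 0) → v = 0) ∧
    ∀ (x : L) (v w : V), B ⁅x, v⁆ w + B v ⁅x, w⁆ = 0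

variable (L) in
/-- The operator on `adj(𝔤) ⊗ V ⊗ V` exchanging the two copies of `V`. -/
noncomputable def swapMap (V : Type) [AddCommGroup V] [Module ℂ V] :
    (L ⊗[ℂ] (V ⊗[ℂ] V)) →ₗ[ℂ] (L ⊗[ℂ] (V ⊗[ℂ] V)) :=
  LinearMap.lTensor L (TensorProduct.comm ℂ V V).toLinearMap

variable (L) in
/-- The `𝔤`-invariant subspace of `adj(𝔤) ⊗ S²V`, realised inside `adj(𝔤) ⊗ V ⊗ V` as the
invariant vectors fixed by the swap of the two copies of `V`. -/
noncomputable def symSquareInvariants (V : Type) [AddCommGroup V] [Module ℂ V]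
    [LieRingModule L V] [LieModule ℂ L V] : Submodule ℂ (L ⊗[ℂ] (V ⊗[ℂ] V)) :=
  (maxTrivSubmodule ℂ L (L ⊗[ℂ] (V ⊗[ℂ] V)) : Submodule ℂ (L ⊗[ℂ] (V ⊗[ℂ] V))) ⊓
    LinearMap.ker (swapMap L V - LinearMap.id)

variable (L) in
/-- The `𝔤`-invariant subspace of `adj(𝔤) ⊗ Λ²V`, realised inside `adj(𝔤) ⊗ V ⊗ V` as the
invariant vectors anti-fixed by the swap of the two copies of `V`. -/
noncomputable def altSquareInvariants (V : Type) [AddCommGroup V] [Module ℂ V]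
    [LieRingModule L V] [LieModule ℂ L V] : Submodule ℂ (L ⊗[ℂ] (V ⊗[ℂ] V)) :=
  (maxTrivSubmodule ℂ L (L ⊗[ℂ] (V ⊗[ℂ] V)) : Submodule ℂ (L ⊗[ℂ] (V ⊗[ℂ] V))) ⊓
    LinearMap.ker (swapMap L V + LinearMap.id)



/-! ### Part 1: root-theoretic facts -/

/-- Working data: a base, its simple coroots and Chevalley generators. -/
structure Setup (H : LieSubalgebra ℂ L) [H.IsCartanSubalgebra] {r : ℕ}
    (α : Fin r → Module.Dual ℂ H) (hc : Fin r → H) (e f : Fin r → L) : Prop where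
  base : IsBase H α
  he : ∀ j, e j ∈ rootSpace H ⇑(α j)
  hf : ∀ j, f j ∈ rootSpace H ⇑(-(α j))
  hh : ∀ j, (hc j : L) = ⁅e j, f j⁆
  h2 : ∀ j, α j (hc j) = 2

section Part1

variable [FiniteDimensional ℂ L] [LieAlgebra.IsSemisimple ℂ L]
  {H : LieSubalgebra ℂ L} [H.IsCartanSubalgebra]
  {r : ℕ} {α : Fin r → Module.Dual ℂ H} {hc : Fin r → H} {e f : Fin r → L}

theorem mem_rootSpace_iff {χ : Module.Dual ℂ H} {x : L} :
    x ∈ rootSpace H ⇑χ ↔ ∀ h : H, ⁅(h : L), x⁆ = χ h • x := by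
  constructor
  · intro hx h
    exact IsKilling.lie_eq_smul_of_mem_rootSpace hx h
  · intro hx
    exact weightSpace_le_genWeightSpace L _ ((mem_weightSpace _ _).2 hx)

theorem cartan_comm (h h' : H) : ⁅(h : L), (h' : L)⁆ = 0 := by
  have : ⁅h, h'⁆ = 0 := trivial_lie_zero H H h h'
  have := congrArg (Subtype.val) this
  simpa using this

theorem mem_cartan_iff {x : L} : x ∈ H ↔ ∀ h : H, ⁅(h : L), x⁆ = 0 := by
  constructor
  · intro hx h
    exact cartan_comm h ⟨x, hx⟩
  · intro hx
    have h1 : x ∈ rootSpace H ⇑(0 : Module.Dual ℂ H) := by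
      rw [mem_rootSpace_iff]; intro h; simp [hx h]
    have : x ∈ rootSpace H (0 : H → ℂ) := h1
    rw [rootSpace_zero_eq] at this
    exact this

theorem isRoot_iff {χ : Module.Dual ℂ H} :
    IsRoot H χ ↔ ∃ β ∈ (LieSubalgebra.root : Finset (Weight ℂ H L)), Weight.toLinear ℂ H L β = χ := by
  constructor
  · rintro ⟨h0, hne⟩
    refine ⟨⟨⇑χ, hne⟩, ?_, ?_⟩
    · simp only [LieSubalgebra.root, Finset.mem_filter, Finset.mem_univ, true_and]
      intro h
      apply h0
      ext y
      have := congrFun h y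
      simpa using this
    · ext y; rfl
  · rintro ⟨β, hβ, rfl⟩
    simp only [LieSubalgebra.root, Finset.mem_filter, Finset.mem_univ, true_and] at hβ
    refine ⟨?_, β.2⟩
    intro h
    apply hβ
    exact funext fun y => LinearMap.congr_fun h y

theorem rootSpace_eq_bot {χ : Module.Dual ℂ H} (h0 : χ ≠ 0) (h : ¬ IsRoot H χ) {x : L}
    (hx : x ∈ rootSpace H ⇑χ) : x = 0 := by
  by_contra hne
  apply h
  refine ⟨h0, ?_⟩
  intro hb
  rw [hb] at hx
  exact hne (by simpa using hx)

theorem lie_mem_rootSpace {χ ψ : Module.Dual ℂ H} {x y : L} (hx : x ∈ rootSpace H ⇑χ)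
    (hy : y ∈ rootSpace H ⇑ψ) : ⁅x, y⁆ ∈ rootSpace H ⇑(χ + ψ) := by
  have := lie_mem_genWeightSpace_of_mem_genWeightSpace hx hy
  exact this

theorem lie_mem_cartan {χ : Module.Dual ℂ H} {x y : L} (hx : x ∈ rootSpace H ⇑χ)
    (hy : y ∈ rootSpace H ⇑(-χ)) : ⁅x, y⁆ ∈ H := by
  rw [mem_cartan_iff]
  have := lie_mem_rootSpace hx hy
  rw [mem_rootSpace_iff] at this
  intro h
  simpa using this h

theorem span_induction_L {S : Submodule ℂ L} (hH : ∀ h : H, (h : L) ∈ S)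
    (hR : ∀ χ, IsRoot H χ → ∀ x ∈ rootSpace H ⇑χ, x ∈ S) (x : L) : x ∈ S := by
  have h1 := LieModule.iSup_genWeightSpace_eq_top' ℂ H L
  have h2 : (⨆ χ : Weight ℂ H L, (genWeightSpace L ⇑χ).toSubmodule) = ⊤ := by
    rw [← LieSubmodule.iSup_toSubmodule, h1]; rfl
  have h3 : (⨆ χ : Weight ℂ H L, (genWeightSpace L ⇑χ).toSubmodule) ≤ S := by
    apply iSup_le
    intro χ y hy
    by_cases hχ : χ.IsZero
    · have hz : (⇑χ : H → ℂ) = 0 := hχ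
      have hy' : y ∈ genWeightSpace L (0 : H → ℂ) := by rw [← hz]; exact hy
      have : y ∈ rootSpace H (0 : H → ℂ) := hy'
      rw [rootSpace_zero_eq] at this
      exact hH ⟨y, this⟩
    · refine hR (Weight.toLinear ℂ H L χ) (isRoot_iff.2 ⟨χ, by simpa using hχ, rfl⟩) y hy
  exact h3 (by rw [h2]; trivial)

theorem isRoot_neg {χ : Module.Dual ℂ H} (h : IsRoot H χ) : IsRoot H (-χ) := by
  obtain ⟨β, hβ, rfl⟩ := isRoot_iff.1 h
  refine isRoot_iff.2 ⟨-β, by simpa using hβ, ?_⟩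
  ext y; simp

theorem isRoot_neg_iff {χ : Module.Dual ℂ H} : IsRoot H (-χ) ↔ IsRoot H χ :=
  ⟨fun h => by simpa using isRoot_neg h, isRoot_neg⟩

theorem IsPosRoot.isRoot {χ : Module.Dual ℂ H} (h : IsPosRoot H α χ) : IsRoot H χ := h.1

theorem pos_or_neg (hb : IsBase H α) {χ : Module.Dual ℂ H} (h : IsRoot H χ) :
    IsPosRoot H α χ ∨ IsPosRoot H α (-χ) := by
  rcases hb.pos_neg χ h with hc | ⟨c, hc⟩
  · exact Or.inl ⟨h, hc⟩
  · exact Or.inr ⟨isRoot_neg h, c, by rw [hc, neg_neg]⟩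

theorem coeff_unique (hb : IsBase H α) {c d : Fin r → ℂ}
    (h : ∑ j, c j • α j = ∑ j, d j • α j) : c = d := by
  have := Fintype.linearIndependent_iff.1 hb.indep (fun j => c j - d j) (by
    simp only [sub_smul, Finset.sum_sub_distrib, h, sub_self])
  funext j
  exact sub_eq_zero.1 (this j)

theorem not_pos_neg (hb : IsBase H α) {χ : Module.Dual ℂ H} (h : IsPosRoot H α χ) :
    ¬ IsPosRoot H α (-χ) := by
  rintro ⟨-, d, hd⟩
  obtain ⟨⟨h0, -⟩, c, hc⟩ := h
  apply h0
  have h1 : ∑ j, ((c j : ℂ) + d j) • α j = ∑ j, (0 : ℂ) • α j := by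
    simp only [add_smul, Finset.sum_add_distrib, ← hc, ← hd]
    simp
  have h2 := coeff_unique hb h1
  rw [hc]
  apply Finset.sum_eq_zero
  intro j _
  have h3 := congrFun h2 j
  have : c j = 0 := by
    have h3 : ((c j + d j : ℕ) : ℂ) = 0 := by push_cast; exact h3
    have := Nat.cast_eq_zero.1 h3
    omega
  simp [this]

theorem isPosRoot_simple (hb : IsBase H α) (j : Fin r) : IsPosRoot H α (α j) :=
  ⟨hb.isRoot j, Pi.single j 1, by
    rw [Finset.sum_eq_single j] <;> simp +contextual [Pi.single_apply]⟩

/-- positive root, coefficient description: multiple of a simple root is that simple root -/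
theorem eq_simple_of_smul (hb : IsBase H α) {χ : Module.Dual ℂ H} (h : IsPosRoot H α χ) (j : Fin r)
    (k : ℂ) (hk : χ = k • α j) : χ = α j := by
  obtain ⟨β, hβ, hβ'⟩ := isRoot_iff.1 h.1
  obtain ⟨γ, hγ, hγ'⟩ := isRoot_iff.1 (hb.isRoot j)
  have h1 : (⇑β : H → ℂ) = k • ⇑γ := by
    funext y
    have := LinearMap.congr_fun (hβ'.trans hk) y
    rw [← hγ'] at this
    exact this
  rcases IsKilling.eq_neg_or_eq_of_eq_smul γ β (by simpa using hβ) k h1 with h2 | h2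
  · exfalso
    apply not_pos_neg hb (isPosRoot_simple hb j)
    have : -α j = χ := by
      rw [← hβ', ← hγ', h2]; ext y; simp
    rwa [this]
  · rw [← hβ', ← hγ', h2]

theorem rootSpace_one_dim {χ : Module.Dual ℂ H} (h : IsRoot H χ) {x y : L} (hx : x ∈ rootSpace H ⇑χ)
    (hy : y ∈ rootSpace H ⇑χ) (hx0 : x ≠ 0) : ∃ c : ℂ, y = c • x := by
  obtain ⟨β, hβ, rfl⟩ := isRoot_iff.1 h
  have h1 := IsKilling.finrank_rootSpace_eq_one β (by simpa using hβ)
  have h2 := (finrank_eq_one_iff_of_nonzero' (⟨x, hx⟩ : rootSpace H ⇑β) (by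
    intro hh; exact hx0 (congrArg Subtype.val hh))).1 h1 ⟨y, hy⟩
  obtain ⟨c, hc⟩ := h2
  exact ⟨c, (congrArg Subtype.val hc).symm⟩

theorem exists_setup (hb : IsBase H α) (hco : ∀ j, IsCoroot H (α j) (hc j)) :
    ∃ e f : Fin r → L, Setup H α hc e f := by
  choose h2 e he f hf hh using hco
  exact ⟨e, f, hb, he, hf, hh, h2⟩

theorem isPosRoot_neg_iff {χ : Module.Dual ℂ H} :
    IsPosRoot H (fun j => -α j) χ ↔ IsPosRoot H α (-χ) := by
  unfold IsPosRoot
  rw [isRoot_neg_iff]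
  refine and_congr_right fun _ => exists_congr fun c => ?_
  simp only [smul_neg, Finset.sum_neg_distrib]
  rw [neg_eq_iff_eq_neg]

theorem Setup.neg (D : Setup H α hc e f) :
    Setup H (fun j => -α j) (fun j => -hc j) f e where
  base :=
    { isRoot := fun j => isRoot_neg (D.base.isRoot j)
      indep := by
        rw [Fintype.linearIndependent_iff]
        intro g hg j
        have := Fintype.linearIndependent_iff.1 D.base.indep g (by
          simpa [Finset.sum_neg_distrib] using hg) j
        exact this
      pos_neg := fun χ hχ => by
        rcases D.base.pos_neg χ hχ with ⟨c, h⟩ | ⟨c, h⟩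
        · exact Or.inr ⟨c, by simp [h, Finset.sum_neg_distrib]⟩
        · exact Or.inl ⟨c, by simp [h, Finset.sum_neg_distrib]⟩ }
  he := D.hf
  hf := fun j => by simpa using D.he j
  hh := fun j => by simp [D.hh j]
  h2 := fun j => by simp [D.h2 j]

theorem Setup.lie_e (D : Setup H α hc e f) (h : H) (j : Fin r) : ⁅(h : L), e j⁆ = α j h • e j :=
  mem_rootSpace_iff.1 (D.he j) h

theorem Setup.lie_f (D : Setup H α hc e f) (h : H) (j : Fin r) : ⁅(h : L), f j⁆ = -(α j h • f j) := by
  have := mem_rootSpace_iff.1 (D.hf j) h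
  simpa using this

theorem Setup.hc_ne (D : Setup H α hc e f) (j : Fin r) : (hc j : L) ≠ 0 := by
  intro h
  have h2 := D.h2 j
  have : hc j = 0 := by exact_mod_cast h
  rw [this] at h2
  simp at h2

theorem Setup.sl2 (D : Setup H α hc e f) (j : Fin r) : IsSl2Triple (hc j : L) (e j) (f j) where
  h_ne_zero := D.hc_ne j
  lie_e_f := (D.hh j).symm
  lie_h_e_nsmul := by rw [D.lie_e, D.h2]; norm_cast
  lie_h_f_nsmul := by rw [D.lie_f, D.h2]; norm_cast

theorem Setup.e_ne (D : Setup H α hc e f) (j : Fin r) : e j ≠ 0 := by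
  intro h; apply D.hc_ne j; rw [D.hh, h, zero_lie]

/-- `[e_i, f_j] = 0` for `i ≠ j`. -/
theorem Setup.lie_e_f_ne (D : Setup H α hc e f) {i j : Fin r} (hij : i ≠ j) : ⁅e i, f j⁆ = 0 := by
  have h1 := lie_mem_rootSpace (D.he i) (D.hf j)
  have key : ∀ c : Fin r → ℂ, (α i + -α j = ∑ k, c k • α k) → c i = 1 ∧ c j = -1 := by
    intro c h
    have h2 : ∑ k, ((Pi.single i 1 - Pi.single j 1 : Fin r → ℂ) k) • α k = ∑ k, c k • α k := by
      rw [← h]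
      simp only [Pi.sub_apply, sub_smul, Finset.sum_sub_distrib, Pi.single_apply, ite_smul, one_smul,
        zero_smul]
      simp [sub_eq_add_neg]
    have h3 := coeff_unique D.base h2
    rw [← h3]
    simp [hij, Ne.symm hij]
  refine rootSpace_eq_bot ?_ ?_ h1
  · intro h0
    have := (key 0 (by rw [h0]; simp)).1
    simp at this
  · intro hR
    rcases D.base.pos_neg _ hR with ⟨c, h⟩ | ⟨c, h⟩
    · have := (key _ h).2
      have h5 : ((c j + 1 : ℕ) : ℂ) = 0 := by push_cast; rw [this]; ring
      have := Nat.cast_eq_zero.1 h5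
      omega
    · rw [← Finset.sum_neg_distrib] at h
      simp only [← neg_smul] at h
      have := (key _ h).1
      have h5 : ((c i + 1 : ℕ) : ℂ) = 0 := by push_cast; linear_combination - this
      have := Nat.cast_eq_zero.1 h5
      omega

end Part1

section Part2

/-- index type of roots -/
abbrev RI [FiniteDimensional ℂ L] (H : LieSubalgebra ℂ L) [H.IsCartanSubalgebra] : Type :=
  (LieSubalgebra.root : Finset (Weight ℂ H L))

/-- the root system -/
noncomputable abbrev RS [FiniteDimensional ℂ L] [LieAlgebra.IsSemisimple ℂ L]
    (H : LieSubalgebra ℂ L) [H.IsCartanSubalgebra] :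
    RootPairing (RI H) ℂ (Module.Dual ℂ H) H := IsKilling.rootSystem H

variable [FiniteDimensional ℂ L] [LieAlgebra.IsSemisimple ℂ L]
  {H : LieSubalgebra ℂ L} [H.IsCartanSubalgebra]
  {r : ℕ} {α : Fin r → Module.Dual ℂ H} {hc : Fin r → H} {e f : Fin r → L}

theorem isRoot_iff_rootSystem {χ : Module.Dual ℂ H} :
    IsRoot H χ ↔ ∃ i : RI H, (RS H).root i = χ := by
  rw [isRoot_iff]
  constructor
  · rintro ⟨β, hβ, rfl⟩
    exact ⟨⟨β, hβ⟩, by rw [IsKilling.rootSystem_root_apply]⟩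
  · rintro ⟨⟨β, hβ⟩, rfl⟩
    exact ⟨β, hβ, by rw [IsKilling.rootSystem_root_apply]⟩

theorem Setup.exists_index (D : Setup H α hc e f) (j : Fin r) :
    ∃ i, (RS H).root i = α j ∧ (RS H).coroot i = hc j := by
  obtain ⟨β, hβ, hβ'⟩ := isRoot_iff.1 (D.base.isRoot j)
  refine ⟨⟨β, hβ⟩, by rw [IsKilling.rootSystem_root_apply, hβ'], ?_⟩
  rw [IsKilling.rootSystem_coroot_apply]
  have h1 : (⇑β : H → ℂ) = ⇑(α j) := by rw [← hβ']; rfl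
  refine (IsKilling.eq_coroot_of_mem_corootSpace_of_two β ?_ ?_).symm
  · rw [mem_corootSpace, h1, D.hh j]
    apply Submodule.subset_span
    exact ⟨e j, D.he j, f j, D.hf j, rfl⟩
  · rw [h1, D.h2]

theorem refl_pos (D : Setup H α hc e f) {j : Fin r} {χ : Module.Dual ℂ H} (h : IsPosRoot H α χ)
    (hne : χ ≠ α j) (c : ℂ) (hR : IsRoot H (χ - c • α j)) : IsPosRoot H α (χ - c • α j) := by
  obtain ⟨n, hn⟩ := h.2
  rcases pos_or_neg D.base hR with h1 | ⟨-, m, hm⟩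
  · exact h1
  · exfalso
    apply hne
    apply eq_simple_of_smul D.base h j (n j)
    have h2 : ∑ k, ((n k : ℂ) + m k) • α k = ∑ k, (Pi.single j c : Fin r → ℂ) k • α k := by
      simp only [add_smul, Finset.sum_add_distrib, ← hn, ← hm]
      simp [Pi.single_apply, ite_smul]
    have h3 := coeff_unique D.base h2
    rw [hn, Finset.sum_eq_single j]
    · intro k _ hk
      have h4 := congrFun h3 k
      simp only [Pi.single_apply, hk, if_false] at h4
      have h5 : ((n k + m k : ℕ) : ℂ) = 0 := by push_cast; exact h4
      have := Nat.cast_eq_zero.1 h5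
      have : n k = 0 := by omega
      simp [this]
    · simp

/-- index set of positive roots -/
noncomputable def posI (H : LieSubalgebra ℂ L) [H.IsCartanSubalgebra] {r : ℕ}
    (α : Fin r → Module.Dual ℂ H) :
    Finset (RI H) :=
  Finset.univ.filter fun i => IsPosRoot H α ((RS H).root i)

theorem mem_posI {i : RI H} :
    i ∈ posI H α ↔ IsPosRoot H α ((RS H).root i) := by
  rw [posI, Finset.mem_filter]; exact ⟨fun h => h.2, fun h => ⟨Finset.mem_univ _, h⟩⟩

theorem Setup.reflect_mem (D : Setup H α hc e f) {j : Fin r}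
    {a i : RI H}
    (ha : (RS H).root a = α j) (hi : i ∈ (posI H α).erase a) :
    (RS H).reflectionPerm a i ∈ (posI H α).erase a := by
  rw [Finset.mem_erase, mem_posI] at hi ⊢
  have h1 : (RS H).root ((RS H).reflectionPerm a i) = (RS H).root i - (RS H).pairing i a • α j := by
    rw [(RS H).root_reflectionPerm, (RS H).reflection_apply_root, ha]
  constructor
  · intro h
    rw [h, ha] at h1
    have h3 : (RS H).root i = (RS H).root ((RS H).reflectionPerm a a) := by
      conv_rhs => rw [← h]
      have := (RS H).reflectionPerm_self a i
      rw [h] at this ⊢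
      rw [this]
    rw [(RS H).root_reflectionPerm, (RS H).reflection_apply_self, ha] at h3
    exact not_pos_neg D.base (isPosRoot_simple D.base j) (h3 ▸ hi.2)
  · have h4 : IsRoot H ((RS H).root i - (RS H).pairing i a • α j) := by
      rw [← h1]; exact isRoot_iff_rootSystem.2 ⟨_, rfl⟩
    have := refl_pos D hi.2 (j := j) (fun h => hi.1 ((RS H).root.injective (h.trans ha.symm))) _ h4
    rwa [h1]

theorem Setup.sum_reflect (D : Setup H α hc e f) {j : Fin r} {A : Type*} [AddCommGroup A]
    {a : RI H}
    (ha : (RS H).root a = α j) (F : RI H → A) :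
    ∑ i ∈ (posI H α).erase a, F ((RS H).reflectionPerm a i)
      = ∑ i ∈ (posI H α).erase a, F i :=
  Finset.sum_nbij' (fun i => (RS H).reflectionPerm a i)
    (fun i => (RS H).reflectionPerm a i)
    (fun i hi => D.reflect_mem ha hi) (fun i hi => D.reflect_mem ha hi)
    (by simp) (by simp) (by simp)

/-- `⟨2ρ, α_j^∨⟩ = 2`. -/
theorem Setup.two_rho (D : Setup H α hc e f) (j : Fin r) :
    ∑ i ∈ posI H α, (RS H).root i (hc j) = 2 := by
  obtain ⟨a, ha, hca⟩ := D.exists_index j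
  have hmem : a ∈ posI H α := by rw [mem_posI, ha]; exact isPosRoot_simple D.base j
  have h1 := D.sum_reflect ha (fun i => (RS H).root i (hc j))
  have h2 : ∀ i, (RS H).root ((RS H).reflectionPerm a i) (hc j) = - (RS H).root i (hc j) := by
    intro i
    have hp : (RS H).pairing i a = (RS H).root i (hc j) := by
      rw [← (RS H).root_coroot_eq_pairing, hca]; rfl
    rw [(RS H).root_reflectionPerm, (RS H).reflection_apply_root, hp, ha, LinearMap.sub_apply,
      LinearMap.smul_apply, D.h2, smul_eq_mul]
    ring
  have h3 : ∑ i ∈ (posI H α).erase a, (RS H).root ((RS H).reflectionPerm a i) (hc j)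
      = ∑ i ∈ (posI H α).erase a, -((RS H).root i (hc j)) := Finset.sum_congr rfl fun i _ => h2 i
  rw [Finset.sum_neg_distrib] at h3
  have h4 : ∑ i ∈ (posI H α).erase a, (RS H).root i (hc j) = 0 := by
    have := h1.symm.trans h3
    linear_combination (1/2) * this
  rw [← Finset.add_sum_erase _ _ hmem, h4, ha, D.h2, add_zero]

theorem Setup.rho_check (D : Setup H α hc e f) (j : Fin r) :
    α j (∑ i ∈ posI H α, (RS H).coroot i) = 2 := by
  obtain ⟨a, ha, hca⟩ := D.exists_index j
  have hmem : a ∈ posI H α := by rw [mem_posI, ha]; exact isPosRoot_simple D.base j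
  have h1 := D.sum_reflect ha (fun i => α j ((RS H).coroot i))
  have h2 : ∀ i, α j ((RS H).coroot ((RS H).reflectionPerm a i)) = - α j ((RS H).coroot i) := by
    intro i
    have hp : (RS H).pairing a i = α j ((RS H).coroot i) := by
      rw [← (RS H).root_coroot_eq_pairing, ha]; rfl
    rw [(RS H).coroot_reflectionPerm, (RS H).coreflection_apply_coroot, hp, hca, map_sub, map_smul, D.h2,
      smul_eq_mul]
    ring
  have h3 : ∑ i ∈ (posI H α).erase a, α j ((RS H).coroot ((RS H).reflectionPerm a i))
      = ∑ i ∈ (posI H α).erase a, -(α j ((RS H).coroot i)) := Finset.sum_congr rfl fun i _ => h2 i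
  rw [Finset.sum_neg_distrib] at h3
  have h4 : ∑ i ∈ (posI H α).erase a, α j ((RS H).coroot i) = 0 := by
    have := h1.symm.trans h3
    linear_combination (1/2) * this
  rw [map_sum, ← Finset.add_sum_erase _ _ hmem, h4, hca, D.h2, add_zero]

theorem Setup.exists_h0 (D : Setup H α hc e f) :
    ∃ (h0 : H) (c : Fin r → ℤ), h0 = ∑ j, (c j : ℂ) • hc j ∧ ∀ j, α j h0 = 2 := by
  choose a ha hca using D.exists_index
  have himg : (RS H).root '' (Set.range a) = Set.range α := by
    rw [← Set.range_comp]; exact congrArg _ (funext ha)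
  have hcimg : (RS H).coroot '' (Set.range a) = Set.range hc := by
    rw [← Set.range_comp]; exact congrArg _ (funext hca)
  have hainj : Function.Injective a := by
    intro i j hij
    apply D.base.indep.injective
    rw [← ha, ← ha, hij]
  have hli : LinearIndepOn ℂ (RS H).root (Set.range a) := by
    rw [LinearIndepOn, ← linearIndependent_equiv (Equiv.ofInjective a hainj)]
    convert D.base.indep using 1
    funext j; exact ha j
  have hcl : ∀ c : Fin r → ℕ, ∑ j, (c j : ℂ) • α j ∈ AddSubmonoid.closure (Set.range α) := by
    intro c
    apply AddSubmonoid.sum_mem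
    intro j _
    rw [Nat.cast_smul_eq_nsmul]
    exact AddSubmonoid.nsmul_mem _ (AddSubmonoid.subset_closure (Set.mem_range_self j)) _
  have hsp : ∀ i, (RS H).root i ∈ AddSubmonoid.closure ((RS H).root '' (Set.range a)) ∨
      -(RS H).root i ∈ AddSubmonoid.closure ((RS H).root '' (Set.range a)) := by
    intro i
    rw [himg]
    rcases D.base.pos_neg ((RS H).root i) (isRoot_iff_rootSystem.2 ⟨i, rfl⟩) with ⟨c, h⟩ | ⟨c, h⟩
    · left; rw [h]; exact hcl c
    · right; rw [h, neg_neg]; exact hcl c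
  have hco := RootPairing.coroot_mem_or_neg_mem_closure_of_root (RS H) (Set.range a) hli hsp
  have hcl2 : ∀ x ∈ AddSubmonoid.closure (Set.range hc), ∃ c : Fin r → ℤ, x = ∑ j, (c j : ℂ) • hc j := by
    intro x hx
    induction hx using AddSubmonoid.closure_induction with
    | mem x hx =>
      obtain ⟨j, rfl⟩ := hx
      exact ⟨Pi.single j 1, by rw [Finset.sum_eq_single j] <;> simp +contextual⟩
    | zero => exact ⟨0, by simp⟩
    | add x y _ _ hx hy =>
      obtain ⟨c, rfl⟩ := hx
      obtain ⟨d, rfl⟩ := hy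
      exact ⟨c + d, by simp [add_smul, Finset.sum_add_distrib]⟩
  have hco2 : ∀ i, ∃ c : Fin r → ℤ, (RS H).coroot i = ∑ j, (c j : ℂ) • hc j := by
    intro i
    have := hco i
    rw [hcimg] at this
    rcases this with h | h
    · exact hcl2 _ h
    · obtain ⟨c, hc'⟩ := hcl2 _ h
      refine ⟨-c, ?_⟩
      rw [← neg_neg ((RS H).coroot i), hc']
      simp [Finset.sum_neg_distrib]
  choose c hc' using hco2
  refine ⟨∑ i ∈ posI H α, (RS H).coroot i, fun j => ∑ i ∈ posI H α, c i j, ?_, D.rho_check⟩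
  simp only [hc', Int.cast_sum, Finset.sum_smul]
  rw [Finset.sum_comm]

/-- the simple roots span the dual of the Cartan subalgebra -/
theorem Setup.span_alpha (D : Setup H α hc e f) : Submodule.span ℂ (Set.range α) = ⊤ := by
  rw [eq_top_iff, ← IsKilling.span_weight_isNonZero_eq_top ℂ L H, Submodule.span_le]
  rintro _ ⟨β, hβ, rfl⟩
  have hR : IsRoot H (Weight.toLinear ℂ H L β) := isRoot_iff.2 ⟨β, by simpa using hβ, rfl⟩
  have : ∀ c : Fin r → ℕ, ∑ j, (c j : ℂ) • α j ∈ Submodule.span ℂ (Set.range α) := fun c =>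
    Submodule.sum_mem _ fun j _ => Submodule.smul_mem _ _ (Submodule.subset_span ⟨j, rfl⟩)
  rcases D.base.pos_neg _ hR with ⟨c, h⟩ | ⟨c, h⟩
  · rw [h]; exact this c
  · rw [h]; exact Submodule.neg_mem _ (this c)

theorem Setup.ext_H (D : Setup H α hc e f) {x y : H} (h : ∀ j, α j x = α j y) : x = y := by
  rw [← sub_eq_zero, ← Module.forall_dual_apply_eq_zero_iff ℂ]
  intro φ
  have : φ ∈ Submodule.span ℂ (Set.range α) := by rw [D.span_alpha]; trivial
  induction this using Submodule.span_induction with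
  | mem x hx => obtain ⟨j, rfl⟩ := hx; simp [h j]
  | zero => simp
  | add _ _ _ _ h1 h2 => simp_all
  | smul _ _ _ h1 => simp_all

/-- existence of elements with prescribed simple root values -/
theorem Setup.exists_H (D : Setup H α hc e f) (c : Fin r → ℂ) : ∃ z : H, ∀ j, α j z = c j := by
  let b := Basis.mk D.base.indep (by rw [D.span_alpha])
  let φ : Module.Dual ℂ (Module.Dual ℂ H) := b.constr ℂ c
  refine ⟨(Module.evalEquiv ℂ H).symm φ, fun j => ?_⟩
  have h1 : α j ((Module.evalEquiv ℂ H).symm φ) = φ (α j) := by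
    rw [Module.apply_evalEquiv_symm_apply]
  rw [h1]
  have : α j = b j := by simp [b]
  rw [this, Basis.constr_basis]

end Part2

section Part3

variable [FiniteDimensional ℂ L] [LieAlgebra.IsSemisimple ℂ L]
  {H : LieSubalgebra ℂ L} [H.IsCartanSubalgebra]
  {r : ℕ} {α : Fin r → Module.Dual ℂ H} {hc : Fin r → H} {e f : Fin r → L}

/-- The element of the Cartan subalgebra dual to a functional via the Killing form. -/
noncomputable def tt (χ : Module.Dual ℂ H) : H := (IsKilling.cartanEquivDual H).symm χ

theorem tt_add (χ ψ : Module.Dual ℂ H) : tt (χ + ψ) = tt χ + tt ψ := map_add _ _ _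
theorem tt_smul (c : ℂ) (χ : Module.Dual ℂ H) : tt (c • χ) = c • tt χ := map_smul _ _ _
theorem tt_sum {ι : Type*} (s : Finset ι) (χ : ι → Module.Dual ℂ H) :
    tt (∑ i ∈ s, χ i) = ∑ i ∈ s, tt (χ i) := map_sum _ _ _

theorem kap_tt (χ : Module.Dual ℂ H) (h : H) : killingForm ℂ L (tt χ : L) (h : L) = χ h := by
  have : IsKilling.cartanEquivDual H (tt χ) h = χ h := by
    simp [tt]
  rw [← this]
  rfl

theorem kap_comm (x y : L) : killingForm ℂ L x y = killingForm ℂ L y x :=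
  LieModule.traceForm_comm ℂ L L x y

theorem kap_inv (x y z : L) : killingForm ℂ L ⁅x, y⁆ z = killingForm ℂ L x ⁅y, z⁆ :=
  LieModule.traceForm_apply_lie_apply ℂ L L x y z

theorem tt_symm (χ ψ : Module.Dual ℂ H) : χ (tt ψ) = ψ (tt χ) := by
  rw [← kap_tt, ← kap_tt, kap_comm]

theorem kap_zero {χ ψ : Module.Dual ℂ H} {x y : L} (hx : x ∈ rootSpace H ⇑χ)
    (hy : y ∈ rootSpace H ⇑ψ) (h : χ + ψ ≠ 0) : killingForm ℂ L x y = 0 := by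
  refine killingForm_apply_eq_zero_of_mem_rootSpace_of_add_ne_zero ℂ L H hx hy ?_
  intro h'
  apply h
  ext z
  exact congrFun h' z

theorem coe_mem_rootSpace_zero (h : H) : (h : L) ∈ rootSpace H ⇑(0 : Module.Dual ℂ H) := by
  rw [mem_rootSpace_iff]; intro h'; simp [cartan_comm]

theorem lie_eq_kap_tt {χ : Module.Dual ℂ H} (hχ : IsRoot H χ) {x y : L} (hx : x ∈ rootSpace H ⇑χ)
    (hy : y ∈ rootSpace H ⇑(-χ)) : ⁅x, y⁆ = killingForm ℂ L x y • (tt χ : L) := by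
  obtain ⟨β, hβ, rfl⟩ := isRoot_iff.1 hχ
  exact IsKilling.lie_eq_killingForm_smul_of_mem_rootSpace_of_mem_rootSpace_neg hx hy

/-- An adapted pair of dual families for the Killing form. -/
structure DF (H : LieSubalgebra ℂ L) [H.IsCartanSubalgebra] (x y : RI H → L) {n : ℕ}
    (b b' : Fin n → H) : Prop where
  hx : ∀ i, x i ∈ rootSpace H ⇑((RS H).root i)
  hy : ∀ i, y i ∈ rootSpace H ⇑(-(RS H).root i)
  hxy : ∀ i, killingForm ℂ L (x i) (y i) = 1
  exp1 : ∀ z : L, z = ∑ i, killingForm ℂ L (y i) z • x i + ∑ k, killingForm ℂ L (b' k : L) z • (b k : L)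
  exp2 : ∀ z : L, z = ∑ i, killingForm ℂ L (x i) z • y i + ∑ k, killingForm ℂ L (b k : L) z • (b' k : L)

theorem exists_DF (H : LieSubalgebra ℂ L) [H.IsCartanSubalgebra] :
    ∃ (x y : RI H → L) (n : ℕ) (b b' : Fin n → H), DF H x y b b' := by
  have key : ∀ i : RI H, ∃ x ∈ rootSpace H ⇑((RS H).root i), ∃ y ∈ rootSpace H ⇑(-(RS H).root i),
      killingForm ℂ L x y = 1 := by
    intro i
    have hR : IsRoot H ((RS H).root i) := isRoot_iff_rootSystem.2 ⟨i, rfl⟩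
    obtain ⟨h, x, y, hs, hx, hy⟩ := IsKilling.exists_isSl2Triple_of_weight_isNonZero
      (α := (i : Weight ℂ H L)) (by have := i.2; simpa only [LieSubalgebra.root, Finset.mem_filter, Finset.mem_univ, true_and] using this)
    have hx' : x ∈ rootSpace H ⇑((RS H).root i) := hx
    have hy' : y ∈ rootSpace H ⇑(-(RS H).root i) := hy
    have h1 := lie_eq_kap_tt hR hx' hy'
    have h2 : killingForm ℂ L x y ≠ 0 := by
      intro h0
      rw [h0, zero_smul] at h1
      exact hs.h_ne_zero (hs.lie_e_f.symm.trans h1)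
    refine ⟨x, hx', (killingForm ℂ L x y)⁻¹ • y, ?_, ?_⟩
    · exact (rootSpace H _).smul_mem _ hy'
    · rw [map_smul, smul_eq_mul, inv_mul_cancel₀ h2]
  choose x hx y hy hxy using key
  let b := Module.finBasis ℂ H
  have hnd := IsKilling.traceForm_cartan_nondegenerate ℂ L H
  let b' := (traceForm ℂ H L).dualBasis hnd b
  have hbb : ∀ i j, killingForm ℂ L (b' i : L) (b j : L) = if j = i then 1 else 0 := by
    intro i j
    exact LinearMap.BilinForm.apply_dualBasis_left hnd b i j
  have hroot : ∀ i : RI H, IsRoot H ((RS H).root i) := fun i => isRoot_iff_rootSystem.2 ⟨i, rfl⟩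
  have hcoe : ∀ (m : ℕ) (c : Fin m → ℂ) (g : Fin m → H), ((∑ k, c k • g k : H) : L) = ∑ k, c k • (g k : L) := by
    intro m c g
    simp
  have o1 : ∀ (i : RI H) (h : H), killingForm ℂ L (x i) (h : L) = 0 := fun i h =>
    kap_zero (hx i) (coe_mem_rootSpace_zero h) (by rw [add_zero]; exact (hroot i).1)
  have o2 : ∀ (i : RI H) (h : H), killingForm ℂ L (y i) (h : L) = 0 := fun i h =>
    kap_zero (hy i) (coe_mem_rootSpace_zero h) (by rw [add_zero, neg_ne_zero]; exact (hroot i).1)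
  have o3 : ∀ i j : RI H, killingForm ℂ L (y i) (x j) = if i = j then 1 else 0 := by
    intro i j
    split_ifs with h
    · rw [← h, kap_comm, hxy]
    · apply kap_zero (hy i) (hx j)
      rw [neg_add_eq_sub]
      intro h0
      exact h ((RS H).root.injective (sub_eq_zero.1 h0).symm)
  have hx0 : ∀ i, x i ≠ 0 := by
    intro i h0
    have := hxy i
    rw [h0] at this
    simp at this
  have hy0 : ∀ i, y i ≠ 0 := by
    intro i h0
    have := hxy i
    rw [h0] at this
    simp at this
  refine ⟨x, y, _, b, b', hx, hy, hxy, ?_, ?_⟩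
  · intro z
    let S : Submodule ℂ L := LinearMap.eqLocus LinearMap.id
      (∑ i, ((killingForm ℂ L (y i)).smulRight (x i)) +
        ∑ k, ((killingForm ℂ L (b' k : L)).smulRight (b k : L)))
    have : z ∈ S := by
      apply span_induction_L (H := H)
      · intro h
        simp only [S, LinearMap.mem_eqLocus, LinearMap.id_apply, LinearMap.add_apply,
          LinearMap.sum_apply, LinearMap.smulRight_apply, o2, zero_smul, Finset.sum_const_zero, zero_add]
        have h1 : h = ∑ k, killingForm ℂ L (b' k : L) (h : L) • b k := by
          conv_lhs => rw [← b.sum_repr h]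
          refine Finset.sum_congr rfl fun k _ => ?_
          congr 1
          conv_rhs => rw [← b.sum_repr h, hcoe, map_sum]
          simp only [map_smul, hbb, smul_eq_mul]
          simp
        conv_lhs => rw [h1, hcoe]
      · intro χ hχ w hw
        obtain ⟨j, rfl⟩ := isRoot_iff_rootSystem.1 hχ
        obtain ⟨c, rfl⟩ := rootSpace_one_dim hχ (hx j) hw (hx0 j)
        apply S.smul_mem
        simp only [S, LinearMap.mem_eqLocus, LinearMap.id_apply, LinearMap.add_apply,
          LinearMap.sum_apply, LinearMap.smulRight_apply, o3]
        simp only [kap_comm _ (x j), o1]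
        simp
    simpa [S, LinearMap.mem_eqLocus] using this
  · intro z
    let S : Submodule ℂ L := LinearMap.eqLocus LinearMap.id
      (∑ i, ((killingForm ℂ L (x i)).smulRight (y i)) +
        ∑ k, ((killingForm ℂ L (b k : L)).smulRight (b' k : L)))
    have : z ∈ S := by
      apply span_induction_L (H := H)
      · intro h
        simp only [S, LinearMap.mem_eqLocus, LinearMap.id_apply, LinearMap.add_apply,
          LinearMap.sum_apply, LinearMap.smulRight_apply, o1, zero_smul, Finset.sum_const_zero, zero_add]
        have h1 : h = ∑ k, killingForm ℂ L (b k : L) (h : L) • b' k := by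
          conv_lhs => rw [← b'.sum_repr h]
          refine Finset.sum_congr rfl fun k _ => ?_
          congr 1
          conv_rhs => rw [← b'.sum_repr h, hcoe, map_sum]
          simp only [map_smul, smul_eq_mul]
          simp only [kap_comm (b k : L), hbb]
          simp
        conv_lhs => rw [h1, hcoe]
      · intro χ hχ w hw
        obtain ⟨j, hj⟩ := isRoot_iff_rootSystem.1 (isRoot_neg hχ)
        have hχj : χ = -(RS H).root j := by rw [hj, neg_neg]
        subst hχj
        obtain ⟨c, rfl⟩ := rootSpace_one_dim hχ (hy j) hw (hy0 j)
        apply S.smul_mem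
        simp only [S, LinearMap.mem_eqLocus, LinearMap.id_apply, LinearMap.add_apply,
          LinearMap.sum_apply, LinearMap.smulRight_apply]
        simp only [kap_comm _ (y j), o2, o3]
        simp
    simpa [S, LinearMap.mem_eqLocus] using this

section Casimir

variable {X : Type} [AddCommGroup X] [Module ℂ X] [LieRingModule L X] [LieModule ℂ L X]

/-- The Casimir operator of a pair of families. -/
noncomputable def cas {K : Type} [Fintype K] (c c' : K → L) (X : Type) [AddCommGroup X] [Module ℂ X]
    [LieRingModule L X] [LieModule ℂ L X] : X →ₗ[ℂ] X :=
  ∑ k, (toEnd ℂ L X (c k)) ∘ₗ (toEnd ℂ L X (c' k))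

theorem cas_apply {K : Type} [Fintype K] (c c' : K → L) (u : X) :
    cas c c' X u = ∑ k, ⁅c k, ⁅c' k, u⁆⁆ := by
  simp [cas, LinearMap.sum_apply]

theorem cas_comm {K : Type} [Fintype K] {c c' : K → L}
    (h1 : ∀ z : L, z = ∑ k, killingForm ℂ L (c' k) z • c k)
    (h2 : ∀ z : L, z = ∑ k, killingForm ℂ L (c k) z • c' k) (z : L) (u : X) :
    cas c c' X ⁅z, u⁆ = ⁅z, cas c c' X u⁆ := by
  rw [cas_apply, cas_apply, lie_sum, eq_comm]
  have e1 : ∀ k, ⁅z, ⁅c k, ⁅c' k, u⁆⁆⁆ = ⁅⁅z, c k⁆, ⁅c' k, u⁆⁆ + ⁅c k, ⁅⁅z, c' k⁆, u⁆⁆ + ⁅c k, ⁅c' k, ⁅z, u⁆⁆⁆ := by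
    intro k
    rw [leibniz_lie z (c k), leibniz_lie z (c' k), lie_add]
    abel
  simp only [e1, Finset.sum_add_distrib]
  suffices h : ∑ k, ⁅⁅z, c k⁆, ⁅c' k, u⁆⁆ + ∑ k, ⁅c k, ⁅⁅z, c' k⁆, u⁆⁆ = 0 by rw [h, zero_add]
  have e2 : ∀ k, ⁅⁅z, c k⁆, ⁅c' k, u⁆⁆ = ∑ l, killingForm ℂ L (c' l) ⁅z, c k⁆ • ⁅c l, ⁅c' k, u⁆⁆ := by
    intro k
    conv_lhs => rw [h1 ⁅z, c k⁆, sum_lie]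
    simp only [smul_lie]
  have e3 : ∀ k, ⁅c k, ⁅⁅z, c' k⁆, u⁆⁆ = ∑ l, killingForm ℂ L (c l) ⁅z, c' k⁆ • ⁅c k, ⁅c' l, u⁆⁆ := by
    intro k
    conv_lhs => rw [h2 ⁅z, c' k⁆, sum_lie, lie_sum]
    simp only [smul_lie, lie_smul]
  simp only [e2, e3]
  rw [Finset.sum_comm, ← Finset.sum_add_distrib]
  refine Finset.sum_eq_zero fun k _ => ?_
  rw [← Finset.sum_add_distrib]
  refine Finset.sum_eq_zero fun l _ => ?_
  rw [← add_smul]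
  have : killingForm ℂ L (c' k) ⁅z, c l⁆ = - killingForm ℂ L (c l) ⁅z, c' k⁆ := by
    rw [kap_comm (c' k), ← lie_skew, map_neg, LinearMap.neg_apply, kap_inv]
  rw [this, neg_add_cancel, zero_smul]

/-- `u` is a highest weight vector (possibly zero) of weight `lam`. -/
def IsHW (H : LieSubalgebra ℂ L) [H.IsCartanSubalgebra] {r : ℕ}
    (α : Fin r → Module.Dual ℂ H) (lam : Module.Dual ℂ H) (u : X) : Prop :=
  (∀ h : H, ⁅(h : L), u⁆ = lam h • u) ∧
    ∀ χ : Module.Dual ℂ H, IsPosRoot H α χ → ∀ z ∈ rootSpace H ⇑χ, ⁅z, u⁆ = 0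

/-- The Casimir eigenvalue. -/
noncomputable def casVal (H : LieSubalgebra ℂ L) [H.IsCartanSubalgebra] {r : ℕ}
    (α : Fin r → Module.Dual ℂ H) (lam : Module.Dual ℂ H) : ℂ :=
  lam (tt lam) + ∑ i ∈ posI H α, lam (tt ((RS H).root i))

theorem cas_hw (hb : IsBase H α) {x y : RI H → L} {n : ℕ} {b b' : Fin n → H} (D : DF H x y b b')
    {lam : Module.Dual ℂ H} {u : X} (hu : IsHW H α lam u) :
    cas (Sum.elim x (fun k => (b k : L))) (Sum.elim y (fun k => (b' k : L))) X u = casVal H α lam • u := by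
  rw [cas_apply, Fintype.sum_sum_type]
  simp only [Sum.elim_inl, Sum.elim_inr]
  rw [casVal, add_smul, add_comm]
  have hroot : ∀ i : RI H, IsRoot H ((RS H).root i) := fun i => isRoot_iff_rootSystem.2 ⟨i, rfl⟩
  congr 1
  · simp only [hu.1, lie_smul, smul_smul]
    rw [← Finset.sum_smul]
    congr 1
    have h1 : tt lam = ∑ k, lam (b' k) • b k := by
      apply Subtype.ext
      have := D.exp1 (tt lam : L)
      rw [this]
      have hz : ∀ i, killingForm ℂ L (y i) (tt lam : L) = 0 := fun i =>
        kap_zero (D.hy i) (coe_mem_rootSpace_zero _) (by rw [add_zero, neg_ne_zero]; exact (hroot i).1)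
      simp only [hz, zero_smul, Finset.sum_const_zero, zero_add]
      simp only [kap_comm _ (tt lam : L), kap_tt]
      simp
    rw [h1, map_sum]
    simp only [map_smul, smul_eq_mul]
  · rw [posI, Finset.sum_filter, Finset.sum_smul]
    refine Finset.sum_congr rfl fun i _ => ?_
    split_ifs with hi
    · rw [leibniz_lie, lie_eq_kap_tt (hroot i) (D.hx i) (D.hy i), D.hxy, one_smul, hu.1,
        hu.2 _ hi _ (D.hx i), lie_zero, add_zero]
    · rcases pos_or_neg hb (hroot i) with h | h
      · exact absurd h hi
      · rw [hu.2 _ h _ (D.hy i), lie_zero, zero_smul]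

/-- The smallest Lie submodule containing a vector carries a Casimir scalar. -/
theorem casVal_eq (hb : IsBase H α) {mu lam : Module.Dual ℂ H} {m u : X} (hm : IsHW H α mu m)
    (hgen : ∀ S : LieSubmodule ℂ L X, m ∈ S → S = ⊤) (hu : IsHW H α lam u) (hu0 : u ≠ 0) :
    casVal H α lam = casVal H α mu := by
  obtain ⟨x, y, n, b, b', D⟩ := exists_DF H
  set C := cas (Sum.elim x (fun k => (b k : L))) (Sum.elim y (fun k => (b' k : L))) X with hC
  have hcomm : ∀ (z : L) (w : X), C ⁅z, w⁆ = ⁅z, C w⁆ := by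
    intro z w
    apply cas_comm
    · intro z; rw [Fintype.sum_sum_type]; exact D.exp1 z
    · intro z; rw [Fintype.sum_sum_type]; exact D.exp2 z
  let S : LieSubmodule ℂ L X :=
    { LinearMap.eqLocus C (casVal H α mu • LinearMap.id) with
      lie_mem := by
        intro z w hw
        have hw' : C w = casVal H α mu • w := by simpa using hw
        show C ⁅z, w⁆ = (casVal H α mu • LinearMap.id : X →ₗ[ℂ] X) ⁅z, w⁆
        rw [hcomm, hw']
        simp }
  have hS : S = ⊤ := hgen S (by
    show C m = (casVal H α mu • LinearMap.id : X →ₗ[ℂ] X) m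
    rw [hC, cas_hw hb D hm]; simp)
  have hu' : u ∈ S := by rw [hS]; trivial
  have hu'' : C u = casVal H α mu • u := by
    have : C u = (casVal H α mu • LinearMap.id : X →ₗ[ℂ] X) u := hu'
    simpa using this
  rw [hC, cas_hw hb D hu] at hu''
  exact smul_left_injective ℂ hu0 hu''

end Casimir

theorem Setup.exists_q (D : Setup H α hc e f) (j : Fin r) :
    ∃ q : ℝ, 0 < q ∧ tt (α j) = (q : ℂ) • hc j := by
  obtain ⟨a, ha, hca⟩ := D.exists_index j
  have h1 := lie_eq_kap_tt (D.base.isRoot j) (D.he j) (D.hf j)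
  rw [← D.hh] at h1
  have hk : killingForm ℂ L (e j) (f j) ≠ 0 := by
    intro h0
    rw [h0, zero_smul] at h1
    exact D.hc_ne j h1
  have h2 : tt (α j) = (killingForm ℂ L (e j) (f j))⁻¹ • hc j := by
    apply Subtype.ext
    show (tt (α j) : L) = (killingForm ℂ L (e j) (f j))⁻¹ • (hc j : L)
    rw [h1, smul_smul, inv_mul_cancel₀ hk, one_smul]
  set q := (killingForm ℂ L (e j) (f j))⁻¹
  have h3 : q * killingForm ℂ L (hc j : L) (hc j : L) = 2 := by
    rw [← D.h2 j, ← kap_tt, h2]; simp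
  have h4 : killingForm ℂ L (hc j : L) (hc j : L) = ∑ i : RI H, ((RS H).root i (hc j)) ^ 2 := by
    have := LinearMap.congr_fun (LinearMap.congr_fun
      (IsKilling.restrict_killingForm_eq_sum (K := ℂ) (L := L) (H := H)) (hc j)) (hc j)
    rw [LinearMap.BilinForm.restrict_apply] at this
    refine Eq.trans this ?_
    rw [LinearMap.sum_apply, LinearMap.sum_apply, ← Finset.sum_coe_sort]
    refine Finset.sum_congr rfl fun i _ => ?_
    rw [pow_two]; rfl
  have h5 : ∀ i : RI H, ∃ z : ℤ, (RS H).root i (hc j) = (z : ℂ) := by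
    intro i
    rw [← hca]
    exact ⟨_, IsKilling.apply_coroot_eq_cast _ _⟩
  choose z hz using h5
  have h6 : killingForm ℂ L (hc j : L) (hc j : L) = ((∑ i : RI H, (z i : ℝ) ^ 2 : ℝ) : ℂ) := by
    rw [h4]; push_cast; simp only [hz]
  have h7 : 0 < ∑ i : RI H, (z i : ℝ) ^ 2 := by
    apply Finset.sum_pos'
    · intro i _; positivity
    · refine ⟨a, Finset.mem_univ _, ?_⟩
      have : (z a : ℂ) = 2 := by rw [← hz, ha, D.h2]
      have : z a = 2 := by exact_mod_cast this
      rw [this]; norm_num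
  refine ⟨2 / ∑ i : RI H, (z i : ℝ) ^ 2, by positivity, ?_⟩
  rw [h2]
  congr 1
  rw [h6] at h3
  have h8 : ((∑ i : RI H, (z i : ℝ) ^ 2 : ℝ) : ℂ) ≠ 0 := by exact_mod_cast h7.ne'
  rw [Complex.ofReal_div, eq_div_iff h8, h3]; norm_num

/-- Weight comparison through the Casimir. -/
theorem Setup.casVal_inj (D : Setup H α hc e f) {mu lam : Module.Dual ℂ H} (n : Fin r → ℕ)
    (hlam : mu = lam + ∑ j, (n j : ℂ) • α j) (hmu : IsDomInt hc mu) (hl : IsDomInt hc lam)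
    (h : casVal H α lam = casVal H α mu) : ∀ j, n j = 0 := by
  choose q hq hq' using D.exists_q
  choose p hp using hmu
  choose s hs using hl
  have hnu : tt (∑ j, (n j : ℂ) • α j) = ∑ j, ((n j : ℂ) * q j) • hc j := by
    rw [tt_sum]
    refine Finset.sum_congr rfl fun j _ => ?_
    rw [tt_smul, hq', smul_smul]
  set nu := ∑ j, (n j : ℂ) • α j
  have h1 : casVal H α mu - casVal H α lam = (mu + lam) (tt nu) + ∑ i ∈ posI H α, (RS H).root i (tt nu) := by
    have e1 : ∑ i ∈ posI H α, (RS H).root i (tt nu) = ∑ i ∈ posI H α, nu (tt ((RS H).root i)) :=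
      Finset.sum_congr rfl fun i _ => tt_symm _ _
    rw [e1, casVal, casVal, hlam]
    simp only [tt_add, LinearMap.add_apply, map_add, Finset.sum_add_distrib]
    rw [tt_symm nu lam]
    ring
  rw [h, sub_self, hnu, map_sum] at h1
  have h2 : ∑ i ∈ posI H α, (RS H).root i (∑ j, ((n j : ℂ) * q j) • hc j) = ∑ j, ((n j : ℂ) * q j) * 2 := by
    simp only [map_sum, map_smul]
    rw [Finset.sum_comm]
    refine Finset.sum_congr rfl fun j _ => ?_
    rw [← Finset.smul_sum, D.two_rho, smul_eq_mul]
  rw [h2, ← Finset.sum_add_distrib] at h1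
  have h3 : ∑ j, ((n j : ℝ) * q j) * (p j + s j + 2) = 0 := by
    have : ((∑ j, ((n j : ℝ) * q j) * (p j + s j + 2) : ℝ) : ℂ) = 0 := by
      rw [h1]; push_cast
      refine Finset.sum_congr rfl fun j _ => ?_
      rw [map_smul, LinearMap.add_apply, hp, hs, smul_eq_mul]; ring
    exact_mod_cast this
  have h4 := (Finset.sum_eq_zero_iff_of_nonneg (fun j _ => by
    have := (hq j).le; positivity)).1 h3
  intro j
  have h5 := h4 j (Finset.mem_univ _)
  have h6 : (p j + s j + 2 : ℝ) ≠ 0 := by positivity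
  have h7 := (hq j).ne'
  have : (n j : ℝ) = 0 := by
    rcases mul_eq_zero.1 h5 with h | h
    · rcases mul_eq_zero.1 h with h | h
      · exact h
      · exact absurd h h7
    · exact absurd h h6
  exact_mod_cast this

end Part3

section Part4

variable [FiniteDimensional ℂ L] [LieAlgebra.IsSemisimple ℂ L]
  {H : LieSubalgebra ℂ L} [H.IsCartanSubalgebra]
  {r : ℕ} {α : Fin r → Module.Dual ℂ H} {hc : Fin r → H} {e f : Fin r → L}

theorem lie_pos_pos (hb : IsBase H α) {χ ψ : Module.Dual ℂ H} (h1 : IsPosRoot H α χ)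
    (h2 : IsPosRoot H α ψ) {x y : L} (hx : x ∈ rootSpace H ⇑χ) (hy : y ∈ rootSpace H ⇑ψ) :
    ⁅x, y⁆ = 0 ∨ (IsPosRoot H α (χ + ψ) ∧ ⁅x, y⁆ ∈ rootSpace H ⇑(χ + ψ)) := by
  have hm := lie_mem_rootSpace hx hy
  by_cases hR : IsRoot H (χ + ψ)
  · right
    refine ⟨⟨hR, ?_⟩, hm⟩
    obtain ⟨-, c, rfl⟩ := h1
    obtain ⟨-, d, rfl⟩ := h2
    exact ⟨c + d, by simp [add_smul, Finset.sum_add_distrib]⟩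
  · left
    refine rootSpace_eq_bot ?_ hR hm
    intro h0
    apply not_pos_neg hb h1
    rwa [neg_eq_of_add_eq_zero_right h0]

theorem lie_neg_neg (hb : IsBase H α) {χ ψ : Module.Dual ℂ H} (h1 : IsPosRoot H α χ)
    (h2 : IsPosRoot H α ψ) {x y : L} (hx : x ∈ rootSpace H ⇑(-χ)) (hy : y ∈ rootSpace H ⇑(-ψ)) :
    ⁅x, y⁆ = 0 ∨ (IsPosRoot H α (χ + ψ) ∧ ⁅x, y⁆ ∈ rootSpace H ⇑(-(χ + ψ))) := by
  have hm := lie_mem_rootSpace hx hy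
  rw [← neg_add] at hm
  by_cases hR : IsRoot H (χ + ψ)
  · right
    refine ⟨⟨hR, ?_⟩, hm⟩
    obtain ⟨-, c, rfl⟩ := h1
    obtain ⟨-, d, rfl⟩ := h2
    exact ⟨c + d, by simp [add_smul, Finset.sum_add_distrib]⟩
  · left
    refine rootSpace_eq_bot ?_ (fun h => hR (isRoot_neg_iff.1 h)) hm
    rw [neg_ne_zero]
    intro h0
    apply not_pos_neg hb h1
    rwa [neg_eq_of_add_eq_zero_right h0]

/-- The set of all negative root vectors. -/
def negVec (H : LieSubalgebra ℂ L) [H.IsCartanSubalgebra] {r : ℕ} (α : Fin r → Module.Dual ℂ H) : Set L :=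
  {y | ∃ χ, IsPosRoot H α χ ∧ y ∈ rootSpace H ⇑(-χ)}

/-- The negative nilpotent subalgebra. -/
noncomputable def nm (hb : IsBase H α) : LieSubalgebra ℂ L :=
  { Submodule.span ℂ (negVec H α) with
    lie_mem' := by
      intro x y hx hy
      have hx' : x ∈ Submodule.span ℂ (negVec H α) := hx
      have hy' : y ∈ Submodule.span ℂ (negVec H α) := hy
      show ⁅x, y⁆ ∈ Submodule.span ℂ (negVec H α)
      induction hx' using Submodule.span_induction with
      | mem x h =>
        obtain ⟨χ, h1, h2⟩ := h
        clear hx hy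
        induction hy' using Submodule.span_induction with
        | mem y h =>
          obtain ⟨ψ, h3, h4⟩ := h
          rcases lie_neg_neg hb h1 h3 h2 h4 with h | ⟨h5, h6⟩
          · rw [h]; exact Submodule.zero_mem _
          · exact Submodule.subset_span ⟨_, h5, h6⟩
        | zero => rw [lie_zero]; exact Submodule.zero_mem _
        | add a b _ _ ha hb => rw [lie_add]; exact Submodule.add_mem _ ha hb
        | smul c a _ ha => rw [lie_smul]; exact Submodule.smul_mem _ _ ha
      | zero => rw [zero_lie]; exact Submodule.zero_mem _
      | add a b h1 h2 ha hb => rw [add_lie]; exact Submodule.add_mem _ (ha h1) (hb h2)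
      | smul c a h1 ha => rw [smul_lie]; exact Submodule.smul_mem _ _ (ha h1) }

theorem mem_nm {hb : IsBase H α} {y : L} : y ∈ nm hb ↔ y ∈ Submodule.span ℂ (negVec H α) := Iff.rfl

theorem mem_nm_of {hb : IsBase H α} {χ : Module.Dual ℂ H} (h : IsPosRoot H α χ) {y : L}
    (hy : y ∈ rootSpace H ⇑(-χ)) : y ∈ nm hb := Submodule.subset_span ⟨χ, h, hy⟩

/-- Triangular projections. -/
theorem exists_proj (hb : IsBase H α) : ∃ (p : L →ₗ[ℂ] nm hb) (q : L →ₗ[ℂ] H),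
    (∀ y : nm hb, p y = y) ∧ (∀ h : H, p h = 0) ∧
    (∀ χ, IsPosRoot H α χ → ∀ z ∈ rootSpace H ⇑χ, p z = 0) ∧
    (∀ y : nm hb, q y = 0) ∧ (∀ h : H, q h = h) ∧
    (∀ χ, IsPosRoot H α χ → ∀ z ∈ rootSpace H ⇑χ, q z = 0) := by
  obtain ⟨x, y, n, b, b', D⟩ := exists_DF H
  have hroot : ∀ i : RI H, IsRoot H ((RS H).root i) := fun i => isRoot_iff_rootSystem.2 ⟨i, rfl⟩
  let xx : RI H → nm hb := fun i =>
    if h : IsPosRoot H α (-(RS H).root i) then ⟨x i, mem_nm_of h (by rw [neg_neg]; exact D.hx i)⟩ else 0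
  let p : L →ₗ[ℂ] nm hb := ∑ i, (killingForm ℂ L (y i)).smulRight (xx i)
  let q : L →ₗ[ℂ] H := ∑ k, (killingForm ℂ L (b' k : L)).smulRight (b k)
  have hp : ∀ z, p z = ∑ i, killingForm ℂ L (y i) z • xx i := by intro z; simp [p, LinearMap.sum_apply]
  have hq : ∀ z, q z = ∑ k, killingForm ℂ L (b' k : L) z • b k := by intro z; simp [q, LinearMap.sum_apply]
  have o2 : ∀ (i : RI H) (h : H), killingForm ℂ L (y i) (h : L) = 0 := fun i h =>
    kap_zero (D.hy i) (coe_mem_rootSpace_zero h) (by rw [add_zero, neg_ne_zero]; exact (hroot i).1)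
  have o3 : ∀ {χ : Module.Dual ℂ H} (_ : IsRoot H χ) {z : L} (_ : z ∈ rootSpace H ⇑χ) (h : H),
      killingForm ℂ L (h : L) z = 0 := fun hχ z hz h =>
    kap_zero (coe_mem_rootSpace_zero h) hz (by rw [zero_add]; exact hχ.1)
  have o4 : ∀ {χ : Module.Dual ℂ H} (i : RI H) {z : L} (_ : z ∈ rootSpace H ⇑χ) (_ : (RS H).root i ≠ χ),
      killingForm ℂ L (y i) z = 0 := fun i z hz hne =>
    kap_zero (D.hy i) hz (by rw [neg_add_eq_sub, sub_ne_zero]; exact hne.symm)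
  have q0 : ∀ {χ : Module.Dual ℂ H} (_ : IsRoot H χ) {z : L} (_ : z ∈ rootSpace H ⇑χ), q z = 0 := by
    intro χ hχ z hz
    rw [hq]
    exact Finset.sum_eq_zero fun k _ => by rw [o3 hχ hz, zero_smul]
  refine ⟨p, q, ?_, ?_, ?_, ?_, ?_, ?_⟩
  · rintro ⟨z, hz⟩
    have key : ((nm hb).toSubmodule.subtype ∘ₗ p) z = z := by
      have hz' : z ∈ Submodule.span ℂ (negVec H α) := hz
      clear hz
      induction hz' using Submodule.span_induction with
      | mem z h =>
        obtain ⟨χ, h1, h2⟩ := h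
        have e1 := D.exp1 z
        simp only [o3 (isRoot_neg h1.1) h2, zero_smul, Finset.sum_const_zero, add_zero] at e1
        show ((p z : nm hb) : L) = z
        rw [hp]
        conv_rhs => rw [e1]
        have : ((∑ i, killingForm ℂ L (y i) z • xx i : nm hb) : L)
            = ∑ i, killingForm ℂ L (y i) z • (xx i : L) := by simp
        rw [this]
        refine Finset.sum_congr rfl fun i _ => ?_
        by_cases hi : (RS H).root i = -χ
        · have : IsPosRoot H α (-(RS H).root i) := by rw [hi, neg_neg]; exact h1
          simp only [xx]
          rw [dif_pos this]
        · rw [o4 i h2 hi, zero_smul, zero_smul]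
      | zero => simp
      | add a b _ _ ha hb => rw [map_add, ha, hb]
      | smul c a _ ha => rw [map_smul, ha]
    exact Subtype.ext key
  · intro h
    rw [hp]
    exact Finset.sum_eq_zero fun k _ => by rw [o2, zero_smul]
  · intro χ hχ z hz
    rw [hp]
    refine Finset.sum_eq_zero fun i _ => ?_
    by_cases hi : (RS H).root i = χ
    · simp only [xx]
      rw [dif_neg, smul_zero]
      rw [hi]; exact not_pos_neg hb hχ
    · rw [o4 i hz hi, zero_smul]
  · rintro ⟨z, hz⟩
    have hz' : z ∈ Submodule.span ℂ (negVec H α) := hz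
    show q z = 0
    clear hz
    induction hz' using Submodule.span_induction with
    | mem z h => obtain ⟨χ, h1, h2⟩ := h; exact q0 (isRoot_neg h1.1) h2
    | zero => simp
    | add a b _ _ ha hb => rw [map_add, ha, hb, add_zero]
    | smul c a _ ha => rw [map_smul, ha, smul_zero]
  · intro h
    apply Subtype.ext
    have e1 := D.exp1 (h : L)
    simp only [o2, zero_smul, Finset.sum_const_zero, zero_add] at e1
    conv_rhs => rw [e1]
    rw [hq]; simp
  · intro χ hχ z hz
    exact q0 hχ.1 hz

attribute [local instance] LieRing.ofAssociativeRing

/-- Left induction principle for enveloping algebras. -/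
theorem uea_induction {n : Type} [LieRing n] [LieAlgebra ℂ n]
    (S : Submodule ℂ (UniversalEnvelopingAlgebra ℂ n)) (h1 : (1 : UniversalEnvelopingAlgebra ℂ n) ∈ S)
    (hm : ∀ (y : n), ∀ a ∈ S, UniversalEnvelopingAlgebra.ι ℂ y * a ∈ S)
    (a : UniversalEnvelopingAlgebra ℂ n) : a ∈ S := by
  let T : Subalgebra ℂ (UniversalEnvelopingAlgebra ℂ n) :=
    { carrier := {u | ∀ a ∈ S, u * a ∈ S}
      mul_mem' := by
        intro u v hu hv a ha
        rw [mul_assoc]; exact hu _ (hv _ ha)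
      add_mem' := by
        intro u v hu hv a ha
        rw [add_mul]; exact S.add_mem (hu _ ha) (hv _ ha)
      algebraMap_mem' := by
        intro c a ha
        rw [← Algebra.smul_def]; exact S.smul_mem _ ha }
  let j : n →ₗ⁅ℂ⁆ T :=
    { toFun := fun y => ⟨UniversalEnvelopingAlgebra.ι ℂ y, fun a ha => hm y a ha⟩
      map_add' := fun x y => Subtype.ext (by simp)
      map_smul' := fun c x => Subtype.ext (by simp)
      map_lie' := fun {x y} => Subtype.ext (by simp [LieRing.of_associative_ring_bracket]) }
  have h2 : (T.val).comp (UniversalEnvelopingAlgebra.lift ℂ j) = AlgHom.id ℂ _ := by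
    apply UniversalEnvelopingAlgebra.hom_ext
    ext y
    simp [j]
  have h3 := AlgHom.congr_fun h2 a
  have h4 : a ∈ T := by
    have h5 : (UniversalEnvelopingAlgebra.lift ℂ j a : UniversalEnvelopingAlgebra ℂ n) = a := h3
    rw [← h5]; exact Subtype.property _
  simpa using h4 1 h1

/-- Existence of Verma modules, with the universal property. -/
theorem exists_verma (hb : IsBase H α) (mu : Module.Dual ℂ H) :
    ∃ (M : Type) (_ : AddCommGroup M) (_ : Module ℂ M) (_ : LieRingModule L M) (_ : LieModule ℂ L M)
      (m : M), IsHW H α mu m ∧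
      (∀ S : Submodule ℂ M, m ∈ S → (∀ y ∈ negVec H α, ∀ a ∈ S, ⁅y, a⁆ ∈ S) → S = ⊤) ∧
      (∀ (X : Type) [AddCommGroup X] [Module ℂ X] [LieRingModule L X] [LieModule ℂ L X] (x : X),
        ∃ g : M →ₗ[ℂ] X, g m = x ∧ ∀ y ∈ negVec H α, ∀ a, g ⁅y, a⁆ = ⁅y, g a⁆) := by
  obtain ⟨p, q, p1, p2, p3, q1, q2, q3⟩ := exists_proj hb
  let N := nm hb
  let U := UniversalEnvelopingAlgebra ℂ N
  let i : N →ₗ⁅ℂ⁆ U := UniversalEnvelopingAlgebra.ι ℂ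
  let π : L →ₗ[ℂ] U := (i : N →ₗ[ℂ] U) ∘ₗ p + (mu ∘ₗ q).smulRight (1 : U)
  have hπ : ∀ z, π z = i (p z) + mu (q z) • (1 : U) := fun z => by simp [π]
  let A : N →ₗ⁅ℂ⁆ Module.End ℂ (L →ₗ[ℂ] U) :=
    { toFun := fun y =>
        { toFun := fun φ => LinearMap.mulLeft ℂ (i y) ∘ₗ φ - φ ∘ₗ (toEnd ℂ L L (y : L))
          map_add' := fun φ ψ => by ext z; simp [mul_add]; abel
          map_smul' := fun c φ => by ext z; simp [smul_sub] }
      map_add' := fun y y' => by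
        ext φ z; simp [add_mul]; abel
      map_smul' := fun c y => by
        ext φ z; simp [smul_sub]
      map_lie' := fun {y y'} => by
        ext φ z
        simp [LieRing.of_associative_ring_bracket, mul_sub, sub_mul, mul_assoc]
        abel }
  have hA : ∀ y φ z, A y φ z = i y * φ z - φ ⁅(y : L), z⁆ := fun y φ z => rfl
  let B := UniversalEnvelopingAlgebra.lift ℂ A
  let act : L → U → U := fun z a => B a π z
  have act_1 : ∀ z, act z 1 = π z := fun z => by simp [act]
  have act_mul : ∀ z y a, act z (i y * a) = i y * act z a - act ⁅(y : L), z⁆ a := by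
    intro z y a
    simp only [act, map_mul]
    have : B (i y) = A y := UniversalEnvelopingAlgebra.lift_ι_apply ℂ A y
    rw [this]
    rfl
  have act_add : ∀ z a a', act z (a + a') = act z a + act z a' := fun z a a' => by simp [act]
  have act_smul : ∀ z (c : ℂ) a, act z (c • a) = c • act z a := fun z c a => by simp [act]
  have act_zero : ∀ z, act z 0 = 0 := fun z => by simp [act]
  have add_act : ∀ z z' a, act (z + z') a = act z a + act z' a := fun z z' a => by simp [act]
  have smul_act : ∀ (c : ℂ) z a, act (c • z) a = c • act z a := fun c z a => by simp [act]
  have act_sub : ∀ z a a', act z (a - a') = act z a - act z a' := fun z a a' => by simp [act]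
  have neg_act : ∀ z a, act (-z) a = - act z a := fun z a => by simp [act]
  have πN : ∀ y : N, π y = i y := fun y => by rw [hπ, p1, q1]; simp
  have actN : ∀ (y : N) a, act y a = i y * a := by
    intro y a
    let S : Submodule ℂ U :=
      { carrier := {a | ∀ y : N, act y a = i y * a}
        add_mem' := by intro a b ha hb y; rw [act_add, ha, hb, mul_add]
        zero_mem' := by intro y; rw [act_zero, mul_zero]
        smul_mem' := by intro c a ha y; rw [act_smul, ha, mul_smul_comm] }
    refine uea_induction S ?_ ?_ a y
    · intro y; rw [act_1, πN, mul_one]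
    · intro y' a ha y
      show act y (i y' * a) = i y * (i y' * a)
      rw [act_mul, ha]
      have h1 : act ⁅(y' : L), (y : L)⁆ a = i ⁅y', y⁆ * a := ha ⁅y', y⁆
      rw [h1, LieHom.map_lie, LieRing.of_associative_ring_bracket]
      rw [sub_mul, mul_assoc, mul_assoc]; abel
  have act_lie : ∀ a z z', act ⁅z, z'⁆ a = act z (act z' a) - act z' (act z a) := by
    intro a
    let S : Submodule ℂ U :=
      { carrier := {a | ∀ z z', act ⁅z, z'⁆ a = act z (act z' a) - act z' (act z a)}
        add_mem' := by intro a b ha hb z z'; simp only [act_add, ha z z', hb z z']; abel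
        zero_mem' := by intro z z'; simp only [act_zero, sub_zero]
        smul_mem' := by intro c a ha z z'; simp only [act_smul, ha z z', smul_sub] }
    refine uea_induction S ?_ ?_ a
    · show ∀ z z', act ⁅z, z'⁆ 1 = act z (act z' 1) - act z' (act z 1)
      -- case analysis
      have c1 : ∀ (z : L) (y : N), act ⁅z, (y : L)⁆ 1 = act z (act y 1) - act y (act z 1) := by
        intro z y
        rw [actN, act_mul, actN, ← lie_skew, neg_act]
        abel
      have c1' : ∀ (z : L) (y : N), act ⁅(y : L), z⁆ 1 = act y (act z 1) - act z (act y 1) := by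
        intro z y
        rw [← lie_skew, neg_act, c1]; abel
      have πP : ∀ χ, IsPosRoot H α χ → ∀ z ∈ rootSpace H ⇑χ, π z = 0 := by
        intro χ hχ z hz; rw [hπ, p3 χ hχ z hz, q3 χ hχ z hz]; simp
      have πH : ∀ h : H, π h = mu h • (1 : U) := by
        intro h; rw [hπ, p2, q2]; simp
      have aux : ∀ (z z' : L) (c c' : ℂ), π z = c • (1 : U) → π z' = c' • (1 : U) → π ⁅z, z'⁆ = 0 →
          act ⁅z, z'⁆ 1 = act z (act z' 1) - act z' (act z 1) := by
        intro z z' c c' h1 h2 h3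
        rw [act_1, act_1, act_1, h1, h2, h3, act_smul, act_smul, act_1, act_1, h1, h2, smul_comm, sub_self]
      have red : ∀ (z' : L), (∀ z : H, act ⁅(z : L), z'⁆ 1 = act z (act z' 1) - act z' (act z 1)) →
          (∀ χ, IsPosRoot H α χ → ∀ z ∈ rootSpace H ⇑χ,
            act ⁅z, z'⁆ 1 = act z (act z' 1) - act z' (act z 1)) →
          ∀ z, act ⁅z, z'⁆ 1 = act z (act z' 1) - act z' (act z 1) := by
        intro z' h1 h2 z
        let T : Submodule ℂ L :=
          { carrier := {z | act ⁅z, z'⁆ 1 = act z (act z' 1) - act z' (act z 1)}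
            add_mem' := by
              intro a b ha hb
              have ha' : act ⁅a, z'⁆ 1 = act a (act z' 1) - act z' (act a 1) := ha
              have hb' : act ⁅b, z'⁆ 1 = act b (act z' 1) - act z' (act b 1) := hb
              show act ⁅a + b, z'⁆ 1 = act (a + b) (act z' 1) - act z' (act (a + b) 1)
              simp only [add_lie, add_act, act_add, ha', hb']; abel
            zero_mem' := by
              show act ⁅0, z'⁆ 1 = act 0 (act z' 1) - act z' (act 0 1)
              have : ∀ a, act 0 a = 0 := fun a => by simp [act]
              simp only [zero_lie, this, act_zero, sub_zero]
            smul_mem' := by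
              intro c a ha
              have ha' : act ⁅a, z'⁆ 1 = act a (act z' 1) - act z' (act a 1) := ha
              show act ⁅c • a, z'⁆ 1 = act (c • a) (act z' 1) - act z' (act (c • a) 1)
              simp only [smul_lie, smul_act, act_smul, ha', smul_sub] }
        refine span_induction_L (H := H) (S := T) h1 ?_ z
        intro χ hχ w hw
        rcases pos_or_neg hb hχ with h | h
        · exact h2 χ h w hw
        · have hw' : w ∈ nm hb := mem_nm_of h (by rw [neg_neg]; exact hw)
          exact c1' z' ⟨w, hw'⟩
      have sw : ∀ z z', act ⁅z', z⁆ 1 = act z' (act z 1) - act z (act z' 1) →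
          act ⁅z, z'⁆ 1 = act z (act z' 1) - act z' (act z 1) := by
        intro z z' h
        rw [← lie_skew, neg_act, h]; abel
      have main : ∀ z, (∀ h : H, act ⁅z, (h : L)⁆ 1 = act z (act h 1) - act h (act z 1)) →
          (∀ χ, IsPosRoot H α χ → ∀ w ∈ rootSpace H ⇑χ,
            act ⁅z, w⁆ 1 = act z (act w 1) - act w (act z 1)) →
          ∀ z', act ⁅z, z'⁆ 1 = act z (act z' 1) - act z' (act z 1) := by
        intro z h1 h2 z'
        apply sw
        exact red z (fun h => sw _ _ (h1 h)) (fun χ hχ w hw => sw _ _ (h2 χ hχ w hw)) z'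
      intro z z'
      revert z
      refine red z' ?_ ?_
      · intro h
        refine main h ?_ ?_ z'
        · intro h'
          exact aux h h' _ _ (πH h) (πH h') (by rw [cartan_comm, map_zero])
        · intro χ hχ w hw
          refine aux h w _ 0 (πH h) (by rw [πP χ hχ w hw, zero_smul]) ?_
          rw [mem_rootSpace_iff.1 hw h, map_smul, πP χ hχ w hw, smul_zero]
      · intro χ hχ z hz
        refine main z ?_ ?_ z'
        · intro h
          refine aux z h 0 _ (by rw [πP χ hχ z hz, zero_smul]) (πH h) ?_
          rw [← lie_skew, mem_rootSpace_iff.1 hz h, map_neg, map_smul, πP χ hχ z hz, smul_zero, neg_zero]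
        · intro ψ hψ w hw
          refine aux z w 0 0 (by rw [πP χ hχ z hz, zero_smul]) (by rw [πP ψ hψ w hw, zero_smul]) ?_
          rcases lie_pos_pos hb hχ hψ hz hw with h | ⟨h1, h2⟩
          · rw [h, map_zero]
          · exact πP _ h1 _ h2
    · intro y a ha
      have ha' : ∀ z z', act ⁅z, z'⁆ a = act z (act z' a) - act z' (act z a) := ha
      show ∀ z z', act ⁅z, z'⁆ (i y * a) = act z (act z' (i y * a)) - act z' (act z (i y * a))
      intro z z'
      simp only [act_mul, act_sub]
      have h1 : act ⁅(y : L), ⁅z, z'⁆⁆ a = act ⁅⁅(y : L), z⁆, z'⁆ a + act ⁅z, ⁅(y : L), z'⁆⁆ a := by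
        rw [leibniz_lie, add_act]
      rw [h1, ha' z z', ha' _ z', ha' z _, mul_sub]
      abel
  let i1 : LieRingModule L U :=
    { bracket := act
      add_lie := fun z z' a => add_act z z' a
      lie_add := fun z a a' => act_add z a a'
      leibniz_lie := fun z z' a => by
        show act z (act z' a) = act ⁅z, z'⁆ a + act z' (act z a)
        rw [act_lie]; abel }
  let i2 : LieModule ℂ L U :=
    { smul_lie := fun c z a => smul_act c z a
      lie_smul := fun c z a => act_smul z c a }
  have brN : ∀ (y : L) (hy : y ∈ negVec H α) (a : U), ⁅y, a⁆ = i ⟨y, Submodule.subset_span hy⟩ * a :=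
    fun y hy a => actN ⟨y, Submodule.subset_span hy⟩ a
  refine ⟨U, inferInstance, inferInstance, i1, i2, 1, ⟨?_, ?_⟩, ?_, ?_⟩
  · intro h
    show act h 1 = _
    rw [act_1, hπ, p2, q2]; simp
  · intro χ hχ z hz
    show act z 1 = _
    rw [act_1, hπ, p3 χ hχ z hz, q3 χ hχ z hz]; simp
  · intro S h1 hS
    rw [eq_top_iff]
    intro a _
    refine uea_induction S h1 ?_ a
    rintro ⟨y, hy⟩ a ha
    have hy' : y ∈ Submodule.span ℂ (negVec H α) := hy
    have key : ∀ y (hy : y ∈ Submodule.span ℂ (negVec H α)), i ⟨y, hy⟩ * a ∈ S := by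
      intro y hy
      rw [← actN ⟨y, hy⟩ a]
      show act y a ∈ S
      induction hy using Submodule.span_induction with
      | mem y hy => exact hS y hy a ha
      | zero =>
        have : act 0 a = 0 := by simp [act]
        rw [this]; exact S.zero_mem
      | add y y' _ _ h h' => rw [add_act]; exact S.add_mem h h'
      | smul c y _ h => rw [smul_act]; exact S.smul_mem _ h
    exact key y hy'
  · intro X _ _ _ _ x
    let j : N →ₗ⁅ℂ⁆ Module.End ℂ X := (toEnd ℂ L X).comp N.incl
    let G : U →ₐ[ℂ] Module.End ℂ X := UniversalEnvelopingAlgebra.lift ℂ j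
    refine ⟨(LinearMap.applyₗ x) ∘ₗ G.toLinearMap, by simp, ?_⟩
    intro y hy a
    rw [brN y hy a]
    have : G (i ⟨y, Submodule.subset_span hy⟩) = j ⟨y, Submodule.subset_span hy⟩ :=
      UniversalEnvelopingAlgebra.lift_ι_apply ℂ j _
    simp [this, j]

end Part4

section Part5

variable [FiniteDimensional ℂ L] [LieAlgebra.IsSemisimple ℂ L]
  {H : LieSubalgebra ℂ L} [H.IsCartanSubalgebra]
  {r : ℕ} {α : Fin r → Module.Dual ℂ H} {hc : Fin r → H} {e f : Fin r → L}
  {X : Type} [AddCommGroup X] [Module ℂ X] [LieRingModule L X] [LieModule ℂ L X]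
  {Y : Type} [AddCommGroup Y] [Module ℂ Y] [LieRingModule L Y] [LieModule ℂ L Y]

/-- Weight spaces (genuine eigenspaces). -/
def wt (H : LieSubalgebra ℂ L) (X : Type) [AddCommGroup X] [Module ℂ X] [LieRingModule L X]
    [LieModule ℂ L X] (lam : Module.Dual ℂ H) : Submodule ℂ X where
  carrier := {u | ∀ h : H, ⁅(h : L), u⁆ = lam h • u}
  add_mem' := by intro a b ha hb h; rw [lie_add, ha, hb, smul_add]
  zero_mem' := by intro h; rw [lie_zero, smul_zero]
  smul_mem' := by intro c a ha h; rw [lie_smul, ha, smul_comm]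

theorem mem_wt {lam : Module.Dual ℂ H} {u : X} :
    u ∈ wt H X lam ↔ ∀ h : H, ⁅(h : L), u⁆ = lam h • u := Iff.rfl

theorem lie_mem_wt {χ lam : Module.Dual ℂ H} {x : L} {u : X} (hx : x ∈ rootSpace H ⇑χ)
    (hu : u ∈ wt H X lam) : ⁅x, u⁆ ∈ wt H X (lam + χ) := by
  intro h
  rw [leibniz_lie, mem_rootSpace_iff.1 hx h, hu h, smul_lie, lie_smul, ← add_smul, LinearMap.add_apply,
    add_comm]

theorem lie_mem_wt_neg {χ lam : Module.Dual ℂ H} {x : L} {u : X} (hx : x ∈ rootSpace H ⇑(-χ))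
    (hu : u ∈ wt H X lam) : ⁅x, u⁆ ∈ wt H X (lam - χ) := by
  rw [sub_eq_add_neg]; exact lie_mem_wt hx hu

theorem wt_unique {lam mu : Module.Dual ℂ H} {u : X} (h1 : u ∈ wt H X lam) (h2 : u ∈ wt H X mu)
    (h0 : u ≠ 0) : lam = mu := by
  ext h
  exact smul_left_injective ℂ h0 ((h1 h).symm.trans (h2 h))

theorem wt_stable (lam : Module.Dual ℂ H) (h : H) (u : X) (hu : u ∈ wt H X lam) :
    ⁅(h : L), u⁆ ∈ wt H X lam := by
  rw [hu h]; exact Submodule.smul_mem _ _ hu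

theorem comp_mem {ι : Type} {K : Submodule ℂ X} (hK : ∀ (h : H), ∀ u ∈ K, ⁅(h : L), u⁆ ∈ K)
    (w : ι → Module.Dual ℂ H) (hw : Function.Injective w) (s : Finset ι) :
    ∀ (u : ι → X), (∀ i ∈ s, u i ∈ wt H X (w i)) → ∑ i ∈ s, u i ∈ K → ∀ i ∈ s, u i ∈ K := by
  induction s using Finset.induction_on with
  | empty => simp
  | insert a s ha ih =>
    intro u hu hsum
    rw [Finset.sum_insert ha] at hsum
    have hs : ∀ i ∈ s, u i ∈ K := by
      intro i hi
      have hne : w i ≠ w a := fun h => ha (hw h ▸ hi)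
      obtain ⟨h, hh⟩ : ∃ h, w i h ≠ w a h := by
        by_contra hcon; push Not at hcon; exact hne (LinearMap.ext hcon)
      have h1 : ∑ i ∈ s, (w i h - w a h) • u i ∈ K := by
        have h2 := K.sub_mem (hK h _ hsum) (K.smul_mem (w a h) hsum)
        convert h2 using 1
        rw [lie_add, hu a (Finset.mem_insert_self _ _) h, smul_add, add_sub_add_left_eq_sub,
          lie_sum, Finset.smul_sum, ← Finset.sum_sub_distrib]
        refine Finset.sum_congr rfl fun k hk => ?_
        rw [hu k (Finset.mem_insert_of_mem hk) h, sub_smul]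
      have h3 := ih (fun i => (w i h - w a h) • u i)
        (fun k hk => Submodule.smul_mem _ _ (hu k (Finset.mem_insert_of_mem hk))) h1 i hi
      exact (Submodule.smul_mem_iff _ (sub_ne_zero.2 hh)).1 h3
    intro i hi
    rcases Finset.mem_insert.1 hi with rfl | hi
    · have := K.sub_mem hsum (K.sum_mem hs)
      simpa using this
    · exact hs i hi

/-- The weights `μ - ∑ n_j α_j`. -/
noncomputable def wtm (α : Fin r → Module.Dual ℂ H) (mu : Module.Dual ℂ H) (n : Fin r → ℕ) :
    Module.Dual ℂ H := mu - ∑ j, (n j : ℂ) • α j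

theorem wtm_inj (hb : IsBase H α) (mu : Module.Dual ℂ H) : Function.Injective (wtm α mu) := by
  intro n n' h
  have h1 : ∑ j, (n j : ℂ) • α j = ∑ j, (n' j : ℂ) • α j := by
    simpa [wtm] using h
  have h2 := coeff_unique hb h1
  funext j
  exact_mod_cast congrFun h2 j

theorem wtm_zero (mu : Module.Dual ℂ H) : wtm α mu 0 = mu := by simp [wtm]

theorem wtm_add (mu : Module.Dual ℂ H) (n c : Fin r → ℕ) :
    wtm α mu n - ∑ j, (c j : ℂ) • α j = wtm α mu (n + c) := by
  simp [wtm, add_smul, Finset.sum_add_distrib]; abel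

/-- `m` generates `X` over the negative nilpotent part. -/
def NGen (H : LieSubalgebra ℂ L) [H.IsCartanSubalgebra] {r : ℕ} (α : Fin r → Module.Dual ℂ H) (m : X) : Prop :=
  ∀ S : Submodule ℂ X, m ∈ S → (∀ y ∈ negVec H α, ∀ a ∈ S, ⁅y, a⁆ ∈ S) → S = ⊤

theorem NGen.support (hb : IsBase H α) {mu : Module.Dual ℂ H} {m : X} (hm : m ∈ wt H X mu)
    (hg : NGen H α m) (x : X) : ∃ u : (Fin r → ℕ) →₀ X, x = u.sum (fun _ a => a) ∧
      (∀ n, u n ∈ wt H X (wtm α mu n)) ∧ ∃ c : ℂ, u 0 = c • m := by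
  let S : Submodule ℂ X :=
    { carrier := {x | ∃ u : (Fin r → ℕ) →₀ X, x = u.sum (fun _ a => a) ∧
        (∀ n, u n ∈ wt H X (wtm α mu n)) ∧ ∃ c : ℂ, u 0 = c • m}
      add_mem' := by
        rintro _ _ ⟨u, rfl, hu, c, hc⟩ ⟨u', rfl, hu', c', hc'⟩
        refine ⟨u + u', ?_, fun n => Submodule.add_mem _ (hu n) (hu' n), c + c', ?_⟩
        · rw [Finsupp.sum_add_index'] <;> simp
        · rw [Finsupp.add_apply, hc, hc', add_smul]
      zero_mem' := ⟨0, by simp, fun n => Submodule.zero_mem _, 0, by simp⟩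
      smul_mem' := by
        rintro t _ ⟨u, rfl, hu, c, hc⟩
        refine ⟨t • u, ?_, fun n => Submodule.smul_mem _ _ (hu n), t * c, ?_⟩
        · rw [Finsupp.sum_smul_index' (by simp), Finsupp.smul_sum]
        · rw [Finsupp.smul_apply, hc, mul_smul] }
  have key : S = ⊤ := by
    apply hg
    · refine ⟨Finsupp.single 0 m, by simp, fun n => ?_, 1, by simp⟩
      by_cases h : n = 0
      · subst h; rw [wtm_zero]; simpa using hm
      · rw [Finsupp.single_apply, if_neg (Ne.symm h)]; exact Submodule.zero_mem _
    · rintro y ⟨χ, hχ, hy⟩ _ ⟨u, rfl, hu, c, hc⟩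
      rw [Finsupp.sum, lie_sum]
      refine Submodule.sum_mem _ fun n _ => ?_
      obtain ⟨hR, d, hd⟩ := hχ
      have h1 : ⁅y, u n⁆ ∈ wt H X (wtm α mu (n + d)) := by
        rw [← wtm_add, ← hd]; exact lie_mem_wt_neg hy (hu n)
      have h0 : n + d ≠ 0 := by
        intro h
        have : d = 0 := by
          funext j; have := congrFun h j; simp at this; simp [this.2]
        apply hR.1; rw [hd, this]; simp
      refine ⟨Finsupp.single (n + d) ⁅y, u n⁆, by simp, fun k => ?_, 0, ?_⟩
      · by_cases h : k = n + d
        · subst h; simpa using h1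
        · rw [Finsupp.single_apply, if_neg (Ne.symm h)]; exact Submodule.zero_mem _
      · rw [Finsupp.single_apply, if_neg h0, zero_smul]
  have : x ∈ S := by rw [key]; trivial
  exact this

theorem NGen.wt_mem (hb : IsBase H α) {mu : Module.Dual ℂ H} {m : X} (hm : m ∈ wt H X mu)
    (hg : NGen H α m) {lam : Module.Dual ℂ H} {x : X} (hx : x ∈ wt H X lam) (hx0 : x ≠ 0) :
    ∃ n, lam = wtm α mu n := by
  obtain ⟨u, h1, h2, -⟩ := hg.support hb hm x
  have h3 := comp_mem (K := wt H X lam) (wt_stable lam) (wtm α mu) (wtm_inj hb mu) u.support u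
    (fun n _ => h2 n) (by rw [h1] at hx; exact hx)
  by_contra hcon
  push Not at hcon
  apply hx0
  rw [h1, Finsupp.sum]
  refine Finset.sum_eq_zero fun n hn => ?_
  by_contra h0
  exact hcon n (wt_unique (h3 n hn) (h2 n) h0)

theorem IsHW.mem_wt {lam : Module.Dual ℂ H} {u : X} (h : IsHW H α lam u) : u ∈ wt H X lam := h.1

theorem hw_span (hb : IsBase H α) (U : Set X) (hU : ∀ u ∈ U, ∃ lam, IsHW H α lam u) :
    ∃ I : LieSubmodule ℂ L X, U ⊆ I ∧ ∀ S : Submodule ℂ X, U ⊆ S →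
      (∀ y ∈ negVec H α, ∀ a ∈ S, ⁅y, a⁆ ∈ S) → (I : Submodule ℂ X) ≤ S := by
  let S : Submodule ℂ X := sInf {S | U ⊆ S ∧ ∀ y ∈ negVec H α, ∀ a ∈ S, ⁅y, a⁆ ∈ S}
  have hUS : U ⊆ S := by
    intro u hu
    exact Submodule.mem_sInf.2 fun T hT => hT.1 hu
  have hNS : ∀ y ∈ negVec H α, ∀ a ∈ S, ⁅y, a⁆ ∈ S := by
    intro y hy a ha
    exact Submodule.mem_sInf.2 fun T hT => hT.2 y hy a (Submodule.mem_sInf.1 ha T hT)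
  have hmin : ∀ T : Submodule ℂ X, U ⊆ T → (∀ y ∈ negVec H α, ∀ a ∈ T, ⁅y, a⁆ ∈ T) → S ≤ T :=
    fun T h1 h2 => sInf_le ⟨h1, h2⟩
  let T : Submodule ℂ X :=
    { carrier := {u | u ∈ S ∧ ∀ z : L, ⁅z, u⁆ ∈ S}
      add_mem' := fun {a b} ha hb => ⟨S.add_mem ha.1 hb.1, fun z => by
        rw [lie_add]; exact S.add_mem (ha.2 z) (hb.2 z)⟩
      zero_mem' := ⟨S.zero_mem, fun z => by rw [lie_zero]; exact S.zero_mem⟩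
      smul_mem' := fun c a ha => ⟨S.smul_mem _ ha.1, fun z => by
        rw [lie_smul]; exact S.smul_mem _ (ha.2 z)⟩ }
  have hST : S ≤ T := by
    apply hmin
    · intro u hu
      refine ⟨hUS hu, fun z => ?_⟩
      obtain ⟨lam, h1, h2⟩ := hU u hu
      let Q : Submodule ℂ L :=
        { carrier := {z | ⁅z, u⁆ ∈ S}
          add_mem' := fun {a b} (ha : ⁅a, u⁆ ∈ S) (hb : ⁅b, u⁆ ∈ S) => by
            show ⁅a + b, u⁆ ∈ S
            rw [add_lie]; exact S.add_mem ha hb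
          zero_mem' := by show ⁅(0 : L), u⁆ ∈ S; rw [zero_lie]; exact S.zero_mem
          smul_mem' := fun c a (ha : ⁅a, u⁆ ∈ S) => by
            show ⁅c • a, u⁆ ∈ S
            rw [smul_lie]; exact S.smul_mem _ ha }
      refine span_induction_L (H := H) (S := Q) ?_ ?_ z
      · intro h
        show ⁅(h : L), u⁆ ∈ S
        rw [h1]; exact S.smul_mem _ (hUS hu)
      · intro χ hχ x hx
        show ⁅x, u⁆ ∈ S
        rcases pos_or_neg hb hχ with h | h
        · rw [h2 χ h x hx]; exact S.zero_mem
        · exact hNS x ⟨-χ, h, by rw [neg_neg]; exact hx⟩ u (hUS hu)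
    · intro y hy a ha
      refine ⟨hNS y hy a ha.1, fun z => ?_⟩
      rw [leibniz_lie]
      exact S.add_mem (ha.2 _) (hNS y hy _ (ha.2 z))
  exact ⟨{ S with lie_mem := fun {z u} hu => (hST hu).2 z }, hUS, hmin⟩

theorem equivariant_of_hw (hb : IsBase H α) {mu : Module.Dual ℂ H} {m : X} (hm : IsHW H α mu m)
    (hg : NGen H α m) (g : X →ₗ[ℂ] Y) (hgm : IsHW H α mu (g m))
    (hn : ∀ y ∈ negVec H α, ∀ a, g ⁅y, a⁆ = ⁅y, g a⁆) (z : L) (a : X) : g ⁅z, a⁆ = ⁅z, g a⁆ := by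
  let T : Submodule ℂ X :=
    { carrier := {u | ∀ z : L, g ⁅z, u⁆ = ⁅z, g u⁆}
      add_mem' := fun {a b} ha hb z => by rw [lie_add, map_add, ha, hb, map_add, lie_add]
      zero_mem' := fun z => by simp
      smul_mem' := fun c a ha z => by rw [lie_smul, map_smul, ha, map_smul, lie_smul] }
  have key : T = ⊤ := by
    apply hg
    · intro z
      let Q : Submodule ℂ L :=
        { carrier := {z | g ⁅z, m⁆ = ⁅z, g m⁆}
          add_mem' := fun {a b} (ha : g ⁅a, m⁆ = ⁅a, g m⁆) (hb : g ⁅b, m⁆ = ⁅b, g m⁆) => by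
            show g ⁅a + b, m⁆ = ⁅a + b, g m⁆
            rw [add_lie, map_add, ha, hb, add_lie]
          zero_mem' := by show g ⁅(0 : L), m⁆ = ⁅(0 : L), g m⁆; simp
          smul_mem' := fun c a (ha : g ⁅a, m⁆ = ⁅a, g m⁆) => by
            show g ⁅c • a, m⁆ = ⁅c • a, g m⁆
            rw [smul_lie, map_smul, ha, smul_lie] }
      refine span_induction_L (H := H) (S := Q) ?_ ?_ z
      · intro h
        show g ⁅(h : L), m⁆ = ⁅(h : L), g m⁆
        rw [hm.1, hgm.1, map_smul]
      · intro χ hχ x hx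
        show g ⁅x, m⁆ = ⁅x, g m⁆
        rcases pos_or_neg hb hχ with h | h
        · rw [hm.2 χ h x hx, hgm.2 χ h x hx, map_zero]
        · exact hn x ⟨-χ, h, by rw [neg_neg]; exact hx⟩ m
    · intro y hy a ha z
      rw [leibniz_lie, map_add, ha, hn y hy, ha, hn y hy, ← leibniz_lie]
  have : a ∈ T := by rw [key]; trivial
  exact this z

theorem nilp_ad (D : Setup H α hc e f) (i : Fin r) (y : L) :
    y ∈ (toEnd ℂ L L (f i)).maxGenEigenspace 0 := by
  have hne : (-(α i)) ≠ 0 := neg_ne_zero.2 (D.base.isRoot i).1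
  obtain ⟨k, hk⟩ := LieAlgebra.isNilpotent_ad_of_mem_rootSpace H (x := f i) (χ := ⇑(-(α i)))
    (fun h => hne (LinearMap.ext (congrFun h))) (D.hf i)
  rw [Module.End.mem_maxGenEigenspace]
  refine ⟨k, ?_⟩
  rw [zero_smul, sub_zero]
  have : (toEnd ℂ L L (f i)) = LieAlgebra.ad ℂ L (f i) := rfl
  rw [this, hk]; rfl

theorem NGen.loc_nilp (D : Setup H α hc e f) {m : X} (hg : NGen H α m) (i : Fin r)
    (hm : ∃ k, ((toEnd ℂ L X (f i)) ^ k) m = 0) (x : X) : ∃ k, ((toEnd ℂ L X (f i)) ^ k) x = 0 := by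
  have h1 : (toEnd ℂ L X (f i)).maxGenEigenspace 0 = ⊤ := by
    apply hg
    · rw [Module.End.mem_maxGenEigenspace]; simpa using hm
    · intro y _ a ha
      have := LieModule.lie_mem_maxGenEigenspace_toEnd (nilp_ad D i y) ha
      simpa using this
  have h2 : x ∈ (toEnd ℂ L X (f i)).maxGenEigenspace 0 := by rw [h1]; trivial
  rw [Module.End.mem_maxGenEigenspace] at h2
  simpa using h2

theorem Setup.prim (D : Setup H α hc e f) {lam : Module.Dual ℂ H} {u : X} (hu : IsHW H α lam u)
    (h0 : u ≠ 0) (i : Fin r) : (D.sl2 i).HasPrimitiveVectorWith u (lam (hc i)) where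
  ne_zero := h0
  lie_h := hu.1 (hc i)
  lie_e := hu.2 (α i) (isPosRoot_simple D.base i) _ (D.he i)

theorem Setup.dom_of_nilp (D : Setup H α hc e f) {lam : Module.Dual ℂ H} {u : X} (hu : IsHW H α lam u)
    (h0 : u ≠ 0) (hn : ∀ i, ∃ k, ((toEnd ℂ L X (f i)) ^ k) u = 0) : IsDomInt hc lam := by
  intro i
  have hex := hn i
  have h1 := Nat.find_spec hex
  have h2 : Nat.find hex ≠ 0 := by
    intro h; rw [h] at h1; exact h0 (by simpa using h1)
  obtain ⟨k, hk⟩ := Nat.exists_eq_succ_of_ne_zero h2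
  have h3 : ((toEnd ℂ L X (f i)) ^ k) u ≠ 0 := Nat.find_min hex (by omega)
  rw [hk] at h1
  have h4 := (D.prim hu h0 i).lie_e_pow_succ_toEnd_f k
  rw [h1, lie_zero] at h4
  refine ⟨k, ?_⟩
  rcases smul_eq_zero.1 h4.symm with h | h
  · rcases mul_eq_zero.1 h with h | h
    · exact absurd h (by exact_mod_cast Nat.succ_ne_zero k)
    · linear_combination h
  · exact absurd h h3

theorem NGen.lie_gen {m : X} (hg : NGen H α m) (S : LieSubmodule ℂ L X) (h : m ∈ S) : S = ⊤ := by
  have : (S : Submodule ℂ X) = ⊤ := hg _ h fun y _ a ha => S.lie_mem ha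
  simpa using this

theorem core_inj (D : Setup H α hc e f) {mu : Module.Dual ℂ H} (hmu : IsDomInt hc mu) {m : X}
    (hm : IsHW H α mu m) (hg : NGen H α m) (hnil : ∀ i, ∃ k, ((toEnd ℂ L X (f i)) ^ k) m = 0)
    (g : X →ₗ[ℂ] Y) (hgL : ∀ (z : L) a, g ⁅z, a⁆ = ⁅z, g a⁆) (hgm : g m ≠ 0) :
    Function.Injective g := by
  rw [← LinearMap.ker_eq_bot]
  by_contra hK
  have hex : ∃ N : ℕ, ∃ n : Fin r → ℕ, ∑ j, n j = N ∧ ∃ u ∈ LinearMap.ker g, u ≠ 0 ∧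
      u ∈ wt H X (wtm α mu n) := by
    obtain ⟨x, hx, hx0⟩ := Submodule.exists_mem_ne_zero_of_ne_bot hK
    obtain ⟨u, h1, h2, -⟩ := hg.support D.base hm.1 x
    have h3 := comp_mem (K := LinearMap.ker g) (fun h u hu => by
      rw [LinearMap.mem_ker] at hu ⊢; rw [hgL, hu, lie_zero]) (wtm α mu) (wtm_inj D.base mu) u.support u
      (fun n _ => h2 n) (by rw [h1] at hx; exact hx)
    have h4 : u.support.Nonempty := by
      rw [Finset.nonempty_iff_ne_empty]
      intro h
      apply hx0
      rw [h1, Finsupp.sum, h, Finset.sum_empty]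
    obtain ⟨n, hn⟩ := h4
    exact ⟨_, n, rfl, u n, h3 n hn, Finsupp.mem_support_iff.1 hn, h2 n⟩
  obtain ⟨n, hN, u, huK, hu0, hu⟩ := Nat.find_spec hex
  have hmin := fun k => Nat.find_min (H := hex) (m := k)
  have huHW : IsHW H α (wtm α mu n) u := by
    refine ⟨hu, fun χ hχ z hz => ?_⟩
    by_contra hne
    have h1 := lie_mem_wt hz hu
    obtain ⟨n', hn'⟩ := hg.wt_mem D.base hm.1 h1 hne
    obtain ⟨hR, c, hc'⟩ := hχ
    have h2 : wtm α mu n = wtm α mu (n' + c) := by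
      rw [← wtm_add, ← hn', ← hc', add_sub_cancel_right]
    have h3 := wtm_inj D.base mu h2
    have h4 : ∑ j, c j ≠ 0 := by
      intro h
      rw [Finset.sum_eq_zero_iff] at h
      apply hR.1; rw [hc']
      exact Finset.sum_eq_zero fun j hj => by rw [h j hj]; simp
    refine hmin (∑ j, n' j) ?_ ⟨n', rfl, ⁅z, u⁆, ?_, hne, hn' ▸ h1⟩
    · rw [← hN, h3]
      simp only [Pi.add_apply, Finset.sum_add_distrib]
      omega
    · rw [LinearMap.mem_ker] at huK ⊢; rw [hgL, huK, lie_zero]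
  have hdom : IsDomInt hc (wtm α mu n) := D.dom_of_nilp huHW hu0 fun i => hg.loc_nilp D i (hnil i) u
  have hcas := casVal_eq D.base hm hg.lie_gen huHW hu0
  have hn0 := D.casVal_inj n (mu := mu) (lam := wtm α mu n) (by simp [wtm]) hmu hdom hcas
  have hn0' : n = 0 := funext hn0
  subst hn0'
  obtain ⟨w, h1, h2, c, hc'⟩ := hg.support D.base hm.1 u
  have h3 := comp_mem (K := wt H X mu) (wt_stable mu) (wtm α mu) (wtm_inj D.base mu) w.support w
    (fun n _ => h2 n) (by rw [h1, wtm_zero] at hu; exact hu)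
  have h4 : u = c • m := by
    rw [h1, Finsupp.sum, ← hc']
    rw [Finset.sum_eq_single 0]
    · intro n hn hne
      by_contra h0
      apply hne
      apply wtm_inj D.base mu
      rw [wtm_zero]
      exact (wt_unique (h3 n hn) (h2 n) h0).symm
    · intro h; simpa using h
  have hc0 : c ≠ 0 := by rintro rfl; apply hu0; rw [h4, zero_smul]
  rw [h4, LinearMap.mem_ker, map_smul] at huK
  exact hgm ((smul_eq_zero.1 huK).resolve_left hc0)

theorem IsHW.pow_wt (D : Setup H α hc e f) {mu : Module.Dual ℂ H} {m : X} (hm : m ∈ wt H X mu)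
    (i : Fin r) (k : ℕ) : ((toEnd ℂ L X (f i)) ^ k) m ∈ wt H X (mu - (k : ℂ) • α i) := by
  induction k with
  | zero => simpa using hm
  | succ k ih =>
    rw [pow_succ', Module.End.mul_apply, toEnd_apply_apply]
    have := lie_mem_wt_neg (D.hf i) ih
    convert this using 2
    push_cast; rw [add_smul, one_smul]; abel

/-- The vectors `f_i^{μ_i+1} m` are highest weight vectors. -/
theorem IsHW.pow_hw (D : Setup H α hc e f) {mu : Module.Dual ℂ H} {m : X} (hm : IsHW H α mu m)
    (hg : NGen H α m) (i : Fin r) (k : ℕ) (hk : mu (hc i) = k) :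
    IsHW H α (mu - ((k + 1 : ℕ) : ℂ) • α i) (((toEnd ℂ L X (f i)) ^ (k + 1)) m) := by
  have hw := IsHW.pow_wt D hm.1 i (k + 1)
  refine ⟨hw, fun χ hχ z hz => ?_⟩
  by_contra hne
  obtain ⟨n', hn'⟩ := hg.wt_mem D.base hm.1 (lie_mem_wt hz hw) hne
  obtain ⟨c, hc'⟩ := hχ.2
  have h1 : ∑ j, ((c + n') j : ℂ) • α j = ∑ j, (Pi.single (M := fun _ => ℕ) i (k + 1) j : ℂ) • α j := by
    have : ∑ j, (Pi.single (M := fun _ => ℕ) i (k + 1) j : ℂ) • α j = ((k + 1 : ℕ) : ℂ) • α i := by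
      rw [Finset.sum_eq_single i]
      · simp
      · intro j _ hj; simp [Pi.single_eq_of_ne hj]
      · simp
    rw [this]
    simp only [Pi.add_apply, Nat.cast_add, add_smul, Finset.sum_add_distrib, ← hc']
    simp only [wtm] at hn'
    push_cast at hn' ⊢
    rw [add_smul] at hn'
    rw [sub_add, sub_right_inj] at hn'
    rw [← hn']; abel
  have h2 := coeff_unique D.base h1
  have h3 : χ = (c i : ℂ) • α i := by
    rw [hc', Finset.sum_eq_single i]
    · intro j _ hj
      have := congrFun h2 j
      rw [Pi.single_eq_of_ne hj] at this
      norm_cast at this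
      have : c j = 0 := by simp at this; exact this.1
      rw [this]; simp
    · simp
  have h4 := eq_simple_of_smul D.base hχ i _ h3
  subst h4
  obtain ⟨t, rfl⟩ := rootSpace_one_dim (D.base.isRoot i) (D.he i) hz (D.e_ne i)
  apply hne
  by_cases h0 : m = 0
  · rw [h0]; simp
  have := (D.prim hm h0 i).lie_e_pow_succ_toEnd_f k
  rw [smul_lie, this, hk, sub_self, mul_zero, zero_smul, smul_zero]

theorem irr_ngen (hb : IsBase H α) (hV : IsSimpleOrder (LieSubmodule ℂ L X)) {mu : Module.Dual ℂ H}
    {v : X} (hv : IsHW H α mu v) (h0 : v ≠ 0) : NGen H α v := by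
  intro S h1 h2
  obtain ⟨I, h3, h4⟩ := hw_span hb {v} (by rintro u rfl; exact ⟨mu, hv⟩)
  have h5 : I = ⊤ := by
    rcases hV.eq_bot_or_eq_top I with h | h
    · exfalso; apply h0
      have := h3 (Set.mem_singleton v)
      rw [h] at this; simpa using this
    · exact h
  rw [h5] at h4
  have := h4 S (by simpa using h1) h2
  simpa using this

/-- Presentation of the irreducible module over the negative part. -/
theorem presentation (D : Setup H α hc e f) {mu : Module.Dual ℂ H} (hmu : IsDomInt hc mu)
    {V : Type} [AddCommGroup V] [Module ℂ V] [LieRingModule L V] [LieModule ℂ L V]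
    [FiniteDimensional ℂ V] (hV : IsSimpleOrder (LieSubmodule ℂ L V)) {v : V} (hv : IsHW H α mu v)
    (h0 : v ≠ 0) (x : X) (hx : ∀ i (k : ℕ), mu (hc i) = k → ((toEnd ℂ L X (f i)) ^ (k + 1)) x = 0) :
    ∃ g : V →ₗ[ℂ] X, g v = x ∧ ∀ y ∈ negVec H α, ∀ a, g ⁅y, a⁆ = ⁅y, g a⁆ := by
  obtain ⟨M, _, _, _, _, m, hm, hg, huniv⟩ := exists_verma D.base mu
  choose k hk using hmu
  have hVg := irr_ngen D.base hV hv h0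
  obtain ⟨I, hI1, hI2⟩ := hw_span D.base (Set.range fun i => ((toEnd ℂ L M (f i)) ^ (k i + 1)) m) (by
    rintro _ ⟨i, rfl⟩
    exact ⟨_, hm.pow_hw D hg i (k i) (hk i)⟩)
  have fneg : ∀ i, f i ∈ negVec H α := fun i => ⟨α i, isPosRoot_simple D.base i, D.hf i⟩
  -- negative-equivariant maps killing the relations kill I
  have kill : ∀ (Z : Type) [AddCommGroup Z] [Module ℂ Z] [LieRingModule L Z] [LieModule ℂ L Z]
      (g : M →ₗ[ℂ] Z), (∀ y ∈ negVec H α, ∀ a, g ⁅y, a⁆ = ⁅y, g a⁆) →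
      (∀ i, ((toEnd ℂ L Z (f i)) ^ (k i + 1)) (g m) = 0) → (I : Submodule ℂ M) ≤ LinearMap.ker g := by
    intro Z _ _ _ _ g hgn hgk
    apply hI2
    · rintro _ ⟨i, rfl⟩
      show g _ = 0
      rw [← hgk i]
      have : ∀ n, g (((toEnd ℂ L M (f i)) ^ n) m) = ((toEnd ℂ L Z (f i)) ^ n) (g m) := by
        intro n
        induction n with
        | zero => simp
        | succ n ih =>
          rw [pow_succ', pow_succ', Module.End.mul_apply, Module.End.mul_apply, toEnd_apply_apply,
            toEnd_apply_apply, hgn _ (fneg i), ih]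
      exact this _
    · intro y hy a ha
      rw [LinearMap.mem_ker] at ha ⊢
      rw [hgn y hy, ha, lie_zero]
  obtain ⟨g0, hg0m, hg0n⟩ := huniv V v
  obtain ⟨g1, hg1m, hg1n⟩ := huniv X x
  have hg0L := equivariant_of_hw D.base hm hg g0 (by rw [hg0m]; exact hv) hg0n
  have k0 := kill V g0 hg0n (fun i => by
    rw [hg0m]; exact (D.prim hv h0 i).pow_toEnd_f_eq_zero_of_eq_nat (hk i))
  have k1 := kill X g1 hg1n (fun i => by rw [hg1m]; exact hx i (k i) (hk i))
  let π := LieSubmodule.Quotient.mk' I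
  have hπ : Function.Surjective π := LieSubmodule.Quotient.surjective_mk' I
  let G0 : (M ⧸ I) →ₗ[ℂ] V := Submodule.liftQ (I : Submodule ℂ M) g0 k0
  let G1 : (M ⧸ I) →ₗ[ℂ] X := Submodule.liftQ (I : Submodule ℂ M) g1 k1
  have hG0 : ∀ a, G0 (π a) = g0 a := fun a => rfl
  have hG1 : ∀ a, G1 (π a) = g1 a := fun a => rfl
  have hinj : Function.Injective G0 := by
    refine core_inj D (fun j => ⟨k j, hk j⟩) (m := π m) ?_ ?_ ?_ G0 ?_ ?_
    · refine ⟨fun h => ?_, fun χ hχ z hz => ?_⟩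
      · rw [← LieModuleHom.map_lie, hm.1, map_smul]
      · rw [← LieModuleHom.map_lie, hm.2 χ hχ z hz, map_zero]
    · intro S h1 h2
      have : S.comap (π : M →ₗ[ℂ] M ⧸ I) = ⊤ := by
        apply hg
        · exact h1
        · intro y hy a ha
          show π ⁅y, a⁆ ∈ S
          rw [LieModuleHom.map_lie]
          exact h2 y hy _ ha
      rw [eq_top_iff]
      rintro q -
      obtain ⟨a, rfl⟩ := hπ q
      have h3 : a ∈ S.comap (π : M →ₗ[ℂ] M ⧸ I) := by rw [this]; trivial
      exact h3
    · intro i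
      refine ⟨k i + 1, ?_⟩
      have : ∀ n, π (((toEnd ℂ L M (f i)) ^ n) m) = ((toEnd ℂ L (M ⧸ I) (f i)) ^ n) (π m) := by
        intro n
        induction n with
        | zero => simp
        | succ n ih =>
          rw [pow_succ', pow_succ', Module.End.mul_apply, Module.End.mul_apply, toEnd_apply_apply,
            toEnd_apply_apply, LieModuleHom.map_lie, ih]
      rw [← this]
      rw [LieSubmodule.Quotient.mk_eq_zero]
      exact hI1 ⟨i, rfl⟩
    · intro z q
      obtain ⟨a, rfl⟩ := hπ q
      rw [← LieModuleHom.map_lie, hG0, hG0, hg0L]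
    · rw [hG0, hg0m]; exact h0
  have hsurj : Function.Surjective G0 := by
    rw [← LinearMap.range_eq_top]
    apply hVg
    · exact ⟨π m, by rw [hG0, hg0m]⟩
    · rintro y hy _ ⟨q, rfl⟩
      obtain ⟨a, rfl⟩ := hπ q
      exact ⟨π ⁅y, a⁆, by rw [hG0, hG0, hg0n y hy]⟩
  let E := LinearEquiv.ofBijective G0 ⟨hinj, hsurj⟩
  have hE : ∀ a, E.symm (g0 a) = π a := fun a => by
    rw [LinearEquiv.symm_apply_eq]; rfl
  refine ⟨G1 ∘ₗ E.symm.toLinearMap, ?_, ?_⟩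
  · show G1 (E.symm v) = x
    rw [← hg0m, hE, hG1, hg1m]
  · intro y hy a
    obtain ⟨q, rfl⟩ := hsurj a
    obtain ⟨a, rfl⟩ := hπ q
    show G1 (E.symm _) = ⁅y, G1 (E.symm _)⁆
    rw [hG0, ← hg0n y hy, hE, hE, hG1, hG1, hg1n y hy]

/-- Homs out of the irreducible module into f.d. modules. -/
theorem hom_of_hw (D : Setup H α hc e f) {mu : Module.Dual ℂ H} (hmu : IsDomInt hc mu)
    {V : Type} [AddCommGroup V] [Module ℂ V] [LieRingModule L V] [LieModule ℂ L V]
    [FiniteDimensional ℂ V] (hV : IsSimpleOrder (LieSubmodule ℂ L V)) {v : V} (hv : IsHW H α mu v)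
    (h0 : v ≠ 0) [FiniteDimensional ℂ X] {x : X} (hx : IsHW H α mu x) :
    ∃ g : V →ₗ[ℂ] X, g v = x ∧ ∀ (z : L) a, g ⁅z, a⁆ = ⁅z, g a⁆ := by
  obtain ⟨g, h1, h2⟩ := presentation D hmu hV hv h0 x (by
    intro i k hk
    by_cases hx0 : x = 0
    · rw [hx0, map_zero]
    exact (D.prim hx hx0 i).pow_toEnd_f_eq_zero_of_eq_nat hk)
  exact ⟨g, h1, equivariant_of_hw D.base hv (irr_ngen D.base hV hv h0) g (by rw [h1]; exact hx) h2⟩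

end Part5

section Part6

/-- Exponential of a nilpotent endomorphism. -/
noncomputable def expo {X : Type} [AddCommGroup X] [Module ℂ X] (a : Module.End ℂ X) : Module.End ℂ X :=
  @IsNilpotent.exp _ _ (Module.compHom _ (algebraMap ℚ ℂ)) a

section expo

variable {X Y Z : Type} [AddCommGroup X] [Module ℂ X] [AddCommGroup Y] [Module ℂ Y]
  [AddCommGroup Z] [Module ℂ Z]

theorem expo_eq_sum {a : Module.End ℂ X} {k : ℕ} (h : a ^ k = 0) :
    expo a = ∑ i ∈ Finset.range k, ((i.factorial : ℂ))⁻¹ • a ^ i := by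
  let _ : Module ℚ (Module.End ℂ X) := Module.compHom _ (algebraMap ℚ ℂ)
  have := IsNilpotent.exp_eq_sum (A := Module.End ℂ X) h
  unfold expo
  rw [this]
  refine Finset.sum_congr rfl fun i _ => ?_
  show (algebraMap ℚ ℂ ((i.factorial : ℚ)⁻¹)) • a ^ i = _
  simp

theorem expo_add {a b : Module.End ℂ X} (h : Commute a b) (ha : IsNilpotent a) (hb : IsNilpotent b) :
    expo (a + b) = expo a * expo b := by
  let _ : Module ℚ (Module.End ℂ X) := Module.compHom _ (algebraMap ℚ ℂ)
  exact IsNilpotent.exp_add_of_commute h ha hb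

theorem expo_neg {a : Module.End ℂ X} (ha : IsNilpotent a) : expo (-a) * expo a = 1 := by
  rw [← expo_add (Commute.refl a).neg_left ha.neg ha, neg_add_cancel, expo_eq_sum (k := 1) (by simp)]
  simp

theorem expo_inj {a : Module.End ℂ X} (ha : IsNilpotent a) : Function.Injective (expo a) := by
  intro x y h
  have h1 : ∀ x, expo (-a) (expo a x) = x := fun x => by
    rw [← Module.End.mul_apply, expo_neg ha, Module.End.one_apply]
  rw [← h1 x, h, h1]

theorem expo_comm {a : Module.End ℂ X} {b : Module.End ℂ Y} (ha : IsNilpotent a) (hb : IsNilpotent b)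
    (g : X →ₗ[ℂ] Y) (h : ∀ x, g (a x) = b (g x)) (x : X) : g (expo a x) = expo b (g x) := by
  obtain ⟨k, hk⟩ := ha
  obtain ⟨l, hl⟩ := hb
  have hk' : a ^ (k + l) = 0 := by rw [pow_add, hk, zero_mul]
  have hl' : b ^ (k + l) = 0 := by rw [pow_add, hl, mul_zero]
  have hp : ∀ i : ℕ, g ((a ^ i) x) = (b ^ i) (g x) := by
    intro i
    induction i with
    | zero => simp
    | succ i ih => rw [pow_succ', pow_succ', Module.End.mul_apply, Module.End.mul_apply, h, ih]
  rw [expo_eq_sum hk', expo_eq_sum hl']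
  simp only [LinearMap.sum_apply, map_sum, LinearMap.smul_apply, map_smul]
  refine Finset.sum_congr rfl fun i _ => ?_
  rw [hp]

theorem expo_bilin {a : Module.End ℂ X} {b : Module.End ℂ Y} {c : Module.End ℂ Z}
    (ha : IsNilpotent a) (hb : IsNilpotent b) (hc : IsNilpotent c) (T : X →ₗ[ℂ] Y →ₗ[ℂ] Z)
    (h : ∀ x y, c (T x y) = T (a x) y + T x (b y)) (x : X) (y : Y) :
    T (expo a x) (expo b y) = expo c (T x y) := by
  let a' : Module.End ℂ (X ⊗[ℂ] Y) := LinearMap.rTensor Y a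
  let b' : Module.End ℂ (X ⊗[ℂ] Y) := LinearMap.lTensor X b
  have hpa : ∀ k, a' ^ k = LinearMap.rTensor Y (a ^ k) := fun k => LinearMap.rTensor_pow a k
  have hpb : ∀ k, b' ^ k = LinearMap.lTensor X (b ^ k) := fun k => LinearMap.lTensor_pow b k
  obtain ⟨k, hk⟩ := ha
  obtain ⟨l, hl⟩ := hb
  have ha' : a' ^ k = 0 := by rw [hpa, hk, LinearMap.rTensor_zero]
  have hb' : b' ^ l = 0 := by rw [hpb, hl, LinearMap.lTensor_zero]
  have hcomm : Commute a' b' := by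
    apply TensorProduct.ext'
    intro x y
    simp [a', b']
  have hea : ∀ x y, expo a' (x ⊗ₜ y) = expo a x ⊗ₜ y := by
    intro x y
    rw [expo_eq_sum ha', expo_eq_sum hk]
    simp only [LinearMap.sum_apply, LinearMap.smul_apply, hpa, LinearMap.rTensor_tmul,
      TensorProduct.sum_tmul, TensorProduct.smul_tmul']
  have heb : ∀ x y, expo b' (x ⊗ₜ y) = x ⊗ₜ expo b y := by
    intro x y
    rw [expo_eq_sum hb', expo_eq_sum hl]
    simp only [LinearMap.sum_apply, LinearMap.smul_apply, hpb, LinearMap.lTensor_tmul,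
      TensorProduct.tmul_sum, TensorProduct.tmul_smul]
  have hnil : IsNilpotent (a' + b') := hcomm.isNilpotent_add ⟨k, ha'⟩ ⟨l, hb'⟩
  have key := expo_comm hnil hc (TensorProduct.lift T) (by
    intro t
    have : TensorProduct.lift T ∘ₗ (a' + b') = c ∘ₗ TensorProduct.lift T := by
      apply TensorProduct.ext'
      intro x y
      simp [a', b', h]
    exact LinearMap.congr_fun this t) (x ⊗ₜ y)
  rw [expo_add hcomm ⟨k, ha'⟩ ⟨l, hb'⟩, Module.End.mul_apply, heb, hea] at key
  simpa using key

theorem nilp_of_comm [FiniteDimensional ℂ X] {h a : Module.End ℂ X} {c : ℂ} (hc : c ≠ 0)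
    (hh : h * a - a * h = c • a) : IsNilpotent a := by
  have h1 : ∀ k : ℕ, h * a ^ k - a ^ k * h = ((k : ℂ) * c) • a ^ k := by
    intro k
    induction k with
    | zero => simp
    | succ k ih =>
      have : h * a ^ (k + 1) - a ^ (k + 1) * h
          = (h * a ^ k - a ^ k * h) * a + a ^ k * (h * a - a * h) := by
        rw [pow_succ]; noncomm_ring
      rw [this, ih, hh, smul_mul_assoc, mul_smul_comm, ← pow_succ, ← add_smul]
      congr 1; push_cast; ring
  by_contra hn
  have hne : ∀ k, a ^ k ≠ 0 := fun k hk => hn ⟨k, hk⟩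
  let A : Module.End ℂ (Module.End ℂ X) := LinearMap.mulLeft ℂ h - LinearMap.mulRight ℂ h
  have hli := Module.End.eigenvectors_linearIndependent' A (fun k : ℕ => (k : ℂ) * c)
    (fun k l hkl => by
      have := mul_right_cancel₀ hc hkl
      exact_mod_cast this) (fun k => a ^ k) (fun k => by
      rw [Module.End.hasEigenvector_iff, Module.End.mem_eigenspace_iff]
      exact ⟨by simpa [A] using h1 k, hne k⟩)
  have := hli.finite
  exact not_finite ℕ

end expo

variable [FiniteDimensional ℂ L] [LieAlgebra.IsSemisimple ℂ L]
  {H : LieSubalgebra ℂ L} [H.IsCartanSubalgebra]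
  {r : ℕ} {α : Fin r → Module.Dual ℂ H} {hc : Fin r → H} {e f : Fin r → L}
  {X : Type} [AddCommGroup X] [Module ℂ X] [LieRingModule L X] [LieModule ℂ L X]
  {Y : Type} [AddCommGroup Y] [Module ℂ Y] [LieRingModule L Y] [LieModule ℂ L Y]
  {h0 : H} {c : Fin r → ℤ} {E F : L}

/-- Principal sl2 data. -/
structure PS (H : LieSubalgebra ℂ L) [H.IsCartanSubalgebra] {r : ℕ} (α : Fin r → Module.Dual ℂ H)
    (hc : Fin r → H) (e f : Fin r → L) (h0 : H) (c : Fin r → ℤ) (E F : L) : Prop where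
  D : Setup H α hc e f
  h0_eq : h0 = ∑ j, (c j : ℂ) • hc j
  a2 : ∀ j, α j h0 = 2
  E_eq : E = ∑ j, (c j : ℂ) • e j
  F_eq : F = ∑ j, f j
  sl2 : IsSl2Triple (h0 : L) E F

theorem exists_PS (D : Setup H α hc e f) (hr : 0 < r) : ∃ h0 c E F, PS H α hc e f h0 c E F := by
  obtain ⟨h0, c, h1, h2⟩ := D.exists_h0
  refine ⟨h0, c, _, _, D, h1, h2, rfl, rfl, ?_, ?_, ?_, ?_⟩
  · intro h
    have : h0 = 0 := Subtype.ext h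
    have h3 := h2 ⟨0, hr⟩
    rw [this, map_zero] at h3
    norm_num at h3
  · rw [lie_sum, h1]
    push_cast
    have : ∀ i j : Fin r, ⁅(c j : ℂ) • e j, f i⁆ = if j = i then (c i : ℂ) • (hc i : L) else 0 := by
      intro i j
      rw [smul_lie]
      split_ifs with h
      · subst h; rw [D.hh]
      · rw [D.lie_e_f_ne h, smul_zero]
    simp only [sum_lie, this, Finset.sum_ite_eq', Finset.sum_ite_eq, Finset.mem_univ, if_true]
  · rw [lie_sum, Finset.smul_sum]
    refine Finset.sum_congr rfl fun j _ => ?_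
    rw [lie_smul, D.lie_e, h2, smul_comm]
    exact two_smul ℂ _ |>.trans (two_nsmul _).symm
  · rw [lie_sum, Finset.smul_sum, ← Finset.sum_neg_distrib]
    refine Finset.sum_congr rfl fun j _ => ?_
    rw [D.lie_f, h2]
    congr 1
    exact two_smul ℂ _ |>.trans (two_nsmul _).symm

end Part6

section Part7

variable [FiniteDimensional ℂ L] [LieAlgebra.IsSemisimple ℂ L]
  {H : LieSubalgebra ℂ L} [H.IsCartanSubalgebra]
  {r : ℕ} {α : Fin r → Module.Dual ℂ H} {hc : Fin r → H} {e f : Fin r → L}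
  {X : Type} [AddCommGroup X] [Module ℂ X] [LieRingModule L X] [LieModule ℂ L X]
  {Y : Type} [AddCommGroup Y] [Module ℂ Y] [LieRingModule L Y] [LieModule ℂ L Y]
  {V : Type} [AddCommGroup V] [Module ℂ V] [LieRingModule L V] [LieModule ℂ L V]
  {h0 : H} {c : Fin r → ℤ} {E F : L} {mu : Module.Dual ℂ H} {v : V} {N : ℕ}

/-- Eigenspace of the action of `h`. -/
def ev (X : Type) [AddCommGroup X] [Module ℂ X] [LieRingModule L X]
    [LieModule ℂ L X] (h : L) (c : ℂ) : Submodule ℂ X where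
  carrier := {u | ⁅h, u⁆ = c • u}
  add_mem' := by intro a b ha hb; simp only [Set.mem_ofPred_eq] at *; rw [lie_add, ha, hb, smul_add]
  zero_mem' := by simp
  smul_mem' := by intro k a ha; simp only [Set.mem_ofPred_eq] at *; rw [lie_smul, ha, smul_comm]

theorem mem_ev {h : L} {k : ℂ} {u : X} : u ∈ ev X h k ↔ ⁅h, u⁆ = k • u := Iff.rfl

theorem ev_unique {h : L} {k l : ℂ} {u : X} (h1 : u ∈ ev X h k) (h2 : u ∈ ev X h l) (hu : u ≠ 0) :
    k = l :=
  smul_left_injective ℂ hu ((mem_ev.1 h1).symm.trans (mem_ev.1 h2))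

theorem wt_ev {lam : Module.Dual ℂ H} {u : X} (h : u ∈ wt H X lam) (x : H) : u ∈ ev X (x : L) (lam x) := h x

theorem ev_stable (x : H) (k : ℂ) (h : H) (u : X) (hu : u ∈ ev X (x : L) k) :
    ⁅(h : L), u⁆ ∈ ev X (x : L) k := by
  rw [mem_ev, leibniz_lie, cartan_comm, zero_lie, zero_add, mem_ev.1 hu, lie_smul]

theorem lie_mem_ev {h y : L} {k l : ℂ} {u : X} (hy : ⁅h, y⁆ = l • y) (hu : u ∈ ev X h k) :
    ⁅y, u⁆ ∈ ev X h (k + l) := by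
  rw [mem_ev, leibniz_lie, hy, mem_ev.1 hu, smul_lie, lie_smul, ← add_smul, add_comm]

theorem PS.lie_hE (P : PS H α hc e f h0 c E F) : ⁅(h0 : L), E⁆ = (2 : ℂ) • E :=
  P.sl2.lie_h_e_smul ℂ

theorem PS.lie_hF (P : PS H α hc e f h0 c E F) : ⁅(h0 : L), F⁆ = (-2 : ℂ) • F := by
  rw [neg_smul]; exact P.sl2.lie_lie_smul_f ℂ

theorem PS.powF (P : PS H α hc e f h0 c E F) {k : ℂ} {u : X} (hu : u ∈ ev X (h0 : L) k) (n : ℕ) :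
    ((toEnd ℂ L X F) ^ n) u ∈ ev X (h0 : L) (k - 2 * n) := by
  induction n with
  | zero => simpa using hu
  | succ n ih =>
    rw [pow_succ', Module.End.mul_apply, toEnd_apply_apply]
    have := lie_mem_ev P.lie_hF ih
    convert this using 2
    push_cast; ring

theorem PS.powE (P : PS H α hc e f h0 c E F) {k : ℂ} {u : X} (hu : u ∈ ev X (h0 : L) k) (n : ℕ) :
    ((toEnd ℂ L X E) ^ n) u ∈ ev X (h0 : L) (k + 2 * n) := by
  induction n with
  | zero => simpa using hu
  | succ n ih =>
    rw [pow_succ', Module.End.mul_apply, toEnd_apply_apply]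
    have := lie_mem_ev P.lie_hE ih
    convert this using 2
    push_cast; ring

theorem PS.nilE (P : PS H α hc e f h0 c E F) [FiniteDimensional ℂ X] : IsNilpotent (toEnd ℂ L X E) := by
  refine nilp_of_comm (h := toEnd ℂ L X (h0 : L)) (c := 2) (by norm_num) ?_
  ext x
  simp only [LinearMap.sub_apply, Module.End.mul_apply, toEnd_apply_apply, LinearMap.smul_apply]
  rw [← lie_lie, P.lie_hE, smul_lie]

theorem PS.nilF (P : PS H α hc e f h0 c E F) [FiniteDimensional ℂ X] : IsNilpotent (toEnd ℂ L X F) := by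
  refine nilp_of_comm (h := toEnd ℂ L X (h0 : L)) (c := -2) (by norm_num) ?_
  ext x
  simp only [LinearMap.sub_apply, Module.End.mul_apply, toEnd_apply_apply, LinearMap.smul_apply]
  rw [← lie_lie, P.lie_hF, smul_lie]

/-- The context: an irreducible module with highest weight vector. -/
structure VC (H : LieSubalgebra ℂ L) [H.IsCartanSubalgebra] {r : ℕ} (α : Fin r → Module.Dual ℂ H)
    (hc : Fin r → H) (e f : Fin r → L) (h0 : H) (c : Fin r → ℤ) (E F : L)
    {V : Type} [AddCommGroup V] [Module ℂ V] [LieRingModule L V] [LieModule ℂ L V]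
    (mu : Module.Dual ℂ H) (v : V) (N : ℕ) : Prop where
  P : PS H α hc e f h0 c E F
  hV : IsSimpleOrder (LieSubmodule ℂ L V)
  hv : IsHW H α mu v
  v0 : v ≠ 0
  hN : mu h0 = N

theorem PS.E_hw (P : PS H α hc e f h0 c E F) (hv : IsHW H α mu v) : ⁅E, v⁆ = 0 := by
  rw [P.E_eq, sum_lie]
  refine Finset.sum_eq_zero fun j _ => ?_
  rw [smul_lie, hv.2 _ (isPosRoot_simple P.D.base j) _ (P.D.he j), smul_zero]

theorem exists_VC [FiniteDimensional ℂ V] (P : PS H α hc e f h0 c E F) (hV : IsSimpleOrder (LieSubmodule ℂ L V))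
    (hv : IsHW H α mu v) (v0 : v ≠ 0) : ∃ N, VC H α hc e f h0 c E F mu v N := by
  have : P.sl2.HasPrimitiveVectorWith v (mu h0) := ⟨v0, hv.1 h0, P.E_hw hv⟩
  obtain ⟨n, hn⟩ := this.exists_nat
  exact ⟨n, P, hV, hv, v0, hn⟩

theorem VC.prim (C : VC H α hc e f h0 c E F mu v N) : C.P.sl2.HasPrimitiveVectorWith v (N : ℂ) :=
  ⟨C.v0, by rw [C.hv.1 h0, C.hN], C.P.E_hw C.hv⟩

theorem VC.gen (C : VC H α hc e f h0 c E F mu v N) : NGen H α v :=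
  irr_ngen C.P.D.base C.hV C.hv C.v0

theorem PS.sum_h0 (P : PS H α hc e f h0 c E F) (n : Fin r → ℕ) :
    (∑ j, (n j : ℂ) • α j) h0 = 2 * ((∑ j, n j : ℕ) : ℂ) := by
  simp [LinearMap.sum_apply, P.a2, Finset.mul_sum, mul_comm]

theorem VC.wtm_h0 (C : VC H α hc e f h0 c E F mu v N) (n : Fin r → ℕ) :
    wtm α mu n h0 = N - 2 * ((∑ j, n j : ℕ) : ℂ) := by
  rw [wtm, LinearMap.sub_apply, C.hN, C.P.sum_h0]

theorem VC.ev_support (C : VC H α hc e f h0 c E F mu v N) {k : ℂ} {x : V} (hx : x ∈ ev V (h0 : L) k)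
    (x0 : x ≠ 0) : ∃ m : ℕ, k = N - 2 * m ∧ (m = 0 → ∃ a : ℂ, x = a • v) ∧
      ∃ n y, y ≠ 0 ∧ y ∈ wt H V (wtm α mu n) ∧ y ∈ ev V (h0 : L) k := by
  obtain ⟨u, h1, h2, a, h3⟩ := C.gen.support C.P.D.base C.hv.mem_wt x
  have h4 := comp_mem (K := ev V (h0 : L) k) (ev_stable h0 k) (wtm α mu) (wtm_inj C.P.D.base mu)
    u.support u (fun n _ => h2 n) (by rw [h1] at hx; exact hx)
  have h5 : ∀ n, u n ≠ 0 → k = N - 2 * ((∑ j, n j : ℕ) : ℂ) := by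
    intro n hn
    rw [← C.wtm_h0 n]
    exact ev_unique (h4 n (by simpa using hn)) (wt_ev (h2 n) h0) hn
  have h6 : ∃ n, u n ≠ 0 := by
    by_contra hcon
    push Not at hcon
    apply x0
    rw [h1]
    exact Finset.sum_eq_zero fun n _ => hcon n
  obtain ⟨n, hn⟩ := h6
  refine ⟨_, h5 n hn, ?_, n, u n, hn, h2 n, h4 n (by simpa using hn)⟩
  intro hm
  refine ⟨a, ?_⟩
  rw [h1, ← h3]
  refine Finset.sum_eq_single 0 ?_ ?_
  · intro n' hn' hne
    exfalso
    apply hne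
    have h7 := (h5 n' (by simpa using hn')).symm.trans (h5 n hn)
    rw [hm] at h7
    have h8 : ((∑ j, n' j : ℕ) : ℂ) = 0 := by
      have : (2:ℂ) * ((∑ j, n' j : ℕ) : ℂ) = 0 := by
        linear_combination -h7
      simpa using this
    have h9 : (∑ j, n' j : ℕ) = 0 := by exact_mod_cast h8
    funext j
    exact (Finset.sum_eq_zero_iff.1 h9) j (Finset.mem_univ j)
  · intro h; simpa using h

theorem VC.ev_low (C : VC H α hc e f h0 c E F mu v N) [FiniteDimensional ℂ V] {k : ℂ} {x : V}
    (hx : x ∈ ev V (h0 : L) k) (x0 : x ≠ 0) (hF : ⁅F, x⁆ = 0) :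
    ∃ m : ℕ, k = - (m : ℂ) ∧ m ≤ N ∧ ((toEnd ℂ L V E) ^ m) x ≠ 0 := by
  have hp : C.P.sl2.symm.HasPrimitiveVectorWith x (-k) := ⟨x0, by rw [neg_lie, mem_ev.1 hx, neg_smul], hF⟩
  obtain ⟨m, hm⟩ := hp.exists_nat
  rw [hm] at hp
  have h1 := hp.pow_toEnd_f_ne_zero_of_eq_nat rfl le_rfl
  obtain ⟨m', h2, -⟩ := C.ev_support (C.P.powE hx m) h1
  refine ⟨m, by rw [← hm, neg_neg], ?_, h1⟩
  have h3 : k = -(m : ℂ) := by rw [← hm, neg_neg]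
  have h4 : ((m + 2 * m' : ℕ) : ℂ) = (N : ℂ) := by
    push_cast
    linear_combination h2 - h3
  have : m + 2 * m' = N := by exact_mod_cast h4
  omega

theorem VC.ev_bound (C : VC H α hc e f h0 c E F mu v N) [FiniteDimensional ℂ V] {m : ℤ} {x : V}
    (hx : x ∈ ev V (h0 : L) (m : ℂ)) (x0 : x ≠ 0) : -(N : ℤ) ≤ m := by
  obtain ⟨k, hk⟩ := C.P.nilF (X := V)
  have h1 : ∃ n : ℕ, ((toEnd ℂ L V F) ^ n) x = 0 := ⟨k, by rw [hk]; rfl⟩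
  obtain ⟨n, hn1, hn2⟩ := Nat.exists_not_and_succ_of_not_zero_of_exists
    (p := fun n => ((toEnd ℂ L V F) ^ n) x = 0) (by simpa using x0) h1
  obtain ⟨l, h2, h3, -⟩ := C.ev_low (C.P.powF hx n) hn1 (by
    rw [pow_succ', Module.End.mul_apply] at hn2; exact hn2)
  have h4 : m - 2 * n = -(l : ℤ) := by exact_mod_cast h2
  omega

theorem VC.ev_F (C : VC H α hc e f h0 c E F mu v N) [FiniteDimensional ℂ V] {x : V}
    (hx : x ∈ ev V (h0 : L) (-(N : ℂ))) : ⁅F, x⁆ = 0 := by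
  by_contra hne
  have h1 := lie_mem_ev C.P.lie_hF hx
  have h2 := C.ev_bound (m := -(N : ℤ) - 2) (by
    convert h1 using 2; push_cast; ring) hne
  omega

theorem VC.ev_low_dim (C : VC H α hc e f h0 c E F mu v N) [FiniteDimensional ℂ V] {x y : V}
    (hx : x ∈ ev V (h0 : L) (-(N : ℂ))) (hy : y ∈ ev V (h0 : L) (-(N : ℂ))) (x0 : x ≠ 0) :
    ∃ b : ℂ, y = b • x := by
  have key : ∀ z ∈ ev V (h0 : L) (-(N : ℂ)), (∃ a : ℂ, ((toEnd ℂ L V E) ^ N) z = a • v) ∧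
      (z ≠ 0 → ((toEnd ℂ L V E) ^ N) z ≠ 0) := by
    intro z hz
    by_cases z0 : z = 0
    · subst z0; exact ⟨⟨0, by simp⟩, fun h => absurd rfl h⟩
    obtain ⟨m, h1, h2, h3⟩ := C.ev_low hz z0 (C.ev_F hz)
    have : N = m := by
      have : (N : ℂ) = m := by linear_combination -h1
      exact_mod_cast this
    subst this
    refine ⟨?_, fun _ => h3⟩
    obtain ⟨m, h4, h5, -⟩ := C.ev_support (C.P.powE hz N) h3
    refine h5 ?_
    have : (m : ℂ) = 0 := by linear_combination (1/2) * h4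
    exact_mod_cast this
  obtain ⟨⟨a, ha⟩, h1⟩ := key x hx
  obtain ⟨⟨b, hb⟩, -⟩ := key y hy
  have a0 : a ≠ 0 := by rintro rfl; exact h1 x0 (by rw [ha, zero_smul])
  refine ⟨b / a, ?_⟩
  by_contra hne
  refine (key (y - (b / a) • x) (Submodule.sub_mem _ hy (Submodule.smul_mem _ _ hx))).2
    (sub_ne_zero.2 hne) ?_
  rw [map_sub, map_smul, ha, hb, smul_smul, div_mul_cancel₀ _ a0, sub_self]

/-- The lowest weight vector. -/
noncomputable def lowv (F : L) (v : V) (N : ℕ) : V := ((toEnd ℂ L V F) ^ N) v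

theorem VC.low_ne (C : VC H α hc e f h0 c E F mu v N) : lowv F v N ≠ 0 :=
  C.prim.pow_toEnd_f_ne_zero_of_eq_nat rfl le_rfl

theorem VC.low_ev (C : VC H α hc e f h0 c E F mu v N) : lowv F v N ∈ ev V (h0 : L) (-(N : ℂ)) := by
  have := C.P.powF (u := v) (k := N) (mem_ev.2 C.prim.lie_h) N
  rw [lowv]
  convert this using 2
  ring

theorem VC.low_hw (C : VC H α hc e f h0 c E F mu v N) [FiniteDimensional ℂ V] :
    ∃ lam, IsHW H (fun j => -α j) (-lam) (lowv F v N) := by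
  obtain ⟨m, h1, -, n, y, y0, hy1, hy2⟩ := C.ev_support C.low_ev C.low_ne
  obtain ⟨b, hb⟩ := C.ev_low_dim hy2 C.low_ev y0
  refine ⟨-(wtm α mu n), ?_, ?_⟩
  · rw [neg_neg]
    change lowv F v N ∈ wt H V _
    rw [hb]
    exact Submodule.smul_mem _ _ hy1
  · intro χ hχ z hz
    rw [isPosRoot_neg_iff] at hχ
    obtain ⟨hr, a, ha⟩ := hχ
    by_contra hne
    have h2 : χ h0 = -(2 * ((∑ j, a j : ℕ) : ℂ)) := by
      rw [← C.P.sum_h0, ← ha, LinearMap.neg_apply, neg_neg]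
    have h3 := lie_mem_ev (mem_rootSpace_iff.1 hz h0) C.low_ev
    have h4 := C.ev_bound (m := -(N : ℤ) - 2 * (∑ j, a j : ℕ)) (by
      convert h3 using 2
      rw [h2]; push_cast; ring) hne
    have h5 : (∑ j, a j : ℕ) = 0 := by omega
    apply hr.1
    rw [ha]
    refine Finset.sum_eq_zero fun j _ => ?_
    rw [(Finset.sum_eq_zero_iff.1 h5) j (Finset.mem_univ j)]
    simp

end Part7

section Part8

variable [FiniteDimensional ℂ L] [LieAlgebra.IsSemisimple ℂ L]
  {H : LieSubalgebra ℂ L} [H.IsCartanSubalgebra]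
  {r : ℕ} {α : Fin r → Module.Dual ℂ H} {hc : Fin r → H} {e f : Fin r → L}
  {X : Type} [AddCommGroup X] [Module ℂ X] [LieRingModule L X] [LieModule ℂ L X]
  {Y : Type} [AddCommGroup Y] [Module ℂ Y] [LieRingModule L Y] [LieModule ℂ L Y]
  {Z : Type} [AddCommGroup Z] [Module ℂ Z] [LieRingModule L Z] [LieModule ℂ L Z]
  {V : Type} [AddCommGroup V] [Module ℂ V] [LieRingModule L V] [LieModule ℂ L V]
  {h0 : H} {c : Fin r → ℤ} {E F : L} {mu lam : Module.Dual ℂ H} {v : V} {N : ℕ}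

variable (L) in
/-- Equivariant bilinear maps. -/
def Eqv (T : X →ₗ[ℂ] Y →ₗ[ℂ] Z) : Prop :=
  ∀ (x : L) p u, ⁅x, T p u⁆ = T ⁅x, p⁆ u + T p ⁅x, u⁆

theorem Eqv.flip {T : X →ₗ[ℂ] Y →ₗ[ℂ] Z} (h : Eqv L T) : Eqv L T.flip := by
  intro x p u
  simp only [LinearMap.flip_apply]
  rw [h, add_comm]

theorem simple_ker (hV : IsSimpleOrder (LieSubmodule ℂ L V)) {T : V →ₗ[ℂ] Y →ₗ[ℂ] Z} (h : Eqv L T) {p : V}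
    (p0 : p ≠ 0) (hp : T p = 0) : T = 0 := by
  let S : LieSubmodule ℂ L V :=
    { LinearMap.ker T with
      lie_mem := by
        intro x m hm
        change T ⁅x, m⁆ = 0
        change T m = 0 at hm
        ext u
        have := h x m u
        rw [hm] at this
        simpa using this.symm }
  have hpS : p ∈ S := hp
  rcases hV.eq_bot_or_eq_top S with h1 | h1
  · rw [h1] at hpS
    exact absurd (by simpa using hpS) p0
  · ext a u
    have : a ∈ S := by rw [h1]; trivial
    change T a = 0 at this
    rw [this]; rfl

theorem VC.uniq (C : VC H α hc e f h0 c E F mu v N)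
    (hl : IsHW H (fun j => -α j) (-lam) (lowv F v N)) {T : V →ₗ[ℂ] V →ₗ[ℂ] Y} (h : Eqv L T)
    (hz : T (lowv F v N) v = 0) : T = 0 := by
  refine simple_ker C.hV h C.low_ne ?_
  have := C.gen (LinearMap.ker (T (lowv F v N))) hz (by
    rintro y ⟨χ, hχ, hy⟩ a ha
    rw [LinearMap.mem_ker] at *
    have h1 := h y (lowv F v N) a
    rw [ha, lie_zero, hl.2 (-χ) (by rw [isPosRoot_neg_iff, neg_neg]; exact hχ) y hy] at h1
    simpa using h1.symm)
  exact LinearMap.ker_eq_top.1 this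

theorem VC.z_wt (C : VC H α hc e f h0 c E F mu v N)
    (hl : IsHW H (fun j => -α j) (-lam) (lowv F v N)) {T : V →ₗ[ℂ] V →ₗ[ℂ] Y} (h : Eqv L T) :
    T (lowv F v N) v ∈ wt H Y (mu - lam) := by
  intro x
  rw [h, hl.1, C.hv.1, map_smul, map_smul, LinearMap.smul_apply, ← add_smul]
  congr 1
  simp; ring

theorem VC.lam_h0 (C : VC H α hc e f h0 c E F mu v N)
    (hl : IsHW H (fun j => -α j) (-lam) (lowv F v N)) : lam h0 = N := by
  have := ev_unique (wt_ev hl.mem_wt h0) C.low_ev C.low_ne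
  simpa using this

theorem VC.dom [FiniteDimensional ℂ V] (C : VC H α hc e f h0 c E F mu v N) : IsDomInt hc mu :=
  fun j => (C.P.D.prim C.hv C.v0 j).exists_nat

theorem VC.exis [FiniteDimensional ℂ V] [FiniteDimensional ℂ Y] (C : VC H α hc e f h0 c E F mu v N)
    (hl : IsHW H (fun j => -α j) (-mu) (lowv F v N)) {z : Y} (hz : ∀ h : H, ⁅(h : L), z⁆ = 0)
    (hz' : ∀ i (k : ℕ), mu (hc i) = k → ((toEnd ℂ L Y (e i)) ^ (k + 1)) z = 0) :
    ∃ T : V →ₗ[ℂ] V →ₗ[ℂ] Y, Eqv L T ∧ T (lowv F v N) v = z := by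
  have D' := C.P.D.neg
  obtain ⟨g, hg1, hg2⟩ := presentation D' (mu := -mu) (fun j => by
    obtain ⟨n, hn⟩ := C.dom j
    exact ⟨n, by simpa using hn⟩) C.hV hl C.low_ne z (fun i k hk => hz' i k (by simpa using hk))
  have hgen := irr_ngen D'.base C.hV hl C.low_ne
  have hpos : ∀ χ, IsPosRoot H α χ → ∀ y ∈ rootSpace H ⇑χ, ∀ a, g ⁅y, a⁆ = ⁅y, g a⁆ := by
    intro χ hχ y hy a
    refine hg2 y ⟨-χ, ?_, ?_⟩ a
    · rw [isPosRoot_neg_iff, neg_neg]; exact hχ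
    · rw [neg_neg]; exact hy
  have hcar : ∀ (h : H) a, ⁅(h : L), g a⁆ - g ⁅(h : L), a⁆ = mu h • g a := by
    intro h
    let A : V →ₗ[ℂ] Y := (toEnd ℂ L Y (h : L)) ∘ₗ g - g ∘ₗ (toEnd ℂ L V (h : L)) - mu h • g
    have hA : ∀ a, A a = ⁅(h : L), g a⁆ - g ⁅(h : L), a⁆ - mu h • g a := fun a => by simp [A]
    have := hgen (LinearMap.ker A) (by
      rw [LinearMap.mem_ker, hA, hg1, hz, hl.1, map_smul, hg1]
      simp) (by
      rintro y ⟨χ, hχ, hy⟩ a ha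
      rw [LinearMap.mem_ker, hA] at *
      rw [isPosRoot_neg_iff] at hχ
      have h1 : ∀ a, g ⁅y, a⁆ = ⁅y, g a⁆ := hpos _ hχ y hy
      rw [h1, leibniz_lie (h : L) y (g a), leibniz_lie (h : L) y a, mem_rootSpace_iff.1 hy h, map_add, h1,
        smul_lie, smul_lie, map_smul, h1, add_sub_add_left_eq_sub, ← lie_sub, sub_eq_zero.1 ha,
        lie_smul, sub_self])
    intro a
    have h2 : a ∈ LinearMap.ker A := by rw [this]; trivial
    rw [LinearMap.mem_ker, hA] at h2
    exact sub_eq_zero.1 h2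
  have hghw : IsHW H α mu g := by
    constructor
    · intro h
      ext a
      rw [LieHom.lie_apply, hcar]; rfl
    · intro χ hχ y hy
      ext a
      rw [LieHom.lie_apply, hpos χ hχ y hy, sub_self]; rfl
  obtain ⟨G, hG1, hG2⟩ := hom_of_hw C.P.D C.dom C.hV C.hv C.v0 hghw
  refine ⟨G.flip, ?_, ?_⟩
  · intro x p u
    simp only [LinearMap.flip_apply]
    rw [hG2, LieHom.lie_apply]
    abel
  · rw [LinearMap.flip_apply, hG1, hg1]

/-- The trivial module. -/
def TrivC : Type := ℂ

noncomputable instance : AddCommGroup TrivC := inferInstanceAs (AddCommGroup ℂ)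
noncomputable instance : Module ℂ TrivC := inferInstanceAs (Module ℂ ℂ)
instance : FiniteDimensional ℂ TrivC := inferInstanceAs (FiniteDimensional ℂ ℂ)

noncomputable instance : LieRingModule L TrivC where
  bracket _ _ := 0
  add_lie _ _ _ := (add_zero _).symm
  lie_add _ _ _ := (add_zero _).symm
  leibniz_lie _ _ _ := (add_zero _).symm

instance : LieModule ℂ L TrivC where
  smul_lie _ _ _ := (smul_zero _).symm
  lie_smul _ _ _ := (smul_zero _).symm

/-- The unit of the trivial module. -/
noncomputable def tone : TrivC := (1 : ℂ)

theorem tone_ne : tone ≠ 0 := one_ne_zero (α := ℂ)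

theorem triv_lie (x : L) (m : TrivC) : ⁅x, m⁆ = 0 := rfl

theorem pow_skew {B : V →ₗ[ℂ] V →ₗ[ℂ] TrivC} (hB : Eqv L B) (y : L) (k : ℕ) :
    ∀ p u, B p (((toEnd ℂ L V y) ^ k) u) = (-1 : ℂ) ^ k • B (((toEnd ℂ L V y) ^ k) p) u := by
  induction k with
  | zero => intro p u; simp
  | succ k ih =>
    intro p u
    have h1 : ∀ p u, B p ⁅y, u⁆ = - B ⁅y, p⁆ u := by
      intro p u
      have := hB y p u
      rw [triv_lie] at this
      exact eq_neg_of_add_eq_zero_right this.symm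
    rw [pow_succ', Module.End.mul_apply, toEnd_apply_apply, h1, ih]
    have h2 : ((toEnd ℂ L V y) ^ k) ⁅y, p⁆ = ((toEnd ℂ L V y) ^ (k+1)) p := by
      rw [pow_succ, Module.End.mul_apply, toEnd_apply_apply]
    rw [h2, ← pow_succ', pow_succ (-1 : ℂ), mul_neg_one, neg_smul]

theorem VC.low_skew {B : V →ₗ[ℂ] V →ₗ[ℂ] TrivC} (hB : Eqv L B) :
    B v (lowv F v N) = (-1 : ℂ) ^ N • B (lowv F v N) v := pow_skew hB F N v v

theorem VC.form [FiniteDimensional ℂ V] (C : VC H α hc e f h0 c E F mu v N)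
    (hl : IsHW H (fun j => -α j) (-mu) (lowv F v N)) :
    ∃ B : V →ₗ[ℂ] V →ₗ[ℂ] TrivC, Eqv L B ∧ B (lowv F v N) v = tone := by
  refine C.exis hl (z := tone) (fun h => rfl) ?_
  intro i k _
  rw [pow_succ', Module.End.mul_apply]
  rfl

theorem VC.symplectic_iff [FiniteDimensional ℂ V] (C : VC H α hc e f h0 c E F mu v N)
    (hl : IsHW H (fun j => -α j) (-lam) (lowv F v N)) :
    IsSymplecticRep (L := L) V ↔ lam = mu ∧ Odd N := by
  constructor
  · rintro ⟨B, h1, h2, h3⟩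
    let B' : V →ₗ[ℂ] V →ₗ[ℂ] TrivC := B
    have hB' : Eqv L B' := fun x p u => (h3 x p u).symm
    have hz : B' (lowv F v N) v ≠ 0 := by
      intro h
      have h4 := C.uniq hl hB' h
      apply C.v0
      apply h2
      intro w
      have := LinearMap.congr_fun (LinearMap.congr_fun h4 v) w
      exact this
    have h5 := C.z_wt hl hB'
    refine ⟨?_, ?_⟩
    · ext h
      have h6 := h5 h
      rw [triv_lie] at h6
      have := (smul_eq_zero.1 h6.symm).resolve_right hz
      rw [LinearMap.sub_apply, sub_eq_zero] at this
      exact this.symm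
    · by_contra hodd
      rw [Nat.not_odd_iff_even] at hodd
      have h6 := VC.low_skew (F := F) (v := v) (N := N) hB'
      rw [hodd.neg_one_pow, one_smul] at h6
      have h7 : B (lowv F v N + v) (lowv F v N + v) = 0 := h1 _
      simp only [map_add, LinearMap.add_apply, h1, zero_add, add_zero] at h7
      apply hz
      have h8 : B v (lowv F v N) = B (lowv F v N) v := h6
      rw [h8] at h7
      have h9 : B (lowv F v N) v = 0 := by linear_combination (1/2) * h7
      exact h9
  · rintro ⟨rfl, hodd⟩
    obtain ⟨B, hB, h1⟩ := C.form hl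
    have hE : Eqv L (B + B.flip) := by
      intro x p u
      simp only [LinearMap.add_apply, lie_add]
      rw [hB, hB.flip]; abel
    have h2 : B + B.flip = 0 := by
      refine C.uniq hl hE ?_
      rw [LinearMap.add_apply, LinearMap.add_apply, LinearMap.flip_apply, VC.low_skew hB, hodd.neg_one_pow,
        neg_one_smul, add_neg_cancel]
    let B' : V →ₗ[ℂ] V →ₗ[ℂ] ℂ := B
    refine ⟨B', ?_, ?_, fun x p u => (hB x p u).symm⟩
    · intro p
      have h3 := LinearMap.congr_fun (LinearMap.congr_fun h2 p) p
      have h4 : B' p p + B' p p = 0 := h3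
      linear_combination (1/2) * h4
    · intro p hp
      by_contra p0
      have h3 := simple_ker C.hV hB p0 (LinearMap.ext hp)
      rw [h3] at h1
      exact tone_ne h1.symm

end Part8

section Part9

variable [FiniteDimensional ℂ L] [LieAlgebra.IsSemisimple ℂ L]
  {H : LieSubalgebra ℂ L} [H.IsCartanSubalgebra]
  {r : ℕ} {α : Fin r → Module.Dual ℂ H} {hc : Fin r → H} {e f : Fin r → L}
  {X : Type} [AddCommGroup X] [Module ℂ X] [LieRingModule L X] [LieModule ℂ L X]
  {Y : Type} [AddCommGroup Y] [Module ℂ Y] [LieRingModule L Y] [LieModule ℂ L Y]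
  {Z : Type} [AddCommGroup Z] [Module ℂ Z] [LieRingModule L Z] [LieModule ℂ L Z]
  {V : Type} [AddCommGroup V] [Module ℂ V] [LieRingModule L V] [LieModule ℂ L V]
  {h0 : H} {c : Fin r → ℤ} {E F : L} {mu lam : Module.Dual ℂ H} {v : V} {N : ℕ}

theorem expo_apply {a : Module.End ℂ X} (ha : IsNilpotent a) {x : X} {k : ℕ} (h : (a ^ k) x = 0) :
    expo a x = ∑ i ∈ Finset.range k, ((i.factorial : ℂ))⁻¹ • (a ^ i) x := by
  obtain ⟨l, hl⟩ := ha
  have hl' : a ^ (k + l) = 0 := by rw [pow_add, hl, mul_zero]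
  rw [expo_eq_sum hl', LinearMap.sum_apply]
  symm
  refine Finset.sum_subset (fun i => by simp only [Finset.mem_range]; omega) ?_
  intro i _ hi
  obtain ⟨d, rfl⟩ : ∃ d, i = d + k := ⟨i - k, by simp only [Finset.mem_range] at hi; omega⟩
  rw [pow_add, Module.End.mul_apply, h, map_zero, smul_zero]

/-- The principal Weyl-type operator. -/
noncomputable def thet (X : Type) [AddCommGroup X] [Module ℂ X] [LieRingModule L X] [LieModule ℂ L X]
    (E F : L) : Module.End ℂ X :=
  expo (toEnd ℂ L X E) * (expo (-toEnd ℂ L X F) * expo (toEnd ℂ L X E))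

theorem PS.thet_bilin (P : PS H α hc e f h0 c E F) [FiniteDimensional ℂ X] [FiniteDimensional ℂ Y]
    [FiniteDimensional ℂ Z] {T : X →ₗ[ℂ] Y →ₗ[ℂ] Z} (hT : Eqv L T) (p : X) (u : Y) :
    T (thet X E F p) (thet Y E F u) = thet Z E F (T p u) := by
  have hE := expo_bilin (P.nilE (X := X)) (P.nilE (X := Y)) (P.nilE (X := Z)) T (fun p u => hT E p u)
  have hF := expo_bilin (P.nilF (X := X)).neg (P.nilF (X := Y)).neg (P.nilF (X := Z)).neg T (fun p u => by
    simp only [LinearMap.neg_apply, toEnd_apply_apply, map_neg]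
    rw [hT F, neg_add])
  simp only [thet, Module.End.mul_apply]
  rw [hE, hF, hE]

theorem PS.thet_inj (P : PS H α hc e f h0 c E F) [FiniteDimensional ℂ X] :
    Function.Injective (thet X E F) := by
  have h1 := expo_inj (P.nilE (X := X))
  have h2 := expo_inj (P.nilF (X := X)).neg
  intro x y h
  simp only [thet, Module.End.mul_apply] at h
  exact h1 (h2 (h1 h))

theorem PS.thet_lie (P : PS H α hc e f h0 c E F) [FiniteDimensional ℂ X] (x : L) (m : X) :
    ⁅thet L E F x, thet X E F m⁆ = thet X E F ⁅x, m⁆ := by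
  have hT : Eqv L (T := LinearMap.mk₂ ℂ (fun (x : L) (m : X) => ⁅x, m⁆) add_lie smul_lie lie_add
      (fun c x m => lie_smul c x m)) := by
    intro x p u
    simp only [LinearMap.mk₂_apply]
    exact leibniz_lie x p u
  exact P.thet_bilin hT x m

theorem PS.thet_triv (P : PS H α hc e f h0 c E F) (m : TrivC) : thet TrivC E F m = m := by
  have h : ∀ x : L, toEnd ℂ L TrivC x = 0 := fun x => LinearMap.ext fun m => rfl
  have h2 : expo (0 : Module.End ℂ TrivC) = 1 := by
    rw [expo_eq_sum (k := 1) (by simp)]; simp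
  simp [thet, h, h2]

theorem PS.thet_h0 (P : PS H α hc e f h0 c E F) : thet L E F (h0 : L) = -(h0 : L) := by
  have nE := P.nilE (X := L)
  have nF := (P.nilF (X := L)).neg
  have e1 : ⁅E, (h0 : L)⁆ = -((2 : ℂ) • E) := by rw [← lie_skew, P.lie_hE]
  have f1 : ⁅F, (h0 : L)⁆ = (2 : ℂ) • F := by rw [← lie_skew, P.lie_hF, neg_smul, neg_neg]
  have f2 : ⁅F, E⁆ = -(h0 : L) := by rw [← lie_skew, P.sl2.lie_e_f]
  have a1 : expo (toEnd ℂ L L E) (h0 : L) = h0 - (2 : ℂ) • E := by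
    rw [expo_apply nE (k := 2) (by simp [pow_two, e1])]
    simp [Finset.sum_range_succ, e1, sub_eq_add_neg]
  have a2 : expo (toEnd ℂ L L E) E = E := by
    rw [expo_apply nE (k := 1) (by simp)]
    simp [Finset.sum_range_succ]
  have b1 : expo (-toEnd ℂ L L F) (h0 : L) = h0 - (2 : ℂ) • F := by
    rw [expo_apply nF (k := 2) (by simp [pow_two, f1])]
    simp [Finset.sum_range_succ, f1, sub_eq_add_neg]
  have b2 : expo (-toEnd ℂ L L F) E = E + h0 - F := by
    rw [expo_apply nF (k := 3) (by simp [pow_succ, f1, f2])]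
    simp [Finset.sum_range_succ, f1, f2, sub_eq_add_neg, pow_two, smul_smul]
  simp only [thet, Module.End.mul_apply]
  rw [a1, map_sub, map_smul, b1, b2]
  have : (h0 : L) - (2 : ℂ) • F - (2 : ℂ) • (E + h0 - F) = -(h0 : L) - (2 : ℂ) • E := by module
  rw [this, map_sub, map_neg, map_smul, a1, a2]
  module

theorem PS.thet_ev (P : PS H α hc e f h0 c E F) [FiniteDimensional ℂ X] {k : ℂ} {x : X}
    (hx : x ∈ ev X (h0 : L) k) : thet X E F x ∈ ev X (h0 : L) (-k) := by
  have h := P.thet_lie (h0 : L) x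
  rw [P.thet_h0, mem_ev.1 hx, map_smul, neg_lie] at h
  rw [mem_ev, neg_smul, ← h, neg_neg]

theorem PS.root_h0 (P : PS H α hc e f h0 c E F) {χ : Module.Dual ℂ H} (h : IsRoot H χ) : χ h0 ≠ 0 := by
  have key : ∀ χ, IsPosRoot H α χ → χ h0 ≠ 0 := by
    rintro χ ⟨hχ, n, hn⟩ h1
    rw [hn, P.sum_h0] at h1
    have h2 : (∑ j, n j : ℕ) = 0 := by
      have : ((∑ j, n j : ℕ) : ℂ) = 0 := by simpa using h1
      exact_mod_cast this
    apply hχ.1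
    rw [hn]
    refine Finset.sum_eq_zero fun j _ => ?_
    rw [(Finset.sum_eq_zero_iff.1 h2) j (Finset.mem_univ j)]
    simp
  rcases pos_or_neg P.D.base h with h | h
  · exact key _ h
  · intro h1
    exact key _ h (by rw [LinearMap.neg_apply, h1, neg_zero])

theorem PS.cent (P : PS H α hc e f h0 c E F) {x : L} (hx : ⁅(h0 : L), x⁆ = 0) : x ∈ H := by
  let p : {χ : Module.Dual ℂ H // χ = 0 ∨ IsRoot H χ} → Submodule ℂ L := fun χ => wt H L χ.1
  have h1 : x ∈ iSup p := by
    refine span_induction_L (H := H) ?_ ?_ x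
    · intro h
      refine Submodule.mem_iSup_of_mem (⟨0, Or.inl rfl⟩ : {χ : Module.Dual ℂ H // χ = 0 ∨ IsRoot H χ}) ?_
      intro h'
      rw [cartan_comm]; simp
    · intro χ hχ y hy
      refine Submodule.mem_iSup_of_mem (⟨χ, Or.inr hχ⟩ : {χ : Module.Dual ℂ H // χ = 0 ∨ IsRoot H χ}) ?_
      exact mem_rootSpace_iff.1 hy
  rw [Submodule.mem_iSup_iff_exists_finsupp] at h1
  obtain ⟨u, h2, h3⟩ := h1
  have h4 := comp_mem (K := ev L (h0 : L) 0) (ev_stable h0 0) (fun i => i.1) Subtype.val_injective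
    u.support u (fun n _ => h2 n) (by
      change u.sum (fun _ xi => xi) ∈ _
      rw [h3, mem_ev, hx, zero_smul])
  have h5 : ∀ i, u i ∈ H := by
    intro i
    by_cases hi : u i = 0
    · rw [hi]; exact H.zero_mem
    have h6 := ev_unique (h4 i (by simpa using hi)) (wt_ev (h2 i) h0) hi
    have h7 : i.1 = 0 := i.2.resolve_right fun h => P.root_h0 h h6.symm
    rw [mem_cartan_iff (H := H)]
    intro h
    have := h2 i h
    rw [h7] at this
    simpa using this
  rw [← h3]
  exact sum_mem fun i _ => h5 i

theorem PS.thet_cartan (P : PS H α hc e f h0 c E F) (h : H) : thet L E F (h : L) ∈ H := by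
  refine P.cent ?_
  have h1 := P.thet_ev (x := (h : L)) (k := 0) (by rw [mem_ev, cartan_comm, zero_smul])
  simpa [mem_ev] using h1

theorem PS.exists_Th (P : PS H α hc e f h0 c E F) : ∃ Th : H ≃ₗ[ℂ] H, ∀ h : H, ((Th h : H) : L) = thet L E F (h : L) := by
  let g : H →ₗ[ℂ] H := LinearMap.codRestrict H.toSubmodule ((thet L E F) ∘ₗ H.toSubmodule.subtype) P.thet_cartan
  have hg : ∀ h : H, ((g h : H) : L) = thet L E F (h : L) := fun h => rfl
  have hinj : Function.Injective g := by
    intro x y h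
    apply Subtype.ext
    apply P.thet_inj
    rw [← hg, ← hg, h]
  exact ⟨LinearEquiv.ofInjectiveEndo g hinj, fun h => hg h⟩

/-- The data of the diagram automorphism. -/
structure Sg (H : LieSubalgebra ℂ L) [H.IsCartanSubalgebra] {r : ℕ} (α : Fin r → Module.Dual ℂ H)
    (hc : Fin r → H) (c : Fin r → ℤ) (E F : L) (Th : H ≃ₗ[ℂ] H) (sg : Fin r → Fin r) : Prop where
  th : ∀ h : H, ((Th h : H) : L) = thet L E F (h : L)
  a : ∀ j h, α (sg j) (Th h) = - α j h
  inj : Function.Injective sg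
  hcs : ∀ j, Th (hc j) = - hc (sg j)
  cs : ∀ j, c (sg j) = c j

theorem Setup.hc_indep (D : Setup H α hc e f) : LinearIndependent ℂ hc := by
  choose q hq hq' using D.exists_q
  rw [Fintype.linearIndependent_iff]
  intro g hg i
  have h1 : tt (∑ j, (g j * (q j : ℂ)⁻¹) • α j) = 0 := by
    rw [tt_sum, ← hg]
    refine Finset.sum_congr rfl fun j _ => ?_
    have : (q j : ℂ) ≠ 0 := by exact_mod_cast (hq j).ne'
    rw [tt_smul, hq', smul_smul, mul_assoc, inv_mul_cancel₀ this, mul_one]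
  have h2 : ∑ j, (g j * (q j : ℂ)⁻¹) • α j = 0 := by
    ext h
    rw [← kap_tt, h1]; simp
  have h3 := (Fintype.linearIndependent_iff.1 D.base.indep) _ h2 i
  have : (q i : ℂ) ≠ 0 := by exact_mod_cast (hq i).ne'
  simpa [this] using h3

theorem PS.exists_Sg (P : PS H α hc e f h0 c E F) : ∃ Th sg, Sg H α hc c E F Th sg := by
  obtain ⟨Th, hTh⟩ := P.exists_Th
  have hTh0 : Th h0 = -h0 := Subtype.ext (by rw [hTh, P.thet_h0]; rfl)
  have hroot : ∀ (χ : Module.Dual ℂ H) x, x ∈ rootSpace H ⇑χ →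
      thet L E F x ∈ rootSpace H ⇑(χ ∘ₗ (Th.symm : H →ₗ[ℂ] H)) := by
    intro χ x hx
    rw [mem_rootSpace_iff]
    intro h
    have h1 := P.thet_lie (Th.symm h : L) x
    rw [← hTh, LinearEquiv.apply_symm_apply, mem_rootSpace_iff.1 hx, map_smul] at h1
    exact h1
  have hex : ∀ j, ∃ i, α j ∘ₗ (Th.symm : H →ₗ[ℂ] H) = -α i := by
    intro j
    have hval : (α j ∘ₗ (Th.symm : H →ₗ[ℂ] H)) h0 = -2 := by
      have : Th.symm h0 = -h0 := by rw [LinearEquiv.symm_apply_eq, map_neg, hTh0, neg_neg]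
      simp [this, P.a2]
    have hR : IsRoot H (α j ∘ₗ (Th.symm : H →ₗ[ℂ] H)) := by
      by_contra hn
      have := rootSpace_eq_bot (by
        intro h; rw [h] at hval; norm_num at hval) hn (hroot _ _ (P.D.he j))
      exact P.D.e_ne j (P.thet_inj (by rw [this, map_zero]))
    rcases P.D.base.pos_neg _ hR with ⟨n, hn⟩ | ⟨n, hn⟩
    · exfalso
      rw [hn, P.sum_h0] at hval
      have h1 : ((2 * (∑ j, n j : ℕ) + 2 : ℕ) : ℂ) = 0 := by
        push_cast at hval ⊢; rw [hval]; norm_num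
      have h2 : (2 * (∑ j, n j : ℕ) + 2 : ℕ) = 0 := by exact_mod_cast h1
      omega
    · rw [hn, LinearMap.neg_apply, P.sum_h0] at hval
      have h1 : ((∑ j, n j : ℕ) : ℂ) = 1 := by linear_combination (-1/2) * hval
      have h2 : (∑ j, n j : ℕ) = 1 := by exact_mod_cast h1
      obtain ⟨i, hi⟩ : ∃ i, n i ≠ 0 := by
        by_contra hcon
        push Not at hcon
        simp [hcon] at h2
      refine ⟨i, ?_⟩
      rw [hn]
      congr 1
      rw [← Finset.add_sum_erase _ _ (Finset.mem_univ i)] at h2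
      have h3 : n i = 1 := by omega
      have h4 : ∑ x ∈ Finset.univ.erase i, n x = 0 := by omega
      rw [← Finset.add_sum_erase _ _ (Finset.mem_univ i), h3, Finset.sum_eq_zero]
      · simp
      · intro k hk
        rw [(Finset.sum_eq_zero_iff.1 h4) k hk]; simp
  choose sg hsg using hex
  have ha : ∀ j h, α (sg j) (Th h) = - α j h := by
    intro j h
    have := LinearMap.congr_fun (hsg j) (Th h)
    simp only [LinearMap.comp_apply, LinearEquiv.coe_coe, LinearEquiv.symm_apply_apply,
      LinearMap.neg_apply] at this
    rw [this, neg_neg]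
  have hinj : Function.Injective sg := by
    intro i j hij
    apply P.D.base.indep.injective
    ext h
    have h1 := ha i h
    rw [hij, ha j h] at h1
    exact (neg_injective h1).symm
  have hhc : ∀ j, Th (hc j) = - hc (sg j) := by
    intro j
    have h1 : thet L E F (e j) ∈ rootSpace H ⇑(-α (sg j)) := by
      rw [← hsg j]; exact hroot _ _ (P.D.he j)
    have h2 : thet L E F (f j) ∈ rootSpace H ⇑(α (sg j)) := by
      have : α (sg j) = (-α j) ∘ₗ (Th.symm : H →ₗ[ℂ] H) := by
        rw [LinearMap.neg_comp, hsg j, neg_neg]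
      rw [this]; exact hroot _ _ (P.D.hf j)
    obtain ⟨b, hb⟩ := rootSpace_one_dim (P.D.base.isRoot (sg j)) (P.D.he _) h2 (P.D.e_ne _)
    obtain ⟨a, ha'⟩ := rootSpace_one_dim (isRoot_neg (P.D.base.isRoot (sg j))) (P.D.hf _) h1
      (P.D.neg.e_ne _)
    have h3 : Th (hc j) = (-(a * b)) • hc (sg j) := by
      apply Subtype.ext
      rw [hTh, P.D.hh, ← P.thet_lie, ha', hb, smul_lie, lie_smul, ← lie_skew, ← P.D.hh]
      simp [smul_smul]
    have h4 := ha j (hc j)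
    rw [h3, map_smul, P.D.h2, P.D.h2] at h4
    have h5 : a * b = 1 := by
      simp only [smul_eq_mul] at h4
      linear_combination (-1/2) * h4
    rw [h3, h5, neg_smul, one_smul]
  refine ⟨Th, sg, hTh, ha, hinj, hhc, ?_⟩
  have hsur : Function.Bijective sg := Finite.injective_iff_bijective.1 hinj
  let s : Fin r ≃ Fin r := Equiv.ofBijective sg hsur
  have h1 : ∑ j, (c j : ℂ) • hc (sg j) = ∑ j, (c j : ℂ) • hc j := by
    have h2 := hTh0
    rw [P.h0_eq, map_sum] at h2
    simp only [map_smul, hhc, smul_neg, Finset.sum_neg_distrib] at h2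
    exact neg_injective h2
  have h2 : ∑ j, (c j : ℂ) • hc j = ∑ j, (c (sg j) : ℂ) • hc (sg j) :=
    (Equiv.sum_comp s (fun j => (c j : ℂ) • hc j)).symm
  have h3 : ∑ j, ((c j : ℂ) - c (sg j)) • hc (sg j) = 0 := by
    simp only [sub_smul, Finset.sum_sub_distrib]
    rw [h1, ← h2, sub_self]
  have h4 : LinearIndependent ℂ (fun j => hc (sg j)) := P.D.hc_indep.comp sg hinj
  intro j
  have h5 := (Fintype.linearIndependent_iff.1 h4) _ h3 j
  have h6 : (c (sg j) : ℂ) = c j := (sub_eq_zero.1 h5).symm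
  exact_mod_cast h6

end Part9

section Part10

section comb

variable {r : ℕ}

/-- Functions supported on `S` with a symmetry under `sg`. -/
def AS (S : Set (Fin r)) (sg : Fin r → Fin r) (ep : ℂ) : Submodule ℂ (Fin r → ℂ) where
  carrier := {a | (∀ j, j ∉ S → a j = 0) ∧ ∀ j, a (sg j) = ep * a j}
  add_mem' := by
    rintro a b ⟨h1, h2⟩ ⟨h3, h4⟩
    refine ⟨fun j hj => by simp [h1 j hj, h3 j hj], fun j => by simp [h2, h4, mul_add]⟩
  zero_mem' := ⟨fun _ _ => rfl, fun _ => by simp⟩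
  smul_mem' := by
    rintro k a ⟨h1, h2⟩
    refine ⟨fun j hj => by simp [h1 j hj], fun j => by simp [h2]; ring⟩

theorem mem_AS {S : Set (Fin r)} {sg : Fin r → Fin r} {ep : ℂ} {a : Fin r → ℂ} :
    a ∈ AS S sg ep ↔ (∀ j, j ∉ S → a j = 0) ∧ ∀ j, a (sg j) = ep * a j := Iff.rfl

theorem AS_map {S : Set (Fin r)} {sg : Fin r → Fin r} (hS : ∀ j, sg j ∈ S ↔ j ∈ S)
    (hinv : ∀ j ∈ S, sg (sg j) = j) : ∃ g : (Fin r → ℂ) →ₗ[ℂ] (Fin r → ℂ), Function.Injective g ∧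
      ∀ a ∈ AS S sg (-1), g a ∈ AS S sg 1 ∧ ∀ j, sg j = j → g a j = 0 := by
  let s : Fin r → ℂ := fun j => if j ≤ sg j then 1 else -1
  have s0 : ∀ j, s j ≠ 0 := by intro j; simp only [s]; split_ifs <;> norm_num
  refine ⟨LinearMap.pi fun j => s j • LinearMap.proj j, ?_, ?_⟩
  · intro a b h
    funext j
    have := congrFun h j
    simpa [s0 j] using this
  · rintro a ⟨h1, h2⟩
    have hfix : ∀ j, sg j = j → a j = 0 := by
      intro j hj
      have := h2 j
      rw [hj] at this
      linear_combination (1/2) * this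
    refine ⟨⟨fun j hj => by simp [h1 j hj], fun j => ?_⟩, fun j hj => by simp [hfix j hj]⟩
    simp only [LinearMap.pi_apply, LinearMap.smul_apply, LinearMap.proj_apply, smul_eq_mul, one_mul]
    rw [h2]
    by_cases hj : j ∈ S
    · by_cases hjj : sg j = j
      · rw [hfix j hjj]; simp
      · have : s (sg j) = - s j := by
          simp only [s, hinv j hj]
          rcases lt_trichotomy j (sg j) with h | h | h
          · rw [if_neg (not_le.2 h), if_pos h.le]
          · exact absurd h.symm hjj
          · rw [if_pos h.le, if_neg (not_le.2 h), neg_neg]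
        rw [this]; ring
    · rw [h1 j hj]; simp

theorem AS_le {S : Set (Fin r)} {sg : Fin r → Fin r} (hS : ∀ j, sg j ∈ S ↔ j ∈ S)
    (hinv : ∀ j ∈ S, sg (sg j) = j) :
    Module.finrank ℂ (AS S sg (-1)) ≤ Module.finrank ℂ (AS S sg 1) := by
  obtain ⟨g, h1, h2⟩ := AS_map hS hinv
  rw [(Submodule.equivMapOfInjective g h1 (AS S sg (-1))).finrank_eq]
  exact Submodule.finrank_mono (by rintro _ ⟨a, ha, rfl⟩; exact (h2 a ha).1)

theorem AS_lt {S : Set (Fin r)} {sg : Fin r → Fin r} (hS : ∀ j, sg j ∈ S ↔ j ∈ S)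
    (hinv : ∀ j ∈ S, sg (sg j) = j) (hi : Function.Injective sg) {i : Fin r} (hiS : i ∈ S) (hfix : sg i = i) :
    Module.finrank ℂ (AS S sg (-1)) < Module.finrank ℂ (AS S sg 1) := by
  obtain ⟨g, h1, h2⟩ := AS_map hS hinv
  rw [(Submodule.equivMapOfInjective g h1 (AS S sg (-1))).finrank_eq]
  refine Submodule.finrank_lt_finrank_of_lt (lt_of_le_of_ne
    (by rintro _ ⟨a, ha, rfl⟩; exact (h2 a ha).1) ?_)
  intro h
  have h3 : (Pi.single i 1 : Fin r → ℂ) ∈ AS S sg 1 := by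
    refine ⟨fun j hj => ?_, fun j => ?_⟩
    · rw [Pi.single_eq_of_ne]; rintro rfl; exact hj hiS
    · rw [one_mul]
      by_cases hj : j = i
      · subst hj; rw [hfix]
      · rw [Pi.single_eq_of_ne hj, Pi.single_eq_of_ne]
        intro h4; rw [← hfix] at h4; exact hj (hi h4)
  rw [← h] at h3
  obtain ⟨a, ha, h4⟩ := h3
  have h5 := (h2 a ha).2 i hfix
  rw [h4] at h5
  simp at h5

theorem exists_fix {S : Set (Fin r)} {sg : Fin r → Fin r} (hS : ∀ j, sg j ∈ S ↔ j ∈ S)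
    (hinv : ∀ j ∈ S, sg (sg j) = j) (g : Fin r → ℤ) (hg : ∀ j, g (sg j) = g j) (h0 : ∀ j, j ∉ S → g j = 0)
    (hodd : Odd (∑ j, g j)) : ∃ i ∈ S, sg i = i := by
  by_contra hcon
  push Not at hcon
  have h1 : ∑ j, ((g j : ℤ) : ZMod 2) = 0 := by
    rw [← Finset.sum_filter_add_sum_filter_not Finset.univ (fun j => j ∈ S)]
    rw [Finset.sum_eq_zero (s := Finset.univ.filter (fun j => ¬ j ∈ S)) (by
      intro j hj
      rw [h0 j (by simpa using hj)]; simp), add_zero]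
    refine Finset.sum_involution (fun j _ => sg j) ?_ ?_ ?_ ?_
    · intro j _
      rw [hg]; exact CharTwo.add_self_eq_zero _
    · intro j hj _
      exact hcon j (by simpa using hj)
    · intro j hj
      simp only [Finset.mem_filter, Finset.mem_univ, true_and] at hj ⊢
      exact (hS j).2 hj
    · intro j hj
      exact hinv j (by simpa using hj)
  have h2 : ((∑ j, g j : ℤ) : ZMod 2) = 0 := by push_cast; exact h1
  rw [ZMod.intCast_eq_zero_iff_even] at h2
  exact (Int.not_even_iff_odd.2 hodd) h2

end comb

variable [FiniteDimensional ℂ L] [LieAlgebra.IsSemisimple ℂ L]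
  {H : LieSubalgebra ℂ L} [H.IsCartanSubalgebra]
  {r : ℕ} {α : Fin r → Module.Dual ℂ H} {hc : Fin r → H} {e f : Fin r → L}
  {V : Type} [AddCommGroup V] [Module ℂ V] [LieRingModule L V] [LieModule ℂ L V]
  {h0 : H} {c : Fin r → ℤ} {E F : L} {mu lam : Module.Dual ℂ H} {v : V} {N : ℕ}
  {Th : H ≃ₗ[ℂ] H} {sg : Fin r → Fin r}

variable (L V) in
/-- Equivariant bilinear maps to the adjoint module with given symmetry. -/
def EqS (ep : ℂ) : Submodule ℂ (V →ₗ[ℂ] V →ₗ[ℂ] L) where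
  carrier := {T | Eqv L T ∧ T.flip = ep • T}
  add_mem' := by
    rintro T U ⟨h1, h2⟩ ⟨h3, h4⟩
    refine ⟨fun x p u => ?_, ?_⟩
    · simp only [LinearMap.add_apply, lie_add]
      rw [h1, h3]; abel
    · rw [smul_add, ← h2, ← h4]; rfl
  zero_mem' := ⟨fun x p u => by simp, by rw [smul_zero]; rfl⟩
  smul_mem' := by
    rintro k T ⟨h1, h2⟩
    refine ⟨fun x p u => ?_, ?_⟩
    · simp only [LinearMap.smul_apply, lie_smul]
      rw [h1, smul_add]
    · rw [smul_comm, ← h2]; rfl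

theorem mem_EqS {ep : ℂ} {T : V →ₗ[ℂ] V →ₗ[ℂ] L} : T ∈ EqS L V ep ↔ Eqv L T ∧ T.flip = ep • T := Iff.rfl

theorem VC.zero_of_ne (C : VC H α hc e f h0 c E F mu v N)
    (hl : IsHW H (fun j => -α j) (-lam) (lowv F v N)) (hne : lam ≠ mu) {T : V →ₗ[ℂ] V →ₗ[ℂ] L}
    (h : Eqv L T) : T = 0 := by
  refine C.uniq hl h ?_
  refine rootSpace_eq_bot (χ := mu - lam) (sub_ne_zero.2 hne.symm) ?_ (mem_rootSpace_iff.2 (C.z_wt hl h))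
  intro hR
  apply C.P.root_h0 hR
  rw [LinearMap.sub_apply, C.hN, C.lam_h0 hl, sub_self]

theorem VC.z_mem (C : VC H α hc e f h0 c E F mu v N)
    (hl : IsHW H (fun j => -α j) (-mu) (lowv F v N)) {T : V →ₗ[ℂ] V →ₗ[ℂ] L}
    (h : Eqv L T) : T (lowv F v N) v ∈ H := by
  rw [mem_cartan_iff]
  intro x
  have := C.z_wt hl h x
  simpa using this

theorem VC.z_cond (C : VC H α hc e f h0 c E F mu v N)
    (hl : IsHW H (fun j => -α j) (-mu) (lowv F v N)) {T : V →ₗ[ℂ] V →ₗ[ℂ] L}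
    (h : Eqv L T) [FiniteDimensional ℂ V] (z : H) (hz : (z : L) = T (lowv F v N) v) (j : Fin r)
    (hj : mu (hc j) = 0) : α j z = 0 := by
  have h1 : ⁅e j, lowv F v N⁆ = 0 := by
    have := (C.P.D.neg.prim hl C.low_ne j).pow_toEnd_f_eq_zero_of_eq_nat (n := 0) (by simpa using hj)
    simpa using this
  have h2 := h (e j) (lowv F v N) v
  rw [h1, C.hv.2 _ (isPosRoot_simple C.P.D.base j) _ (C.P.D.he j), ← hz, ← lie_skew, C.P.D.lie_e] at h2
  simpa [C.P.D.e_ne j] using h2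

theorem VC.z_exis [FiniteDimensional ℂ V] (C : VC H α hc e f h0 c E F mu v N)
    (hl : IsHW H (fun j => -α j) (-mu) (lowv F v N)) (z : H) (hz : ∀ j, mu (hc j) = 0 → α j z = 0) :
    ∃ T : V →ₗ[ℂ] V →ₗ[ℂ] L, Eqv L T ∧ T (lowv F v N) v = z := by
  refine C.exis hl (fun h => cartan_comm h z) ?_
  intro i k hk
  have h1 : ⁅e i, (z : L)⁆ = -(α i z • e i) := by rw [← lie_skew, C.P.D.lie_e]
  rw [pow_succ, Module.End.mul_apply, toEnd_apply_apply, h1]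
  rcases k with _ | k
  · rw [hz i (by simpa using hk)]; simp
  · rw [pow_succ, Module.End.mul_apply, toEnd_apply_apply]; simp

theorem VC.flip_z [FiniteDimensional ℂ V] (C : VC H α hc e f h0 c E F mu v N)
    (hl : IsHW H (fun j => -α j) (-mu) (lowv F v N)) {T : V →ₗ[ℂ] V →ₗ[ℂ] L} (h : Eqv L T) :
    T.flip (lowv F v N) v = (-1 : ℂ) ^ N • thet L E F (T (lowv F v N) v) := by
  obtain ⟨a, ha⟩ : ∃ a : ℂ, thet V E F v = a • lowv F v N :=
    C.ev_low_dim C.low_ev (C.P.thet_ev (k := N) (mem_ev.2 C.prim.lie_h)) C.low_ne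
  obtain ⟨b, hb⟩ : ∃ b : ℂ, thet V E F (lowv F v N) = b • v := by
    obtain ⟨m, h1, h2, -⟩ := C.ev_support (C.P.thet_ev C.low_ev)
      (fun h3 => C.low_ne (C.P.thet_inj (h3.trans (map_zero _).symm)))
    refine h2 ?_
    have : (m : ℂ) = 0 := by linear_combination (1/2) * h1
    exact_mod_cast this
  obtain ⟨B, hB, hB1⟩ := C.form hl
  have h3 := C.P.thet_bilin hB (lowv F v N) v
  rw [C.P.thet_triv, ha, hb, hB1, map_smul, map_smul, LinearMap.smul_apply, VC.low_skew hB, hB1] at h3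
  have h4 : a * b * (-1) ^ N = 1 := by
    rw [smul_smul, smul_smul] at h3
    have h5 : (a * b * (-1) ^ N) * 1 = (1 : ℂ) := h3
    linear_combination h5
  have h6 := C.P.thet_bilin h (lowv F v N) v
  rw [ha, hb, map_smul, map_smul, LinearMap.smul_apply, smul_smul] at h6
  rw [LinearMap.flip_apply, ← h6, smul_smul]
  have : (-1) ^ N * (a * b) = 1 := by linear_combination h4
  rw [this, one_smul]

/-- Support of the weight. -/
def Sm (hc : Fin r → H) (mu : Module.Dual ℂ H) : Set (Fin r) := {j | mu (hc j) ≠ 0}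

theorem VC.mu_sg [FiniteDimensional ℂ V] (C : VC H α hc e f h0 c E F mu v N)
    (hl : IsHW H (fun j => -α j) (-mu) (lowv F v N)) (G : Sg H α hc c E F Th sg) (j : Fin r) :
    mu (hc (sg j)) = mu (hc j) := by
  obtain ⟨a, ha⟩ : ∃ a : ℂ, thet V E F v = a • lowv F v N :=
    C.ev_low_dim C.low_ev (C.P.thet_ev (k := N) (mem_ev.2 C.prim.lie_h)) C.low_ne
  have h1 := C.P.thet_lie (hc j : L) v
  rw [← G.th, G.hcs, C.hv.1, map_smul] at h1
  have hne : thet V E F v ≠ 0 := fun h3 => C.v0 (C.P.thet_inj (h3.trans (map_zero _).symm))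
  have h2 : ⁅((-hc (sg j) : H) : L), thet V E F v⁆ = mu (hc (sg j)) • thet V E F v := by
    rw [ha, lie_smul, hl.1, smul_comm]; simp
  rw [h2] at h1
  exact smul_left_injective ℂ hne h1

theorem VC.key [FiniteDimensional ℂ V] (C : VC H α hc e f h0 c E F mu v N)
    (hl : IsHW H (fun j => -α j) (-mu) (lowv F v N)) (G : Sg H α hc c E F Th sg) {ep : ℂ} (hep : ep * ep = 1) :
    Module.finrank ℂ (EqS L V ep) = Module.finrank ℂ (AS (Sm hc mu) sg (-(-1) ^ N * ep)) := by
  obtain ⟨p, q, -, -, -, -, hq, -⟩ := exists_proj C.P.D.base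
  let Ph : (V →ₗ[ℂ] V →ₗ[ℂ] L) →ₗ[ℂ] (Fin r → ℂ) :=
    LinearMap.pi fun j => α j ∘ₗ q ∘ₗ LinearMap.applyₗ v ∘ₗ LinearMap.applyₗ (lowv F v N)
  have hPh : ∀ T (z : H), (z : L) = T (lowv F v N) v → ∀ j, Ph T j = α j z := by
    intro T z hz j
    have : Ph T j = α j (q (T (lowv F v N) v)) := rfl
    rw [this, ← hz, hq]
  have hflip : ∀ T, Eqv L T → ∀ j, Ph T.flip (sg j) = -(-1) ^ N * Ph T j := by
    intro T hT j
    have h1 := hPh T ⟨_, C.z_mem hl hT⟩ rfl j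
    have h2 := hPh T.flip ((-1 : ℂ) ^ N • Th ⟨_, C.z_mem hl hT⟩) (by
      rw [C.flip_z hl hT]
      change (-1 : ℂ) ^ N • ((Th _ : H) : L) = _
      rw [G.th]) (sg j)
    rw [h2, h1, map_smul, G.a]
    simp
  have hinj : ∀ T, Eqv L T → Ph T = 0 → T = 0 := by
    intro T hT h
    refine C.uniq hl hT ?_
    have : (⟨_, C.z_mem hl hT⟩ : H) = 0 := by
      refine C.P.D.ext_H fun j => ?_
      rw [← hPh T ⟨_, C.z_mem hl hT⟩ rfl j, h, map_zero]; rfl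
    exact congrArg Subtype.val this
  have hsur : Function.Surjective sg := Finite.surjective_of_injective G.inj
  have hsgn : ((-1 : ℂ) ^ N) * ((-1 : ℂ) ^ N) = 1 := by rw [← mul_pow]; simp
  have hmap : (EqS L V ep).map Ph = AS (Sm hc mu) sg (-(-1) ^ N * ep) := by
    apply le_antisymm
    · rintro _ ⟨T, ⟨hT, hTf⟩, rfl⟩
      refine ⟨fun j hj => ?_, fun j => ?_⟩
      · rw [hPh T ⟨_, C.z_mem hl hT⟩ rfl j]
        exact C.z_cond hl hT _ rfl j (not_not.1 hj)
      · have h1 := hflip T hT j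
        rw [hTf, map_smul] at h1
        simp only [Pi.smul_apply, smul_eq_mul] at h1
        linear_combination ep * h1 - Ph T (sg j) * hep
    · rintro a ⟨h1, h2⟩
      obtain ⟨z, hz⟩ := C.P.D.exists_H a
      obtain ⟨T, hT, hTz⟩ := C.z_exis hl z (fun j hj => by rw [hz]; exact h1 j (fun h => h hj))
      have hPT : Ph T = a := funext fun j => by rw [hPh T z hTz.symm, hz]
      refine ⟨T, ⟨hT, ?_⟩, hPT⟩
      rw [← sub_eq_zero]
      refine hinj _ ?_ ?_
      · intro x p u
        simp only [LinearMap.sub_apply, LinearMap.smul_apply, lie_sub, lie_smul]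
        rw [hT, hT.flip, smul_add]; abel
      · rw [map_sub, map_smul, hPT]
        funext i
        obtain ⟨j, rfl⟩ := hsur i
        simp only [Pi.sub_apply, Pi.smul_apply, smul_eq_mul, Pi.zero_apply]
        rw [hflip T hT, hPT, h2]
        linear_combination (-1) ^ N * a j * hep
  rw [← hmap]
  have hinj' : Function.Injective (Ph.domRestrict (EqS L V ep)) := by
    rw [injective_iff_map_eq_zero]
    rintro ⟨T, hT⟩ h
    exact Subtype.ext (hinj T hT.1 h)
  rw [← LinearMap.range_domRestrict]
  exact (LinearMap.finrank_range_of_inj hinj').symm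

theorem VC.sg_inv [FiniteDimensional ℂ V] (C : VC H α hc e f h0 c E F mu v N)
    (hl : IsHW H (fun j => -α j) (-mu) (lowv F v N)) (G : Sg H α hc c E F Th sg) (j : Fin r)
    (hj : j ∈ Sm hc mu) : sg (sg j) = j := by
  obtain ⟨z, hz⟩ := C.P.D.exists_H (Pi.single j 1)
  obtain ⟨T, hT, hTz⟩ := C.z_exis hl z (fun i hi => by
    rw [hz, Pi.single_eq_of_ne]; rintro rfl; exact hj hi)
  have h1 := C.flip_z hl hT
  have h2 := C.flip_z hl hT.flip
  rw [LinearMap.flip_flip, h1, hTz, map_smul, smul_smul, ← mul_pow] at h2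
  simp only [mul_neg, mul_one, neg_neg, one_pow, one_smul] at h2
  rw [← G.th, ← G.th] at h2
  have h3 : Th (Th z) = z := (Subtype.ext h2).symm
  have h4 : α (sg (sg j)) (Th (Th z)) = α j z := by rw [G.a, G.a, neg_neg]
  rw [h3, hz, hz] at h4
  by_contra hne
  rw [Pi.single_eq_of_ne hne] at h4
  simp at h4

theorem VC.main [FiniteDimensional ℂ V] (C : VC H α hc e f h0 c E F mu v N) :
    IsSymplecticRep (L := L) V ↔
      Module.finrank ℂ (EqS L V (-1)) < Module.finrank ℂ (EqS L V 1) := by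
  obtain ⟨lam, hl⟩ := C.low_hw
  rw [C.symplectic_iff hl]
  by_cases hlm : lam = mu
  swap
  · have h1 : ∀ ep, EqS L V ep = ⊥ := by
      intro ep
      rw [eq_bot_iff]
      intro T hT
      exact C.zero_of_ne hl hlm hT.1
    rw [h1, h1]
    simp [hlm]
  subst hlm
  obtain ⟨Th, sg, G⟩ := C.P.exists_Sg
  have hS : ∀ j, sg j ∈ Sm hc lam ↔ j ∈ Sm hc lam := by
    intro j
    change lam (hc (sg j)) ≠ 0 ↔ lam (hc j) ≠ 0
    rw [C.mu_sg hl G]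
  have hinv := C.sg_inv hl G
  rw [C.key hl G (ep := -1) (by norm_num), C.key hl G (ep := 1) (by norm_num)]
  rcases Nat.even_or_odd N with hN | hN
  · rw [hN.neg_one_pow]
    have h1 := AS_le hS hinv
    have h2 : ¬ Odd N := Nat.not_odd_iff_even.2 hN
    simp only [h2, and_false, false_iff, not_lt]
    rw [show (-1 : ℂ) * -1 = 1 by norm_num, show (-1 : ℂ) * 1 = -1 by norm_num]
    exact h1
  · rw [hN.neg_one_pow]
    simp only [hN, and_self, true_iff]
    choose n hn using C.dom
    obtain ⟨i, h1, h2⟩ := exists_fix hS hinv (fun j => c j * n j) (fun j => by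
      have h3 : (n (sg j) : ℂ) = n j := by rw [← hn, ← hn, C.mu_sg hl G]
      have h4 : n (sg j) = n j := by exact_mod_cast h3
      rw [G.cs, h4]) (fun j hj => by
      have h3 : lam (hc j) = 0 := not_not.1 hj
      rw [hn] at h3
      have h4 : n j = 0 := by exact_mod_cast h3
      rw [h4]; simp) (by
      have h3 : ((∑ j, c j * n j : ℤ) : ℂ) = (N : ℂ) := by
        rw [← C.hN, C.P.h0_eq, map_sum]
        push_cast
        refine Finset.sum_congr rfl fun j _ => ?_
        rw [map_smul, hn]; rfl
      have h4 : (∑ j, c j * n j : ℤ) = (N : ℤ) := by exact_mod_cast h3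
      rw [h4]; exact_mod_cast hN)
    have := AS_lt hS hinv G.inj h1 h2
    rw [show (- -1 : ℂ) * -1 = -1 by norm_num, show (- -1 : ℂ) * 1 = 1 by norm_num]
    exact this

end Part10

section Part11

variable {V : Type} [AddCommGroup V] [Module ℂ V] [LieRingModule L V] [LieModule ℂ L V]

theorem symp_transfer {X Y : Type} [AddCommGroup X] [Module ℂ X] [LieRingModule L X] [LieModule ℂ L X]
    [AddCommGroup Y] [Module ℂ Y] [LieRingModule L Y] [LieModule ℂ L Y] (g : X ≃ₗ[ℂ] Y)
    (hg : ∀ (x : L) a, g ⁅x, a⁆ = ⁅x, g a⁆) (h : IsSymplecticRep (L := L) X) :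
    IsSymplecticRep (L := L) Y := by
  obtain ⟨B, h1, h2, h3⟩ := h
  have hg' : ∀ (x : L) b, g.symm ⁅x, b⁆ = ⁅x, g.symm b⁆ := by
    intro x b
    apply g.injective
    rw [hg, g.apply_symm_apply, g.apply_symm_apply]
  refine ⟨B.compl₁₂ g.symm.toLinearMap g.symm.toLinearMap, fun v => ?_, fun v hv => ?_, fun x v w => ?_⟩
  · simp [LinearMap.compl₁₂_apply, h1]
  · apply g.symm.injective
    rw [map_zero]
    refine h2 _ fun w => ?_
    have := hv (g w)
    simpa [LinearMap.compl₁₂_apply] using this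
  · simp only [LinearMap.compl₁₂_apply, LinearEquiv.coe_coe, hg']
    exact h3 _ _ _

theorem symp_dual [FiniteDimensional ℂ V] (h : IsSymplecticRep (L := L) V) :
    IsSymplecticRep (L := L) (Module.Dual ℂ V) := by
  have h' := h
  obtain ⟨B, h1, h2, h3⟩ := h
  have hinj : Function.Injective (B : V →ₗ[ℂ] Module.Dual ℂ V) := by
    rw [injective_iff_map_eq_zero]
    intro a ha
    exact h2 a fun w => by rw [ha]; rfl
  refine symp_transfer (LinearEquiv.ofInjectiveOfFinrankEq (B : V →ₗ[ℂ] Module.Dual ℂ V) hinj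
    (Subspace.dual_finrank_eq).symm) ?_ h'
  intro x a
  change B ⁅x, a⁆ = _
  refine LinearMap.ext fun w => ?_
  rw [Module.Dual.lie_apply]
  change B ⁅x, a⁆ w = - B a ⁅x, w⁆
  linear_combination h3 x a w

theorem symp_dual_iff [FiniteDimensional ℂ V] : IsSymplecticRep (L := L) (Module.Dual ℂ V) ↔
    IsSymplecticRep (L := L) V := by
  refine ⟨fun h => ?_, symp_dual⟩
  refine symp_transfer (Module.evalEquiv ℂ V).symm ?_ (symp_dual h)
  intro x a
  apply (Module.evalEquiv ℂ V).injective
  rw [LinearEquiv.apply_symm_apply]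
  obtain ⟨b, rfl⟩ := (Module.evalEquiv ℂ V).surjective a
  rw [LinearEquiv.symm_apply_apply]
  refine LinearMap.ext fun w => ?_
  rw [Module.Dual.lie_apply]
  simp [Module.evalEquiv_apply, Module.Dual.lie_apply]

theorem dual_simple [FiniteDimensional ℂ V] (hV : IsSimpleOrder (LieSubmodule ℂ L V)) :
    IsSimpleOrder (LieSubmodule ℂ L (Module.Dual ℂ V)) := by
  have hnt : Nontrivial V := by
    by_contra hn
    rw [not_nontrivial_iff_subsingleton] at hn
    obtain ⟨a, b, hab⟩ := hV.toNontrivial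
    exact hab (LieSubmodule.ext _ _ fun x => by rw [Subsingleton.elim x 0]; simp)
  refine { exists_pair_ne := ⟨⊥, ⊤, ?_⟩, eq_bot_or_eq_top := ?_ }
  · intro h
    obtain ⟨w, hw⟩ := exists_ne (0 : Module.Dual ℂ V)
    have : w ∈ (⊥ : LieSubmodule ℂ L (Module.Dual ℂ V)) := by rw [h]; exact LieSubmodule.mem_top w
    exact hw ((LieSubmodule.mem_bot w).1 this)
  · intro S
    let A : LieSubmodule ℂ L V :=
      { (S : Submodule ℂ (Module.Dual ℂ V)).dualCoannihilator with
        lie_mem := by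
          intro x m hm
          simp only [AddSubsemigroup.mem_carrier, AddSubmonoid.mem_toSubsemigroup, Submodule.mem_toAddSubmonoid,
            Submodule.mem_dualCoannihilator] at hm ⊢
          intro φ hφ
          have := hm ⁅x, φ⁆ (S.lie_mem hφ)
          rw [Module.Dual.lie_apply] at this
          linear_combination -this }
    have hA : (A : Submodule ℂ V) = (S : Submodule ℂ (Module.Dual ℂ V)).dualCoannihilator := rfl
    have h2 := Subspace.dualCoannihilator_dualAnnihilator_eq (W := (S : Submodule ℂ (Module.Dual ℂ V)))
    rw [← hA] at h2
    rcases hV.eq_bot_or_eq_top A with h | h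
    · right
      rw [h] at h2
      rw [← LieSubmodule.toSubmodule_inj, ← h2]
      simp
    · left
      rw [h] at h2
      rw [← LieSubmodule.toSubmodule_inj, ← h2]
      simp

/-- Contraction with two functionals. -/
noncomputable def evT (φ ψ : Module.Dual ℂ V) : L ⊗[ℂ] (V ⊗[ℂ] V) →ₗ[ℂ] L :=
  (TensorProduct.rid ℂ L).toLinearMap ∘ₗ
    LinearMap.lTensor L ((TensorProduct.lid ℂ ℂ).toLinearMap ∘ₗ TensorProduct.map φ ψ)

theorem evT_tmul (φ ψ : Module.Dual ℂ V) (l : L) (p u : V) :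
    evT φ ψ (l ⊗ₜ[ℂ] (p ⊗ₜ[ℂ] u)) = (φ p * ψ u) • l := by
  simp [evT]

theorem ten_ind {P : L ⊗[ℂ] (V ⊗[ℂ] V) → Prop} (h0 : P 0) (ha : ∀ a b, P a → P b → P (a + b))
    (ht : ∀ l p u, P (l ⊗ₜ[ℂ] (p ⊗ₜ[ℂ] u))) (t) : P t := by
  induction t with
  | zero => exact h0
  | add a b h1 h2 => exact ha _ _ h1 h2
  | tmul l s =>
    induction s with
    | zero => rw [TensorProduct.tmul_zero]; exact h0
    | add a b h1 h2 => rw [TensorProduct.tmul_add]; exact ha _ _ h1 h2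
    | tmul p u => exact ht _ _ _

variable (L V) in
/-- The contraction as a bilinear map valued operator. -/
noncomputable def Psi : L ⊗[ℂ] (V ⊗[ℂ] V) →ₗ[ℂ]
    (Module.Dual ℂ V →ₗ[ℂ] Module.Dual ℂ V →ₗ[ℂ] L) where
  toFun t := LinearMap.mk₂ ℂ (fun φ ψ => evT φ ψ t)
    (by
      intro a b c
      induction t using ten_ind with
      | h0 => simp
      | ha x y h1 h2 => simp only [map_add, h1, h2]; abel
      | ht l p u => simp only [evT_tmul, LinearMap.add_apply]; rw [← add_smul]; ring_nf)
    (by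
      intro k a c
      induction t using ten_ind with
      | h0 => simp
      | ha x y h1 h2 => simp only [map_add, h1, h2, smul_add]
      | ht l p u => simp only [evT_tmul, LinearMap.smul_apply, smul_eq_mul, smul_smul]; ring_nf)
    (by
      intro a b c
      induction t using ten_ind with
      | h0 => simp
      | ha x y h1 h2 => simp only [map_add, h1, h2]; abel
      | ht l p u => simp only [evT_tmul, LinearMap.add_apply]; rw [← add_smul]; ring_nf)
    (by
      intro k a c
      induction t using ten_ind with
      | h0 => simp
      | ha x y h1 h2 => simp only [map_add, h1, h2, smul_add]
      | ht l p u => simp only [evT_tmul, LinearMap.smul_apply, smul_eq_mul, smul_smul]; ring_nf)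
  map_add' s t := by
    refine LinearMap.ext fun a => LinearMap.ext fun b => ?_
    simp only [LinearMap.mk₂_apply, map_add, LinearMap.add_apply]
  map_smul' k t := by
    refine LinearMap.ext fun a => LinearMap.ext fun b => ?_
    simp only [LinearMap.mk₂_apply, map_smul, LinearMap.smul_apply, RingHom.id_apply]

theorem Psi_apply (t) (φ ψ : Module.Dual ℂ V) : Psi L V t φ ψ = evT φ ψ t := rfl

theorem Psi_inj [FiniteDimensional ℂ V] : Function.Injective (Psi L V) := by
  let b := Module.finBasis ℂ V
  let G : (Module.Dual ℂ V →ₗ[ℂ] Module.Dual ℂ V →ₗ[ℂ] L) → L ⊗[ℂ] (V ⊗[ℂ] V) :=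
    fun T => ∑ i, ∑ j, T (b.coord i) (b.coord j) ⊗ₜ[ℂ] (b i ⊗ₜ[ℂ] b j)
  refine Function.LeftInverse.injective (g := G) ?_
  intro t
  induction t using ten_ind with
  | h0 => simp [G]
  | ha x y h1 h2 =>
    conv_rhs => rw [← h1, ← h2]
    simp only [G, map_add, LinearMap.add_apply, TensorProduct.add_tmul, Finset.sum_add_distrib]
  | ht l p u =>
    simp only [G, Psi_apply, evT_tmul]
    conv_rhs => rw [← b.sum_repr p, ← b.sum_repr u]
    simp only [TensorProduct.sum_tmul, TensorProduct.tmul_sum]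
    rw [Finset.sum_comm]
    refine Finset.sum_congr rfl fun i _ => Finset.sum_congr rfl fun j _ => ?_
    rw [← TensorProduct.smul_tmul', ← TensorProduct.smul_tmul', TensorProduct.tmul_smul, TensorProduct.tmul_smul,
      TensorProduct.tmul_smul, smul_smul]
    simp only [Module.Basis.coord_apply, mul_comm]

/-- The contraction as a linear equivalence. -/
noncomputable def PsiE [FiniteDimensional ℂ L] [FiniteDimensional ℂ V] : L ⊗[ℂ] (V ⊗[ℂ] V) ≃ₗ[ℂ]
    (Module.Dual ℂ V →ₗ[ℂ] Module.Dual ℂ V →ₗ[ℂ] L) :=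
  LinearEquiv.ofInjectiveOfFinrankEq (Psi L V) Psi_inj (by
    simp only [Module.finrank_tensorProduct, Module.finrank_linearMap, Subspace.dual_finrank_eq, Module.finrank_self]; ring)

theorem Psi_lie (x : L) (t) (φ ψ : Module.Dual ℂ V) :
    Psi L V ⁅x, t⁆ φ ψ = ⁅x, Psi L V t φ ψ⁆ - Psi L V t ⁅x, φ⁆ ψ - Psi L V t φ ⁅x, ψ⁆ := by
  simp only [Psi_apply]
  induction t using ten_ind with
  | h0 => simp
  | ha x y h1 h2 => simp only [lie_add, map_add, h1, h2]; abel
  | ht l p u =>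
    simp only [TensorProduct.LieModule.lie_tmul_right, TensorProduct.tmul_add, map_add, evT_tmul,
      Module.Dual.lie_apply, lie_smul]
    module

theorem Psi_swap (t) : Psi L V (swapMap L V t) = (Psi L V t).flip := by
  refine LinearMap.ext fun φ => LinearMap.ext fun ψ => ?_
  rw [LinearMap.flip_apply]
  simp only [Psi_apply]
  induction t using ten_ind with
  | h0 => simp
  | ha x y h1 h2 => simp only [map_add, h1, h2]
  | ht l p u => simp [swapMap, evT_tmul, mul_comm]

theorem Psi_eqv [FiniteDimensional ℂ V] (t) :
    Eqv L (Psi L V t) ↔ t ∈ maxTrivSubmodule ℂ L (L ⊗[ℂ] (V ⊗[ℂ] V)) := by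
  rw [mem_maxTrivSubmodule]
  constructor
  · intro h x
    apply Psi_inj
    rw [map_zero]
    refine LinearMap.ext fun φ => LinearMap.ext fun ψ => ?_
    rw [Psi_lie, h]
    simp
  · intro h x φ ψ
    have := Psi_lie x t φ ψ
    rw [h, map_zero, LinearMap.zero_apply, LinearMap.zero_apply] at this
    rw [← sub_eq_zero, this]; abel

theorem finrank_sym [FiniteDimensional ℂ L] [LieAlgebra.IsSemisimple ℂ L] [FiniteDimensional ℂ V] :
    Module.finrank ℂ (symSquareInvariants L V) = Module.finrank ℂ (EqS L (Module.Dual ℂ V) 1) := by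
  have h : (symSquareInvariants L V).map (PsiE (L := L) (V := V)).toLinearMap = EqS L (Module.Dual ℂ V) 1 := by
    ext T
    obtain ⟨t, rfl⟩ := (PsiE (L := L) (V := V)).surjective T
    rw [mem_EqS, one_smul]
    change _ ∈ _ ↔ Eqv L (Psi L V t) ∧ (Psi L V t).flip = Psi L V t
    rw [Psi_eqv, ← Psi_swap, Psi_inj.eq_iff]
    refine (Submodule.mem_map_equiv _).trans ?_
    rw [LinearEquiv.symm_apply_apply, symSquareInvariants, Submodule.mem_inf, LinearMap.mem_ker,
      LinearMap.sub_apply, sub_eq_zero]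
    rfl
  rw [← h]
  exact (LinearEquiv.finrank_map_eq _ _).symm

theorem finrank_alt [FiniteDimensional ℂ L] [LieAlgebra.IsSemisimple ℂ L] [FiniteDimensional ℂ V] :
    Module.finrank ℂ (altSquareInvariants L V) = Module.finrank ℂ (EqS L (Module.Dual ℂ V) (-1)) := by
  have h : (altSquareInvariants L V).map (PsiE (L := L) (V := V)).toLinearMap = EqS L (Module.Dual ℂ V) (-1) := by
    ext T
    obtain ⟨t, rfl⟩ := (PsiE (L := L) (V := V)).surjective T
    rw [mem_EqS]
    change _ ∈ _ ↔ Eqv L (Psi L V t) ∧ (Psi L V t).flip = (-1 : ℂ) • Psi L V t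
    rw [Psi_eqv, ← Psi_swap, ← map_smul, neg_smul, one_smul, Psi_inj.eq_iff]
    refine (Submodule.mem_map_equiv _).trans ?_
    rw [LinearEquiv.symm_apply_apply, altSquareInvariants, Submodule.mem_inf, LinearMap.mem_ker,
      LinearMap.add_apply, add_eq_zero_iff_eq_neg]
    rfl
  rw [← h]
  exact (LinearEquiv.finrank_map_eq _ _).symm

section hw

variable [FiniteDimensional ℂ L] [LieAlgebra.IsSemisimple ℂ L]
  {H : LieSubalgebra ℂ L} [H.IsCartanSubalgebra]
  {r : ℕ} {α : Fin r → Module.Dual ℂ H} {hc : Fin r → H} {e f : Fin r → L} {mu : Module.Dual ℂ H} {v : V}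

theorem dual_hw [FiniteDimensional ℂ V] (D : Setup H α hc e f) (hmu : IsDomInt hc mu)
    (hV : IsSimpleOrder (LieSubmodule ℂ L V)) (hv : IsHW H α mu v) (v0 : v ≠ 0) :
    ∃ g : Module.Dual ℂ V, g ≠ 0 ∧ IsHW H (fun j => -α j) (-mu) g := by
  obtain ⟨g', h1', h2'⟩ := presentation D hmu hV hv v0 tone (by
    intro i k _
    rw [pow_succ, Module.End.mul_apply, toEnd_apply_apply, triv_lie, map_zero])
  let g : Module.Dual ℂ V := g'
  have h1 : g v = 1 := h1'
  have h2 : ∀ y ∈ negVec H α, ∀ a, g ⁅y, a⁆ = 0 := h2'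
  refine ⟨g, ?_, ?_, ?_⟩
  · intro h
    rw [h] at h1
    simp at h1
  · intro x
    let S : Submodule ℂ V := LinearMap.ker (g ∘ₗ toEnd ℂ L V (x : L) - mu x • g)
    have hS : ∀ a, a ∈ S ↔ g ⁅(x : L), a⁆ = mu x * g a := by
      intro a
      simp only [S, LinearMap.mem_ker, LinearMap.sub_apply, LinearMap.comp_apply, toEnd_apply_apply,
        LinearMap.smul_apply, smul_eq_mul, sub_eq_zero]
    have hT := irr_ngen D.base hV hv v0 S (by rw [hS, hv.1, map_smul, smul_eq_mul]) (by
      intro y hy a ha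
      rw [hS, h2 y hy, mul_zero, leibniz_lie, map_add, h2 y hy, add_zero]
      obtain ⟨χ, hχ, hy'⟩ := hy
      refine h2 _ ⟨χ, hχ, ?_⟩ a
      rw [mem_rootSpace_iff.1 hy' x]
      exact Submodule.smul_mem _ _ hy')
    refine LinearMap.ext fun a => ?_
    rw [Module.Dual.lie_apply, (hS a).1 (by rw [hT]; trivial)]
    simp
  · intro χ hχ z hz
    refine LinearMap.ext fun a => ?_
    rw [Module.Dual.lie_apply, h2 z ⟨-χ, isPosRoot_neg_iff.1 hχ, by rwa [neg_neg]⟩]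
    simp

theorem main_pos [FiniteDimensional ℂ V] (D : Setup H α hc e f) (hmu : IsDomInt hc mu) (hr : 0 < r)
    (hV : IsSimpleOrder (LieSubmodule ℂ L V)) (hv : IsHW H α mu v) (v0 : v ≠ 0) :
    IsSymplecticRep (L := L) V ↔ Module.finrank ℂ (altSquareInvariants L V) <
        Module.finrank ℂ (symSquareInvariants L V) := by
  obtain ⟨g, g0, hg⟩ := dual_hw D hmu hV hv v0
  obtain ⟨h0, c, E, F, P⟩ := exists_PS D.neg hr
  obtain ⟨N, C⟩ := exists_VC P (dual_simple hV) hg g0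
  rw [finrank_sym, finrank_alt, ← C.main, symp_dual_iff]

theorem main_zero [FiniteDimensional ℂ V] (D : Setup H α hc e f) (hr : r = 0)
    (hV : IsSimpleOrder (LieSubmodule ℂ L V)) (hv : IsHW H α mu v) (v0 : v ≠ 0) :
    IsSymplecticRep (L := L) V ↔ Module.finrank ℂ (altSquareInvariants L V) <
        Module.finrank ℂ (symSquareInvariants L V) := by
  subst hr
  have hroot : ∀ χ, ¬ IsRoot H χ := by
    intro χ hχ
    apply hχ.1
    rcases D.base.pos_neg χ hχ with ⟨c, h⟩ | ⟨c, h⟩ <;> simpa using h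
  have hsub : ∀ x : L, x = 0 := by
    have hall : ∀ x : L, x ∈ H := by
      intro x
      exact span_induction_L (H := H) (S := H.toSubmodule) (fun h => h.2) (fun χ hχ => absurd hχ (hroot χ)) x
    have hab : IsLieAbelian L := ⟨fun x y => by
      exact cartan_comm (H := H) ⟨x, hall x⟩ ⟨y, hall y⟩⟩
    have := subsingleton_of_hasTrivialRadical_lie_abelian (R := ℂ) (L := L)
    exact fun x => Subsingleton.elim x 0
  have hfr : Module.finrank ℂ (symSquareInvariants L V) = 0 := by
    have : ∀ t : L ⊗[ℂ] (V ⊗[ℂ] V), t = 0 := by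
      intro t
      induction t using ten_ind with
      | h0 => rfl
      | ha x y h1 h2 => rw [h1, h2, add_zero]
      | ht l p u => rw [hsub l, TensorProduct.zero_tmul]
    have : symSquareInvariants L V = ⊥ := eq_bot_iff.2 fun t _ => this t
    rw [this]
    exact finrank_bot _ _
  rw [hfr]
  simp only [not_lt_zero, iff_false]
  rintro ⟨B, h1, h2, -⟩
  have hg := irr_ngen D.base hV hv v0 (ℂ ∙ v) (Submodule.mem_span_singleton_self v) (by
    rintro y ⟨χ, hχ, -⟩
    exact absurd hχ.1 (hroot χ))
  apply v0
  refine h2 v fun w => ?_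
  have : w ∈ (ℂ ∙ v) := by rw [hg]; trivial
  obtain ⟨k, rfl⟩ := Submodule.mem_span_singleton.1 this
  rw [map_smul, h1, smul_zero]

end hw

end Part11

/-- `V_μ` is symplectic if and only if the `𝔤`-invariant subspace of
`adj(𝔤) ⊗ S²V_μ` has strictly larger dimension than that of `adj(𝔤) ⊗ Λ²V_μ`. -/
theorem statement9
    {L : Type} [LieRing L] [LieAlgebra ℂ L] [FiniteDimensional ℂ L]
    [LieAlgebra.IsSemisimple ℂ L]
    (H : LieSubalgebra ℂ L) [H.IsCartanSubalgebra]
    {r : ℕ} (α : Fin r → Module.Dual ℂ H) (hc : Fin r → H)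
    (hbase : IsBase H α) (hcoroot : ∀ j, IsCoroot H (α j) (hc j))
    (μ : Module.Dual ℂ H) (hμ : IsDomInt hc μ)
    (Vμ : Type) [AddCommGroup Vμ] [Module ℂ Vμ] [LieRingModule L Vμ]
    [LieModule ℂ L Vμ] [FiniteDimensional ℂ Vμ]
    (hVμ : IsHWIrrep H α μ Vμ) :
    IsSymplecticRep (L := L) Vμ ↔
      Module.finrank ℂ (altSquareInvariants L Vμ) <
        Module.finrank ℂ (symSquareInvariants L Vμ) := by
  obtain ⟨e, f, D⟩ := exists_setup hbase hcoroot
  obtain ⟨hV, v, v0, h1, h2⟩ := hVμ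
  rcases Nat.eq_zero_or_pos r with hr | hr
  · exact main_zero D hr hV ⟨h1, h2⟩ v0
  · exact main_pos D hμ hr hV ⟨h1, h2⟩ v0

end AdjPaper
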